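/- The Hochschild homology HH_k(A^pol_{2n}) of the polynomial Weyl algebra (with coefficients in the bimodule A^pol_{2n}) vanishes for every k ≠ 2n, and HH_{2n}(A^pol_{2n}) is a free K-module of rank one, generated by the class of the cycle c_{2n} = ∑_{σ∈S_{2n}} sign(σ) 1⊗y_{σ(1)}⊗⋯⊗y_{σ(2n)} in the normalized Hochschild chain complex. -/

import Mathlib

noncomputable section
open MvPolynomial MeasureTheory

/-- The ground ring `K = ℂ[ε,ε⁻¹]` of Laurent polynomials in `ε`. -/
abbrev Kc : Type := LaurentPolynomial ℂ

/-- The element `ε ∈ K`. -/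
def eps : Kc := LaurentPolynomial.T 1

/-- The underlying space of the polynomial Weyl algebra `A^pol_{2n}`:
polynomials in the variables `y_1, …, y_{2n}` (with `y_{2r-1} = p_r`, `y_{2r} = q_r`,
`0`-indexed below) over `K`. -/
abbrev Apol (n : ℕ) : Type := MvPolynomial (Fin (2*n)) Kc

/-- The `k`-fold tensor power `A^{⊗k}` of `A = A^pol_{2n}` over `K`, realized as the
polynomial ring in `k` groups of `2n` variables. -/
abbrev Tens (n k : ℕ) : Type := MvPolynomial (Fin k × Fin (2*n)) Kc

/-- index of `p_r` among the variables `y` (0-indexed). -/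
def pVar (n : ℕ) (r : Fin n) : Fin (2*n) := ⟨2*r.1, by have := r.2; omega⟩
/-- index of `q_r` among the variables `y` (0-indexed). -/
def qVar (n : ℕ) (r : Fin n) : Fin (2*n) := ⟨2*r.1+1, by have := r.2; omega⟩

/-- Partial derivative in the variable `y_v` of the `i`-th tensor factor, as a `K`-linear
endomorphism of `A^{⊗k}`. -/
def Dop (n k : ℕ) (i : Fin k) (v : Fin (2*n)) : Module.End Kc (Tens n k) :=
  (pderiv (i, v)).toLinearMap

/-- The operator `α_{ij}` on `A^{⊗k}`:
`α_{ij} = (1/2) ∑_r (∂_{p_r}⊗∂_{q_r} − ∂_{q_r}⊗∂_{p_r})` acting on factors `i` and `j`.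
By construction `α_{ji} = −α_{ij}`. -/
def alphaOp (n k : ℕ) (i j : Fin k) : Module.End Kc (Tens n k) :=
  algebraMap ℂ Kc (1/2) • ∑ r : Fin n,
    (Dop n k i (pVar n r) * Dop n k j (qVar n r) - Dop n k i (qVar n r) * Dop n k j (pVar n r))

/-- The operator `π_{2n}` on `A^{⊗(2n+1)}`:
`π_{2n}(a_0⊗⋯⊗a_{2n}) = ∑_{σ∈S_{2n}} sign(σ) a_0⊗∂_{y_{σ(1)}}a_1⊗⋯⊗∂_{y_{σ(2n)}}a_{2n}`. -/
def piOp (n : ℕ) : Module.End Kc (Tens n (2*n+1)) :=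
  ∑ σ : Equiv.Perm (Fin (2*n)),
    (Equiv.Perm.sign σ : ℤ) •
      (List.ofFn (fun m : Fin (2*n) => Dop n (2*n+1) m.succ (σ m))).prod

/-- Pairs `i < j` in `Fin m`. -/
abbrev Pairs (m : ℕ) : Type := {p : Fin m × Fin m // p.1 < p.2}

/-- The simplex `Δ_m = {0 ≤ u_1 ≤ ⋯ ≤ u_m ≤ 1}` in `ℝ^m`. -/
def simplexSet (m : ℕ) : Set (Fin m → ℝ) :=
  {u | (∀ i, 0 ≤ u i ∧ u i ≤ 1) ∧ ∀ i j : Fin m, i ≤ j → u i ≤ u j}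

/-- Extension of `u : ℝ^m` to `ℝ^{m+1}` by the convention `u_0 = 0`. -/
def cons0 (m : ℕ) (u : Fin m → ℝ) : Fin (m+1) → ℝ := Fin.cons 0 u

/-- The (commuting) product `∏_{i<j} α_{ij}^{K(i,j)}`. -/
def alphaPowProd (n k : ℕ) (K : Pairs k → ℕ) : Module.End Kc (Tens n k) :=
  (Finset.univ.toList.map (fun p : Pairs k => alphaOp n k p.1.1 p.1.2 ^ (K p))).prod

/-- The Hochschild cochain `τ_{2n} : A^{⊗(2n+1)} → K`,
`τ_{2n}(a) = μ_{2n} ∫_{Δ_{2n}} ∏_{0≤i<j≤2n} e^{ε(2u_i−2u_j+1)α_{ij}} π_{2n}(a) du`,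
with the exponentials expanded as (locally finite) Taylor series and integrated term by
term; `μ` takes the product of the constant terms of the factors. -/
def tau (n : ℕ) (a : Tens n (2*n+1)) : Kc :=
  ∑ K ∈ Fintype.piFinset (fun _ : Pairs (2*n+1) => Finset.range (a.totalDegree + 1)),
    (algebraMap ℂ Kc
        ((((∫ u in simplexSet (2*n),
            ∏ p : Pairs (2*n+1),
              (2 * cons0 (2*n) u p.1.1 - 2 * cons0 (2*n) u p.1.2 + 1) ^ (K p)) : ℝ) : ℂ)
          * (∏ p : Pairs (2*n+1), ((K p).factorial : ℂ))⁻¹)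
        * eps ^ (∑ p : Pairs (2*n+1), K p)) •
      constantCoeff (alphaPowProd n (2*n+1) K (piOp n a))

/-- The embedding of `A` as the `i`-th tensor factor of `A^{⊗k}`. -/
def embA (n k : ℕ) (i : Fin k) : Apol n →ₐ[Kc] Tens n k :=
  rename (fun v => (i, v))

/-- The elementary tensor `a_0 ⊗ ⋯ ⊗ a_{k-1} ∈ A^{⊗k}`. -/
def elemT {n k : ℕ} (a : Fin k → Apol n) : Tens n k :=
  ∏ i : Fin k, embA n k i (a i)

/-- `exp(ε f)` applied to `a`, for a locally nilpotent operator `f` that strictly decreases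
total degree (so that the series is finite on every argument). -/
def expEps {n k : ℕ} (f : Module.End Kc (Tens n k)) (a : Tens n k) : Tens n k :=
  ∑ m ∈ Finset.range (a.totalDegree + 1),
    (algebraMap ℂ Kc ((m.factorial : ℂ)⁻¹) * eps ^ m) • (f ^ m) a

/-- The Moyal star product `f ⋆ g = m(exp(εα)(f⊗g))` on `A^pol_{2n}`. -/
def moyal (n : ℕ) (f g : Apol n) : Apol n :=
  aeval (fun v : Fin 2 × Fin (2*n) => (X v.2 : Apol n))
    (expEps (alphaOp n 2 0 1) (elemT ![f, g]))

/-- The bracket `[f,g]_ε = (1/ε)(f⋆g − g⋆f)`. -/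
def brkt (n : ℕ) (f g : Apol n) : Apol n :=
  (LaurentPolynomial.T (-1) : Kc) • (moyal n f g - moyal n g f)

/-- `sp_{2n}`, identified with the space of homogeneous quadratic polynomials in the `y`'s
with complex coefficients, as a ℂ-submodule of `A^pol_{2n}`. -/
def spSub (n : ℕ) : Submodule ℂ (Apol n) :=
  Submodule.span ℂ {f : Apol n | ∃ i j : Fin (2*n), f = X i * X j}


/-- Index map merging tensor factors `j` and `j+1` of `A^{⊗(k+2)}` into factor `j`. -/
def mergeIdx (k : ℕ) (j : Fin (k+1)) (s : Fin (k+2)) : Fin (k+1) :=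
  if h : s.1 ≤ j.1 then ⟨s.1, by have := j.2; omega⟩ else ⟨s.1 - 1, by have := s.2; omega⟩

/-- Index map merging the last tensor factor of `A^{⊗(k+2)}` into factor `0`. -/
def cycIdx (k : ℕ) (s : Fin (k+2)) : Fin (k+1) :=
  if h : s.1 = k+1 then ⟨0, by omega⟩ else ⟨s.1, by have := s.2; omega⟩

/-- `a_0⊗⋯⊗a_{k+1} ↦ a_0⊗⋯⊗(a_j ⋆ a_{j+1})⊗⋯⊗a_{k+1}`: Moyal multiplication of the
adjacent tensor factors `j, j+1` (twist by `exp(εα_{j,j+1})`, then merge the variables). -/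
def mulAt (n k : ℕ) (j : Fin (k+1)) (P : Tens n (k+2)) : Tens n (k+1) :=
  aeval (fun v : Fin (k+2) × Fin (2*n) => (X (mergeIdx k j v.1, v.2) : Tens n (k+1)))
    (expEps (alphaOp n (k+2) j.castSucc j.succ) P)

/-- `a_0⊗⋯⊗a_{k+1} ↦ (a_{k+1} ⋆ a_0)⊗a_1⊗⋯⊗a_k`: Moyal multiplication of the last
factor onto the first. -/
def mulCyc (n k : ℕ) (P : Tens n (k+2)) : Tens n (k+1) :=
  aeval (fun v : Fin (k+2) × Fin (2*n) => (X (cycIdx k v.1, v.2) : Tens n (k+1)))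
    (expEps (alphaOp n (k+2) (Fin.last (k+1)) 0) P)

/-- The Hochschild boundary `d_Hoch : C_{k+1}(A) = A^{⊗(k+2)} → C_k(A) = A^{⊗(k+1)}`. -/
def dH (n k : ℕ) (P : Tens n (k+2)) : Tens n (k+1) :=
  (∑ j : Fin (k+1), ((-1:ℤ)^j.1) • mulAt n k j P) + ((-1:ℤ)^(k+1)) • mulCyc n k P

/-- Substitute `0` for all variables of the tensor factors in `S` (i.e. apply the counit
`a ↦ a(0)` on those factors). -/
def setZeroS (n k : ℕ) (S : Finset (Fin k)) : Tens n k →ₐ[Kc] Tens n k :=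
  aeval (fun v : Fin k × Fin (2*n) => if v.1 ∈ S then 0 else X v)

/-- The projection of `C_k(A) = A^{⊗(k+1)}` onto the normalized subcomplex
`A ⊗ I^{⊗k}` (`I` = augmentation ideal), along the degenerate part; it realizes the
quotient `C̄_k(A) = A⊗(A/K1)^{⊗k}`. -/
def projI (n k : ℕ) (P : Tens n (k+1)) : Tens n (k+1) :=
  ∑ S ∈ (Finset.univ : Finset (Finset (Fin (k+1)))).filter (fun S => (0 : Fin (k+1)) ∉ S),
    ((-1:ℤ)^S.card) • setZeroS n (k+1) S P

/-- `P ∈ A ⊗ I^{⊗k}`, the realization of the normalized chains `C̄_k(A) = A⊗(A/K1)^{⊗k}`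
inside `A^{⊗(k+1)}`: each factor `i ≥ 1` has vanishing constant term. -/
def IsNormT (n k : ℕ) (P : Tens n (k+1)) : Prop :=
  ∀ i : Fin (k+1), i ≠ 0 → setZeroS n (k+1) {i} P = 0

/-- `P` is a cycle in the normalized Hochschild complex. -/
def IsCycleT (n : ℕ) : (k : ℕ) → Tens n (k+1) → Prop
  | 0, _ => True
  | (m+1), P => projI n m (dH n m P) = 0

/-- The cycle `c_{2n} = ∑_{σ∈S_{2n}} sign(σ) 1⊗y_{σ(1)}⊗⋯⊗y_{σ(2n)}`. -/
def c2n (n : ℕ) : Tens n (2*n+1) :=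
  ∑ σ : Equiv.Perm (Fin (2*n)), (Equiv.Perm.sign σ : ℤ) •
    elemT (Fin.cons 1 (fun i : Fin (2*n) => (X (σ i) : Apol n)))

/-!
Chains are polynomials in several groups of variables, and the part of order `m` in the bivector
of the Hochschild boundary lowers the polynomial degree by `2 * m`. The part of order `0` is the
boundary of the commutative polynomial ring, whose homology is that of differential forms
(Hochschild–Kostant–Rosenberg): after moving the base point to slot `0` it is a bar complex, which
is a Koszul complex. On forms, the part of order `1` is Brylinski's codifferential `δ` and all
further parts vanish. Since the bivector is nondegenerate, exterior multiplication by the dual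
coordinates is a homotopy for `δ`: the anticommutator is multiplication by `dim V - k + d` on
forms of rank `k` with coefficients of degree `d`. This is invertible except on the constant top
forms, and induction on the degree of chains shows that these are the whole homology.
-/

namespace WeylHochschild

section Grading

variable {R σ τ υ : Type*} [CommSemiring R]

theorem ext_homogeneousComponent {P Q : MvPolynomial σ R}
    (h : ∀ e, homogeneousComponent e P = homogeneousComponent e Q) : P = Q := by
  ext d
  simpa [coeff_homogeneousComponent] using congrArg (coeff d) (h d.degree)

theorem degree_eq_of_coeff_ne_zero {P : MvPolynomial σ R} {N : ℕ} (hP : P.IsHomogeneous N)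
    {e : σ →₀ ℕ} (he : coeff e P ≠ 0) : e.degree = N :=
  of_not_not fun h => he (hP.coeff_eq_zero h)

theorem isHomogeneous_iff_homogeneousComponent {P : MvPolynomial σ R} {N : ℕ} :
    P.IsHomogeneous N ↔ ∀ e, e ≠ N → homogeneousComponent e P = 0 := by
  refine ⟨fun h e he => by rw [homogeneousComponent_of_mem h, if_neg he], fun h => ?_⟩
  suffices P = homogeneousComponent N P from this ▸ homogeneousComponent_isHomogeneous N P
  refine ext_homogeneousComponent fun e => ?_
  rw [homogeneousComponent_of_mem (homogeneousComponent_isHomogeneous N P)]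
  split_ifs with he
  · rw [he]
  · exact h e he

/-- The linear maps between polynomial rings which lower the degree by exactly `r`, and so kill
every polynomial of degree less than `r`. -/
def degreeLowering (R σ τ : Type*) [CommSemiring R] (r : ℕ) :
    Submodule R (MvPolynomial σ R →ₗ[R] MvPolynomial τ R) where
  carrier := {L | ∀ e P, homogeneousComponent e (L P) = L (homogeneousComponent (e + r) P)}
  add_mem' h h' e P := by simp only [LinearMap.add_apply, map_add, h e P, h' e P]
  zero_mem' e P := by simp
  smul_mem' c L h e P := by simp only [LinearMap.smul_apply, map_smul, h e P]

variable {r s N : ℕ} {L : MvPolynomial σ R →ₗ[R] MvPolynomial τ R}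

theorem isHomogeneous_of_degreeLowering (hL : L ∈ degreeLowering R σ τ r) {P : MvPolynomial σ R}
    (hP : P.IsHomogeneous (N + r)) : (L P).IsHomogeneous N := by
  rw [isHomogeneous_iff_homogeneousComponent] at *
  intro e he
  rw [hL, hP _ (by lia), map_zero]

theorem eq_zero_of_degreeLowering (hL : L ∈ degreeLowering R σ τ r) {P : MvPolynomial σ R}
    (hP : P.totalDegree < r) : L P = 0 := by
  refine ext_homogeneousComponent fun e => ?_
  rw [hL, homogeneousComponent_eq_zero _ _ (by lia), map_zero, map_zero]

theorem mem_degreeLowering_of_isHomogeneous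
    (h : ∀ N P, P.IsHomogeneous (N + r) → (L P).IsHomogeneous N)
    (h' : ∀ N P, N < r → P.IsHomogeneous N → L P = 0) : L ∈ degreeLowering R σ τ r := by
  intro e P
  induction P using MvPolynomial.induction_on' with
  | add p q hp hq => simp only [map_add, hp, hq]
  | monomial u a =>
    have hu : (monomial u a : MvPolynomial σ R).IsHomogeneous u.degree :=
      isHomogeneous_monomial a rfl
    rw [homogeneousComponent_of_mem hu]
    obtain hlt | hge := lt_or_ge u.degree r
    · rw [h' _ _ hlt hu, map_zero, if_neg (by lia), map_zero]
    · obtain ⟨N, hN⟩ := Nat.exists_eq_add_of_le' hge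
      rw [hN] at hu ⊢
      rw [homogeneousComponent_of_mem (h N _ hu)]
      simp only [Nat.add_right_cancel_iff]
      split_ifs <;> simp

theorem comp_mem_degreeLowering {L' : MvPolynomial τ R →ₗ[R] MvPolynomial υ R}
    (hL' : L' ∈ degreeLowering R τ υ s) (hL : L ∈ degreeLowering R σ τ r) :
    L' ∘ₗ L ∈ degreeLowering R σ υ (s + r) := by
  intro e P
  rw [LinearMap.comp_apply, hL', hL, add_assoc, LinearMap.comp_apply]

theorem pow_mem_degreeLowering {L : Module.End R (MvPolynomial σ R)}
    (hL : L ∈ degreeLowering R σ σ r) (m : ℕ) : L ^ m ∈ degreeLowering R σ σ (r * m) := by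
  induction m with
  | zero => intro e P; simp
  | succ m ih => rw [pow_succ, Nat.mul_succ]; exact comp_mem_degreeLowering ih hL

theorem algHom_mem_degreeLowering (f : MvPolynomial σ R →ₐ[R] MvPolynomial τ R)
    (hf : ∀ i, (f (X i)).IsHomogeneous 1) : f.toLinearMap ∈ degreeLowering R σ τ 0 := by
  refine mem_degreeLowering_of_isHomogeneous (fun N P hP => ?_) (by simp)
  have hfP := hP.aeval (fun i => f (X i)) hf
  have hf' : aeval (fun i => f (X i)) = f := (aeval_unique f).symm
  rwa [hf', one_mul] at hfP

theorem pderiv_mem_degreeLowering (i : σ) :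
    (pderiv i : Derivation R (MvPolynomial σ R) _).toLinearMap ∈ degreeLowering R σ σ 1 := by
  refine mem_degreeLowering_of_isHomogeneous (fun N P hP => by simpa using hP.pderiv) ?_
  intro N P hN hP
  obtain rfl : N = 0 := by lia
  rw [← totalDegree_zero_iff_isHomogeneous, totalDegree_eq_zero_iff_eq_C] at hP
  rw [hP]
  simp

end Grading

section Derivatives

variable {R σ : Type*} [CommRing R]

theorem pderiv_pderiv_comm (i j : σ) (P : MvPolynomial σ R) :
    pderiv i (pderiv j P) = pderiv j (pderiv i P) := by
  classical
  let D : σ → Derivation R (MvPolynomial σ R) (MvPolynomial σ R) := pderiv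
  have h : ⁅D i, D j⁆ = 0 := by
    refine derivation_ext fun x => ?_
    simp only [D, Derivation.commutator_apply, pderiv_X, Pi.single_apply, Derivation.zero_apply]
    split_ifs <;> simp
  exact sub_eq_zero.1 (DFunLike.congr_fun h P)

end Derivatives

section ZeroVars

variable {R σ τ : Type*} [CommSemiring R]

open Classical in
/-- Substitution of `0` for the variables in `s`. -/
def zeroVars (s : Set σ) : MvPolynomial σ R →ₐ[R] MvPolynomial σ R :=
  aeval fun i => if i ∈ s then 0 else X i

open Classical in
theorem zeroVars_X (s : Set σ) (i : σ) :
    zeroVars s (X i : MvPolynomial σ R) = if i ∈ s then 0 else X i := by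
  simp [zeroVars]

theorem zeroVars_X_of_notMem {s : Set σ} {i : σ} (hi : i ∉ s) :
    zeroVars s (X i : MvPolynomial σ R) = X i := by
  rw [zeroVars_X, if_neg hi]

theorem zeroVars_X_of_mem {s : Set σ} {i : σ} (hi : i ∈ s) :
    zeroVars s (X i : MvPolynomial σ R) = 0 := by
  rw [zeroVars_X, if_pos hi]

theorem zeroVars_empty (P : MvPolynomial σ R) : zeroVars ∅ P = P := by
  have h : zeroVars ∅ = AlgHom.id R (MvPolynomial σ R) := algHom_ext fun i => by simp [zeroVars_X]
  exact DFunLike.congr_fun h P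

theorem zeroVars_zeroVars (s t : Set σ) (P : MvPolynomial σ R) :
    zeroVars s (zeroVars t P) = zeroVars (s ∪ t) P := by
  have h : (zeroVars s).comp (zeroVars t) = (zeroVars (s ∪ t) : _ →ₐ[R] _) := by
    refine algHom_ext fun i => ?_
    by_cases hs : i ∈ s <;> by_cases ht : i ∈ t <;> simp [zeroVars_X, hs, ht]
  exact DFunLike.congr_fun h P

theorem zeroVars_comm (s t : Set σ) (P : MvPolynomial σ R) :
    zeroVars s (zeroVars t P) = zeroVars t (zeroVars s P) := by
  rw [zeroVars_zeroVars, zeroVars_zeroVars, Set.union_comm]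

theorem zeroVars_eq_zero_of_subset {s t : Set σ} (hst : s ⊆ t) {P : MvPolynomial σ R}
    (hP : zeroVars s P = 0) : zeroVars t P = 0 := by
  rw [← Set.union_eq_self_of_subset_right hst, ← zeroVars_zeroVars, hP, map_zero]

open Classical in
theorem coeff_zeroVars (s : Set σ) (P : MvPolynomial σ R) (e : σ →₀ ℕ) :
    coeff e (zeroVars s P) = if ∀ i ∈ s, e i = 0 then coeff e P else 0 := by
  induction P using MvPolynomial.induction_on' with
  | add p q hp hq => rw [map_add, coeff_add, hp, hq, coeff_add]; split_ifs <;> simp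
  | monomial u r =>
    have hu : zeroVars s (monomial u r) = if ∀ i ∈ s, u i = 0 then monomial u r else 0 := by
      rw [zeroVars, aeval_monomial, monomial_eq, algebraMap_eq]
      split_ifs with h
      · refine congrArg _ (Finsupp.prod_congr fun i hi => ?_)
        rw [if_neg fun his => Finsupp.mem_support_iff.1 hi (h i his)]
      · push Not at h
        obtain ⟨i, his, hi⟩ := h
        rw [Finsupp.prod, Finset.prod_eq_zero (Finsupp.mem_support_iff.2 hi), mul_zero]
        rw [if_pos his, zero_pow hi]
    rw [hu]
    obtain rfl | hue := eq_or_ne u e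
    · split_ifs <;> simp
    · split_ifs <;> simp [coeff_monomial, hue]

theorem zeroVars_mem_degreeLowering (s : Set σ) :
    (zeroVars s : MvPolynomial σ R →ₐ[R] _).toLinearMap ∈ degreeLowering R σ σ 0 := by
  refine algHom_mem_degreeLowering _ fun i => ?_
  rw [zeroVars_X]
  split_ifs
  exacts [isHomogeneous_zero _ _ _, isHomogeneous_X _ _]

theorem zeroVars_rename (f : σ → τ) (t : Set τ) (P : MvPolynomial σ R) :
    zeroVars t (rename f P) = rename f (zeroVars (f ⁻¹' t) P) := by
  have h : (zeroVars t).comp (rename f) = (rename f).comp (zeroVars (f ⁻¹' t) : _ →ₐ[R] _) := by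
    refine algHom_ext fun i => ?_
    by_cases hi : f i ∈ t <;> simp [zeroVars_X, hi]
  exact DFunLike.congr_fun h P

theorem rename_zeroVars_congr {f g : σ → τ} {s : Set σ} (hfg : ∀ i ∉ s, f i = g i)
    (P : MvPolynomial σ R) : rename f (zeroVars s P) = rename g (zeroVars s P) := by
  have h : (rename f).comp (zeroVars s) = (rename g).comp (zeroVars s : _ →ₐ[R] _) := by
    refine algHom_ext fun i => ?_
    by_cases hi : i ∈ s <;> simp [zeroVars_X, hi, hfg]
  exact DFunLike.congr_fun h P

theorem pderiv_zeroVars {s : Set σ} {i : σ} (hi : i ∉ s) (P : MvPolynomial σ R) :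
    pderiv i (zeroVars s P) = zeroVars s (pderiv i P) := by
  classical
  ext e
  have hsupp : (∀ j ∈ s, (e + Finsupp.single i 1 : σ →₀ ℕ) j = 0) ↔ ∀ j ∈ s, e j = 0 := by
    refine forall₂_congr fun j hj => ?_
    have hij : i ≠ j := fun h => hi (h ▸ hj)
    simp [hij]
  rw [coeff_pderiv, coeff_zeroVars, coeff_zeroVars, coeff_pderiv]
  simp only [hsupp]
  split_ifs <;> simp

theorem pderiv_eq_zero_of_zeroVars_eq_self {s : Set σ} {i : σ} (hi : i ∈ s) {P : MvPolynomial σ R}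
    (hP : zeroVars s P = P) : pderiv i P = 0 := by
  classical
  ext e
  rw [coeff_pderiv, ← hP, coeff_zeroVars, if_neg fun h => by simpa using h i hi, zero_mul,
    coeff_zero]

theorem X_dvd_of_zeroVars_eq_zero {i : σ} {P : MvPolynomial σ R} (hP : zeroVars {i} P = 0) :
    X i ∣ P := by
  classical
  rw [X_dvd_iff_modMonomial_eq_zero]
  ext e
  by_cases hle : Finsupp.single i 1 ≤ e
  · rw [coeff_modMonomial_of_le _ hle, coeff_zero]
  · rw [coeff_modMonomial_of_not_le _ hle, ← hP, coeff_zeroVars, if_pos]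
    simpa [Finsupp.single_le_iff, Nat.one_le_iff_ne_zero] using hle

end ZeroVars

section AlternatingSums

variable {M : Type*} [AddCommGroup M]

theorem sum_powerset_alternating_eq_zero {ι : Type*} [DecidableEq ι] {U : Finset ι} {i : ι}
    (hi : i ∈ U) {F : Finset ι → M} (hF : ∀ S, F (insert i S) = F S) :
    ∑ S ∈ U.powerset, (-1 : ℤ) ^ S.card • F S = 0 := by
  rw [← Finset.insert_erase hi, Finset.sum_powerset_insert (Finset.notMem_erase i U),
    ← Finset.sum_add_distrib]
  refine Finset.sum_eq_zero fun S hS => ?_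
  rw [Finset.card_insert_of_notMem fun h => by simpa using Finset.mem_powerset.1 hS h, hF]
  simp [pow_succ]

theorem sum_sum_alternating_eq_zero (k : ℕ) {F : Fin (k + 1) → Fin (k + 2) → M}
    (hF : ∀ (i : Fin (k + 1)) (j : Fin (k + 2)) (h : j.1 ≤ i.1),
      F i j = F ⟨j.1, by lia⟩ i.succ) :
    ∑ i : Fin (k + 1), ∑ j : Fin (k + 2), ((-1 : ℤ) ^ i.1 * (-1 : ℤ) ^ j.1) • F i j = 0 := by
  rw [← Fintype.sum_prod_type']
  refine Finset.sum_involution (fun x _ => if h : x.2.1 ≤ x.1.1 then (⟨x.2.1, by lia⟩, x.1.succ)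
    else (⟨x.2.1 - 1, by lia⟩, x.1.castSucc)) ?_ ?_ (fun _ _ => Finset.mem_univ _) ?_
  · rintro ⟨i, j⟩ -
    split_ifs with h
    · rw [← hF i j h, ← add_smul, Fin.val_succ, pow_succ]
      simp [mul_comm]
    · obtain ⟨j, rfl⟩ := Fin.exists_succ_eq.2 (show j ≠ 0 by rintro rfl; simp at h)
      have hij := hF j i.castSucc (by simp at h ⊢; lia)
      simp only [Fin.val_succ, Nat.add_sub_cancel, Fin.val_castSucc, Fin.eta] at hij ⊢
      rw [hij, ← add_smul, pow_succ]
      simp [mul_comm]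
  · rintro ⟨i, j⟩ - - h
    split_ifs at h <;> simp only [Prod.mk.injEq, Fin.ext_iff, Fin.val_succ, Fin.val_castSucc] at h
      <;> lia
  · rintro ⟨i, j⟩ -
    by_cases h : j.1 ≤ i.1
    · simp [h]
    · have h' : i.1 ≤ j.1 - 1 := by lia
      have hj : j.1 - 1 + 1 = j.1 := by lia
      simp [h, h', hj]

end AlternatingSums

section Slots

/-- Polynomials in `k` groups of variables indexed by `V`, the `k`-fold tensor power of
`R[V]`; the groups are called slots. -/
abbrev SlotPoly (R V : Type*) [CommSemiring R] (k : ℕ) : Type _ := MvPolynomial (Fin k × V) R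

/-- Substitution of `0` for all variables in the slots in `S`. -/
abbrev zeroSlots {R V : Type*} [CommSemiring R] {k : ℕ} (S : Set (Fin k)) :
    SlotPoly R V k →ₐ[R] SlotPoly R V k :=
  zeroVars (Prod.fst ⁻¹' S)

/-- The substitution which moves the variables of slot `s` to slot `f s`; slots with the same
image are multiplied together. -/
def mapSlots {R V : Type*} [CommSemiring R] {a b : ℕ} (f : Fin a → Fin b) :
    SlotPoly R V a →ₐ[R] SlotPoly R V b :=
  rename (Prod.map f id)

section Semiring

variable {R V : Type*} [CommSemiring R] {a b c k : ℕ}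

@[simp]
theorem mapSlots_X (f : Fin a → Fin b) (x : Fin a × V) :
    mapSlots f (X x : SlotPoly R V a) = X (f x.1, x.2) := by
  simp [mapSlots, Prod.map]

theorem mapSlots_mapSlots (f : Fin b → Fin c) (g : Fin a → Fin b) (P : SlotPoly R V a) :
    mapSlots f (mapSlots g P) = mapSlots (f ∘ g) P := by
  simp [mapSlots, rename_rename, Prod.map_comp_map]

theorem mapSlots_id (P : SlotPoly R V a) : mapSlots id P = P := by
  simp [mapSlots]

theorem zeroSlots_empty (P : SlotPoly R V k) : zeroSlots ∅ P = P :=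
  zeroVars_empty P

theorem zeroSlots_zeroSlots (S S' : Set (Fin k)) (P : SlotPoly R V k) :
    zeroSlots S (zeroSlots S' P) = zeroSlots (S ∪ S') P :=
  zeroVars_zeroVars _ _ P

theorem zeroSlots_eq_zero_of_mem {S : Set (Fin k)} {s : Fin k} (hs : s ∈ S) {P : SlotPoly R V k}
    (hP : zeroSlots {s} P = 0) : zeroSlots S P = 0 :=
  zeroVars_eq_zero_of_subset (Set.preimage_mono (Set.singleton_subset_iff.2 hs)) hP

theorem zeroSlots_mem_degreeLowering (S : Set (Fin k)) :
    (zeroSlots S).toLinearMap ∈ degreeLowering R (Fin k × V) (Fin k × V) 0 :=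
  zeroVars_mem_degreeLowering _

theorem zeroSlots_mapSlots (f : Fin a → Fin b) (S : Set (Fin b)) (P : SlotPoly R V a) :
    zeroSlots S (mapSlots f P) = mapSlots f (zeroSlots (f ⁻¹' S) P) :=
  zeroVars_rename _ _ P

theorem mapSlots_zeroSlots_congr {f g : Fin a → Fin b} {S : Set (Fin a)}
    (h : ∀ s ∉ S, f s = g s) (P : SlotPoly R V a) :
    mapSlots f (zeroSlots S P) = mapSlots g (zeroSlots S P) :=
  rename_zeroVars_congr (fun x hx => by simp [Prod.map, h x.1 hx]) P

theorem mapSlots_mem_degreeLowering (f : Fin a → Fin b) :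
    (mapSlots f : SlotPoly R V a →ₐ[R] _).toLinearMap ∈
      degreeLowering R (Fin a × V) (Fin b × V) 0 :=
  algHom_mem_degreeLowering _ fun x => by simpa using isHomogeneous_X R (f x.1, x.2)

/-- Polynomials which do not involve the variables of slot `s`. -/
def slotFree (R V : Type*) [CommSemiring R] {k : ℕ} (s : Fin k) : Submodule R (SlotPoly R V k) :=
  LinearMap.eqLocus (zeroSlots {s}).toLinearMap LinearMap.id

theorem mem_slotFree {s : Fin k} {P : SlotPoly R V k} :
    P ∈ slotFree R V s ↔ zeroSlots {s} P = P :=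
  Iff.rfl

/-- Degenerate chains: sums of tensors with a scalar in some slot other than slot `0`. -/
def degenerate (R V : Type*) [CommSemiring R] (k : ℕ) : Submodule R (SlotPoly R V k) :=
  ⨆ s : {s : Fin k // s.val ≠ 0}, slotFree R V s.1

theorem slotFree_le_degenerate {s : Fin k} (hs : s.val ≠ 0) :
    slotFree R V s ≤ degenerate R V k :=
  le_iSup (fun s : {s : Fin k // s.val ≠ 0} => slotFree R V s.1) ⟨s, hs⟩

theorem map_mem_degenerate {R' : Type*} [CommSemiring R'] (f : SlotPoly R V a →+ SlotPoly R' V b)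
    (h : ∀ s : Fin a, s.val ≠ 0 → ∀ P ∈ slotFree R V s, f P ∈ degenerate R' V b)
    {P : SlotPoly R V a} (hP : P ∈ degenerate R V a) : f P ∈ degenerate R' V b := by
  refine Submodule.iSup_induction _ (motive := fun P => f P ∈ degenerate R' V b) hP
    (fun s P hP => h s.1 s.2 P hP) ?_ fun p q hp hq => ?_
  · rw [map_zero]
    exact zero_mem _
  · rw [map_add]
    exact add_mem hp hq

/-- Normalized chains: the constant term in each slot other than slot `0` vanishes. They
represent the quotient by the degenerate chains. -/
def normalized (R V : Type*) [CommSemiring R] (k : ℕ) : Submodule R (SlotPoly R V k) :=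
  ⨅ s : {s : Fin k // s.val ≠ 0}, LinearMap.ker (zeroSlots {s.1}).toLinearMap

theorem mem_normalized {P : SlotPoly R V k} :
    P ∈ normalized R V k ↔ ∀ s : Fin k, s.val ≠ 0 → zeroSlots {s} P = 0 := by
  simp [normalized]

theorem homogeneousComponent_mem_normalized {P : SlotPoly R V k} (hP : P ∈ normalized R V k)
    (e : ℕ) : homogeneousComponent e P ∈ normalized R V k := by
  rw [mem_normalized] at *
  intro s hs
  have h := zeroSlots_mem_degreeLowering {s} e P
  simpa [hP s hs] using h.symm

theorem homogeneousComponent_mem_degenerate {P : SlotPoly R V k} (hP : P ∈ degenerate R V k)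
    (e : ℕ) : homogeneousComponent e P ∈ degenerate R V k := by
  refine map_mem_degenerate (homogeneousComponent e).toAddMonoidHom (fun s hs P hP => ?_) hP
  have h := zeroSlots_mem_degreeLowering {s} e P
  simp only [AlgHom.toLinearMap_apply, add_zero, mem_slotFree.1 hP] at h
  exact slotFree_le_degenerate hs h.symm

theorem mapSlots_mem_normalized {f : Fin a → Fin b}
    (hf : ∀ i : Fin b, i.val ≠ 0 → ∃ s, s.val ≠ 0 ∧ f s = i) {P : SlotPoly R V a}
    (hP : P ∈ normalized R V a) : mapSlots f P ∈ normalized R V b := by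
  rw [mem_normalized] at *
  intro i hi
  obtain ⟨s, hs, rfl⟩ := hf i hi
  rw [zeroSlots_mapSlots, zeroSlots_eq_zero_of_mem _ (hP s hs), map_zero]
  rfl

theorem exists_ne_zero_of_mem_normalized {P : SlotPoly R V k} (hP : P ∈ normalized R V k)
    {e : Fin k × V →₀ ℕ} (he : coeff e P ≠ 0) {s : Fin k} (hs : s.val ≠ 0) :
    ∃ v, e (s, v) ≠ 0 := by
  by_contra! h
  have hzero := congrArg (coeff e) (mem_normalized.1 hP s hs)
  rw [coeff_zeroVars, if_pos (by rintro ⟨t, v⟩ rfl; exact h v)] at hzero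
  exact he hzero

theorem le_degree_of_mem_normalized {P : SlotPoly R V (k + 1)} (hP : P ∈ normalized R V (k + 1))
    {e : Fin (k + 1) × V →₀ ℕ} (he : coeff e P ≠ 0) : k ≤ e.degree := by
  classical
  choose v hv using fun i : Fin k => exists_ne_zero_of_mem_normalized hP he (s := i.succ) (by simp)
  let E : Finset (Fin (k + 1) × V) := Finset.univ.image fun i : Fin k => (i.succ, v i)
  have hE : E.card = k := by
    rw [Finset.card_image_of_injective _ fun i j h => by simpa using congrArg Prod.fst h]
    simp
  have hsub : E ⊆ e.support := by
    intro x hx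
    obtain ⟨i, -, rfl⟩ := Finset.mem_image.1 hx
    exact Finsupp.mem_support_iff.2 (hv i)
  calc k = E.card := hE.symm
    _ ≤ e.support.card := Finset.card_le_card hsub
    _ ≤ e.degree := Finset.card_nsmul_le_sum _ _ 1
        (fun x hx => Nat.one_le_iff_ne_zero.2 (Finsupp.mem_support_iff.1 hx)) |>.trans' (by simp)

theorem eq_zero_of_mem_normalized_of_isHomogeneous {N : ℕ} {P : SlotPoly R V (k + 1)}
    (hP : P ∈ normalized R V (k + 1)) (hN : P.IsHomogeneous N) (h : N < k) : P = 0 := by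
  ext e
  by_contra he
  have hk := le_degree_of_mem_normalized hP he
  have hN' := degree_eq_of_coeff_ne_zero hN he
  lia

end Semiring

section Ring

variable {R V : Type*} [CommRing R] {k : ℕ}

/-- The projection onto the normalized chains along the degenerate chains. -/
def normalizedProj (R V : Type*) [CommRing R] (k : ℕ) : SlotPoly R V k →ₗ[R] SlotPoly R V k :=
  ∑ S ∈ (Finset.univ.filter fun s : Fin k => s.val ≠ 0).powerset,
    (-1 : ℤ) ^ S.card • (zeroSlots (S : Set (Fin k))).toLinearMap

theorem normalizedProj_apply (P : SlotPoly R V k) :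
    normalizedProj R V k P = ∑ S ∈ (Finset.univ.filter fun s : Fin k => s.val ≠ 0).powerset,
      (-1 : ℤ) ^ S.card • zeroSlots (S : Set (Fin k)) P := by
  simp only [normalizedProj, LinearMap.sum_apply, LinearMap.smul_apply, AlgHom.toLinearMap_apply]

theorem normalizedProj_eq_zero {P : SlotPoly R V k} (hP : P ∈ degenerate R V k) :
    normalizedProj R V k P = 0 := by
  classical
  suffices degenerate R V k ≤ LinearMap.ker (normalizedProj R V k) from this hP
  refine iSup_le fun s P hP => ?_
  rw [LinearMap.mem_ker, normalizedProj_apply]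
  refine sum_powerset_alternating_eq_zero (i := s.1) (by simp [s.2]) fun S => ?_
  rw [← mem_slotFree.1 hP, zeroSlots_zeroSlots, zeroSlots_zeroSlots, Finset.coe_insert,
    Set.insert_union, Set.union_singleton, Set.insert_idem]

theorem normalizedProj_mem (P : SlotPoly R V k) : normalizedProj R V k P ∈ normalized R V k := by
  classical
  rw [mem_normalized]
  intro s hs
  rw [normalizedProj_apply, map_sum]
  simp only [map_zsmul]
  refine sum_powerset_alternating_eq_zero (i := s) (by simp [hs]) fun S => ?_
  rw [zeroSlots_zeroSlots, zeroSlots_zeroSlots, Finset.coe_insert, Set.singleton_union,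
    Set.singleton_union, Set.insert_idem]

theorem sub_normalizedProj_mem_degenerate (P : SlotPoly R V k) :
    P - normalizedProj R V k P ∈ degenerate R V k := by
  rw [normalizedProj_apply, ← Finset.add_sum_erase _ _ (Finset.empty_mem_powerset _)]
  simp only [Finset.card_empty, pow_zero, one_smul, Finset.coe_empty, zeroSlots_empty,
    sub_add_cancel_left]
  refine neg_mem (sum_mem fun S hS => zsmul_mem (S := Submodule R (SlotPoly R V k)) ?_ _)
  rw [Finset.mem_erase, Finset.mem_powerset] at hS
  obtain ⟨s, hs⟩ := Finset.nonempty_iff_ne_empty.2 hS.1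
  refine slotFree_le_degenerate (by simpa using hS.2 hs) ?_
  rw [mem_slotFree, zeroSlots_zeroSlots, Set.union_eq_self_of_subset_left (by simpa using hs)]

theorem normalizedProj_eq_self {P : SlotPoly R V k} (hP : P ∈ normalized R V k) :
    normalizedProj R V k P = P := by
  rw [normalizedProj_apply, Finset.sum_eq_single_of_mem ∅ (Finset.empty_mem_powerset _)]
  · simp only [Finset.card_empty, pow_zero, one_smul, Finset.coe_empty, zeroSlots_empty]
  · intro S hS hne
    obtain ⟨s, hs⟩ := Finset.nonempty_iff_ne_empty.2 hne
    have hs0 : s.val ≠ 0 := by simpa using Finset.mem_powerset.1 hS hs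
    rw [zeroSlots_eq_zero_of_mem hs (mem_normalized.1 hP s hs0), smul_zero]

theorem eq_zero_of_mem_normalized_of_mem_degenerate {P : SlotPoly R V k}
    (hP : P ∈ normalized R V k) (hP' : P ∈ degenerate R V k) : P = 0 := by
  rw [← normalizedProj_eq_self hP, normalizedProj_eq_zero hP']

theorem normalizedProj_eq_zero_iff {P : SlotPoly R V k} :
    normalizedProj R V k P = 0 ↔ P ∈ degenerate R V k :=
  ⟨fun h => by simpa [h] using sub_normalizedProj_mem_degenerate P, normalizedProj_eq_zero⟩

end Ring

end Slots

section Bar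

variable {R V : Type*} [CommRing R]

theorem mergeIdx_val (k : ℕ) (j : Fin (k + 1)) (s : Fin (k + 2)) :
    (mergeIdx k j s).1 = if s.1 ≤ j.1 then s.1 else s.1 - 1 := by
  unfold mergeIdx
  split_ifs <;> rfl

/-- The bar differential: the alternating sum of the products of adjacent slots. -/
def barDiff : (k : ℕ) → SlotPoly R V (k + 1) →ₗ[R] SlotPoly R V k
  | 0 => 0
  | k + 1 => ∑ j : Fin (k + 1), (-1 : ℤ) ^ j.1 • (mapSlots (mergeIdx k j)).toLinearMap

theorem barDiff_zero (P : SlotPoly R V 1) : barDiff 0 P = 0 := rfl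

theorem barDiff_succ (k : ℕ) (P : SlotPoly R V (k + 2)) :
    barDiff (k + 1) P = ∑ j : Fin (k + 1), (-1 : ℤ) ^ j.1 • mapSlots (mergeIdx k j) P := by
  simp only [barDiff, LinearMap.sum_apply, LinearMap.smul_apply, AlgHom.toLinearMap_apply]

theorem barDiff_mem_degreeLowering (k : ℕ) :
    barDiff k ∈ degreeLowering R (Fin (k + 1) × V) (Fin k × V) 0 := by
  cases k with
  | zero => exact zero_mem _
  | succ k =>
    exact sum_mem fun j _ => zsmul_mem
      (S := Submodule R (SlotPoly R V (k + 2) →ₗ[R] SlotPoly R V (k + 1)))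
      (mapSlots_mem_degreeLowering _) _

theorem barDiff_barDiff (k : ℕ) (P : SlotPoly R V (k + 2)) : barDiff k (barDiff (k + 1) P) = 0 := by
  cases k with
  | zero => rfl
  | succ k =>
    rw [barDiff_succ, barDiff_succ]
    simp only [map_sum, map_zsmul, Finset.smul_sum, smul_smul, mapSlots_mapSlots]
    refine sum_sum_alternating_eq_zero k
      (F := fun i j => mapSlots (mergeIdx k i ∘ mergeIdx (k + 1) j) P) fun i j h => ?_
    congr 2
    funext s
    simp only [Fin.ext_iff, Function.comp_apply, mergeIdx_val, Fin.val_succ]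
    split_ifs <;> lia

theorem barDiff_mem_normalized (k : ℕ) {P : SlotPoly R V (k + 1)}
    (hP : P ∈ normalized R V (k + 1)) : barDiff k P ∈ normalized R V k := by
  cases k with
  | zero => exact zero_mem _
  | succ k =>
    rw [barDiff_succ]
    refine sum_mem fun j _ => zsmul_mem (S := Submodule R (SlotPoly R V (k + 1)))
      (mapSlots_mem_normalized (fun i hi => ?_) hP) _
    obtain h | h := le_or_gt i.1 j.1
    · exact ⟨i.castSucc, by simpa using hi, by simp [Fin.ext_iff, mergeIdx_val, h]⟩
    · exact ⟨i.succ, by simp, by simp [Fin.ext_iff, mergeIdx_val]; lia⟩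

theorem barDiff_X_mul (k : ℕ) (v : V) (P : SlotPoly R V (k + 2)) :
    barDiff (k + 1) (X (0, v) * P) = X (0, v) * barDiff (k + 1) P := by
  rw [barDiff_succ, barDiff_succ, Finset.mul_sum]
  refine Finset.sum_congr rfl fun j _ => ?_
  have h0 : mergeIdx k j 0 = 0 := Fin.ext (by simp [mergeIdx_val])
  rw [map_mul, mapSlots_X, mul_smul_comm, h0]

theorem barDiff_mapSlots_succ (k : ℕ) (P : SlotPoly R V (k + 1)) :
    barDiff (k + 1) (mapSlots Fin.succ P) = P - mapSlots Fin.succ (barDiff k P) := by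
  have h0 : mergeIdx k 0 ∘ Fin.succ = id := by
    funext s
    refine Fin.ext ?_
    simp [mergeIdx_val]
  rw [barDiff_succ, Fin.sum_univ_succ, mapSlots_mapSlots, h0, mapSlots_id, Fin.val_zero, pow_zero,
    one_smul, sub_eq_add_neg]
  congr 1
  cases k with
  | zero => simp [barDiff_zero]
  | succ k =>
    rw [barDiff_succ, map_sum, ← Finset.sum_neg_distrib]
    refine Finset.sum_congr rfl fun j _ => ?_
    rw [map_zsmul, mapSlots_mapSlots, mapSlots_mapSlots, ← neg_smul, Fin.val_succ, pow_succ,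
      mul_neg_one]
    congr 3
    funext s
    simp only [Fin.ext_iff, Function.comp_apply, mergeIdx_val, Fin.val_succ]
    split_ifs <;> lia

theorem zeroSlots_zero_mapSlots_mergeIdx {k : ℕ} {j : Fin (k + 1)} (hj : j ≠ 0)
    (P : SlotPoly R V (k + 2)) :
    zeroSlots {0} (mapSlots (mergeIdx k j) P) = mapSlots (mergeIdx k j) (zeroSlots {0} P) := by
  have hpre : mergeIdx k j ⁻¹' {0} = {0} := by
    have := Fin.val_ne_zero_iff.2 hj
    ext s
    simp only [Set.mem_preimage, Set.mem_singleton_iff, Fin.ext_iff, mergeIdx_val, Fin.val_zero]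
    split_ifs <;> lia
  rw [zeroSlots_mapSlots, hpre]

theorem zeroSlots_zero_mapSlots_mergeIdx_zero {k : ℕ} {P : SlotPoly R V (k + 2)}
    (hP : P ∈ normalized R V (k + 2)) : zeroSlots {0} (mapSlots (mergeIdx k 0) P) = 0 := by
  rw [zeroSlots_mapSlots, zeroSlots_eq_zero_of_mem (s := 1) _ (mem_normalized.1 hP 1 (by simp)),
    map_zero]
  simp [Fin.ext_iff, mergeIdx_val]

theorem mapSlots_succ_barDiff_zeroSlots_zero {k : ℕ} {P : SlotPoly R V (k + 2)}
    (hP : P ∈ normalized R V (k + 2)) (hc : barDiff (k + 1) P = 0) :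
    mapSlots Fin.succ (barDiff (k + 1) (zeroSlots {0} P)) = zeroSlots {0} P := by
  have hz : ∑ j : Fin k, (-1 : ℤ) ^ (j.succ).1 •
      mapSlots (mergeIdx k j.succ) (zeroSlots {0} P) = 0 := by
    have h := congrArg (zeroSlots {0}) hc
    rw [map_zero, barDiff_succ, Fin.sum_univ_succ, map_add, map_zsmul,
      zeroSlots_zero_mapSlots_mergeIdx_zero hP, smul_zero, zero_add, map_sum] at h
    simpa only [map_zsmul, zeroSlots_zero_mapSlots_mergeIdx (Fin.succ_ne_zero _)] using h
  rw [barDiff_succ, Fin.sum_univ_succ, hz, add_zero, Fin.val_zero, pow_zero, one_smul,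
    mapSlots_mapSlots, mapSlots_zeroSlots_congr (g := id), mapSlots_id]
  intro s hs
  have : s.val ≠ 0 := Fin.val_ne_zero_iff.2 hs
  simp only [Fin.ext_iff, Function.comp_apply, Fin.val_succ, mergeIdx_val, Fin.val_zero, id_eq]
  lia

end Bar

section Koszul

variable {R V : Type*} [CommRing R] {J : Set V} {k m N : ℕ} {v : V}

theorem isHomogeneous_of_X_mul {σ : Type*} {i : σ} {P : MvPolynomial σ R}
    (h : (X i * P).IsHomogeneous (N + 1)) : P.IsHomogeneous N := by
  intro e he
  have hi := h (d := Finsupp.single i 1 + e) (by rwa [coeff_X_mul])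
  have hw : Finsupp.weight (1 : σ → ℕ) = Finsupp.degree := Finsupp.degree_eq_weight_one.symm
  rw [hw] at hi ⊢
  rw [map_add, Finsupp.degree_single] at hi
  lia

/-- Substitution of `0` for the variables in `J` in slot `0`. -/
def zeroFirst (J : Set V) : SlotPoly R V k →ₐ[R] SlotPoly R V k :=
  zeroVars {x | x.1.val = 0 ∧ x.2 ∈ J}

theorem zeroFirst_empty (P : SlotPoly R V k) : zeroFirst ∅ P = P := by
  simpa [zeroFirst] using zeroVars_empty P

theorem zeroFirst_zeroFirst (J J' : Set V) (P : SlotPoly R V k) :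
    zeroFirst J (zeroFirst J' P) = zeroFirst (J ∪ J') P := by
  rw [zeroFirst, zeroFirst, zeroFirst, zeroVars_zeroVars]
  congr 2
  ext x
  simp [and_or_left]

theorem zeroFirst_univ (P : SlotPoly R V (k + 1)) : zeroFirst Set.univ P = zeroSlots {0} P := by
  rw [zeroFirst, zeroSlots]
  congr 2
  ext x
  simp

theorem zeroFirst_mem_degreeLowering (J : Set V) :
    (zeroFirst J).toLinearMap ∈ degreeLowering R (Fin k × V) (Fin k × V) 0 :=
  zeroVars_mem_degreeLowering _

theorem zeroFirst_mem_normalized (J : Set V) {P : SlotPoly R V k} (hP : P ∈ normalized R V k) :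
    zeroFirst J P ∈ normalized R V k := by
  rw [mem_normalized] at *
  intro s hs
  rw [zeroFirst, zeroVars_comm, hP s hs, map_zero]

theorem zeroFirst_mem_degenerate (J : Set V) {P : SlotPoly R V k} (hP : P ∈ degenerate R V k) :
    zeroFirst J P ∈ degenerate R V k := by
  refine map_mem_degenerate (zeroFirst J : SlotPoly R V k →ₐ[R] _).toRingHom.toAddMonoidHom
    (fun s hs P hP => slotFree_le_degenerate hs ?_) hP
  refine (zeroVars_comm _ _ P).trans ?_
  rw [mem_slotFree.1 hP]
  rfl

theorem zeroFirst_mapSlots_zeroFirst (J : Set V) {a b : ℕ} {f : Fin a → Fin b}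
    (hf : ∀ s, s.val = 0 → (f s).val = 0) (P : SlotPoly R V a) :
    zeroFirst J (mapSlots f (zeroFirst J P)) = zeroFirst J (mapSlots f P) := by
  rw [zeroFirst, zeroFirst, mapSlots, zeroVars_rename, zeroVars_zeroVars,
    Set.union_eq_self_of_subset_right, ← zeroVars_rename]
  exact fun x hx => ⟨hf x.1 hx.1, hx.2⟩

theorem zeroFirst_barDiff_zeroFirst (J : Set V) (P : SlotPoly R V (k + 1)) :
    zeroFirst J (barDiff k (zeroFirst J P)) = zeroFirst J (barDiff k P) := by
  cases k with
  | zero => rfl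
  | succ k =>
    simp only [barDiff_succ, map_sum, map_zsmul]
    refine Finset.sum_congr rfl fun j _ => ?_
    rw [zeroFirst_mapSlots_zeroFirst]
    intro s hs
    simp [mergeIdx_val, hs]

theorem zeroFirst_X_mul (hv : v ∉ J) (P : SlotPoly R V (k + 1)) :
    zeroFirst J (X (0, v) * P) = X (0, v) * zeroFirst J P := by
  rw [map_mul, zeroFirst, zeroVars_X_of_notMem (by simp [hv])]

theorem X_zero_dvd_of_zeroFirst_eq_zero {P : SlotPoly R V (k + 1)} (h : zeroFirst {v} P = 0) :
    X (0, v) ∣ P := by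
  refine X_dvd_of_zeroVars_eq_zero ?_
  have hset : ({x | x.1.val = 0 ∧ x.2 ∈ ({v} : Set V)} : Set (Fin (k + 1) × V)) = {(0, v)} := by
    ext x
    simp [Prod.ext_iff]
  rwa [zeroFirst, hset] at h

theorem X_zero_mul_mem_normalized_iff {P : SlotPoly R V (k + 1)} :
    X (0, v) * P ∈ normalized R V (k + 1) ↔ P ∈ normalized R V (k + 1) := by
  simp only [mem_normalized, map_mul]
  refine forall₂_congr fun s hs => ?_
  rw [zeroVars_X_of_notMem (by rintro rfl; simp at hs), isRegular_X.left.mul_left_eq_zero_iff]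

/-- Modulo the variables of slot `0` in `J`, the homology of the normalized bar complex in
position `m` is concentrated in polynomial degree `m`. -/
def BarDiagonal (R : Type*) [CommRing R] (J : Set V) : Prop :=
  ∀ ⦃m N : ℕ⦄, N ≠ m → ∀ ⦃P : SlotPoly R V (m + 1)⦄, P.IsHomogeneous N →
    P ∈ normalized R V (m + 1) → zeroFirst J P = P → zeroFirst J (barDiff m P) = 0 →
    ∃ Q : SlotPoly R V (m + 2), Q.IsHomogeneous N ∧ Q ∈ normalized R V (m + 2) ∧
      zeroFirst J (barDiff (m + 1) Q) = P

theorem barDiagonal_empty : BarDiagonal R (∅ : Set V) := by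
  rintro m N hN P hP hn - hc
  rw [zeroFirst_empty] at hc
  have hslot : mapSlots Fin.succ (barDiff m (zeroSlots {0} P)) = zeroSlots {0} P := by
    cases m with
    | zero =>
      have h0 : zeroSlots {0} P = 0 := by
        classical
        ext e
        rw [coeff_zeroVars, coeff_zero, ite_eq_right_iff]
        intro h
        obtain rfl : e = 0 := Finsupp.ext fun x => h x (Subsingleton.elim (α := Fin 1) _ _)
        exact hP.coeff_eq_zero (by simpa using hN.symm)
      rw [h0, map_zero, map_zero]
    | succ m => exact mapSlots_succ_barDiff_zeroSlots_zero hn hc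
  refine ⟨mapSlots Fin.succ (P - zeroSlots {0} P), ?_, ?_, ?_⟩
  · exact isHomogeneous_of_degreeLowering (mapSlots_mem_degreeLowering _) <|
      hP.sub (isHomogeneous_of_degreeLowering (zeroSlots_mem_degreeLowering _) hP)
  · rw [mem_normalized] at *
    intro s hs
    obtain ⟨t, rfl⟩ := Fin.exists_succ_eq.2 (Fin.val_ne_zero_iff.1 hs)
    have hpre : Fin.succ ⁻¹' {t.succ} = {t} := by
      ext x
      simp
    rw [zeroSlots_mapSlots, hpre, map_sub, zeroSlots_zeroSlots]
    obtain rfl | ht := eq_or_ne t 0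
    · simp
    · have h0 := hn t (Fin.val_ne_zero_iff.2 ht)
      rw [h0, zeroSlots_eq_zero_of_mem (s := t) (by simp) h0, sub_zero, map_zero]
  · rw [zeroFirst_empty, barDiff_mapSlots_succ, map_sub, hc, zero_sub, map_neg, hslot]
    abel

/-- The connecting map of multiplication by `X (0, v)`: a cycle modulo `insert v J` can be changed
by a multiple of `X (0, v)` into a cycle modulo `J`. -/
theorem BarDiagonal.exists_correction (hJ : BarDiagonal R J) (hv : v ∉ J) (hmN : m < N)
    {P : SlotPoly R V (m + 1)} (hP : P.IsHomogeneous N) (hn : P ∈ normalized R V (m + 1))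
    (hc : zeroFirst {v} (zeroFirst J (barDiff m P)) = 0) :
    ∃ u : SlotPoly R V (m + 1), (X (0, v) * u).IsHomogeneous N ∧ u ∈ normalized R V (m + 1) ∧
      zeroFirst J u = u ∧ zeroFirst J (barDiff m (P - X (0, v) * u)) = 0 := by
  cases m with
  | zero =>
    exact ⟨0, by simpa using isHomogeneous_zero _ _ _, zero_mem _, map_zero _, by
      rw [barDiff_zero, map_zero]⟩
  | succ m =>
    obtain ⟨N, rfl⟩ : ∃ N', N = N' + 1 := ⟨N - 1, by lia⟩
    obtain ⟨w, hw⟩ := X_zero_dvd_of_zeroFirst_eq_zero hc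
    have hXw : (X (0, v) * w).IsHomogeneous (N + 1) := hw ▸ isHomogeneous_of_degreeLowering
      (zeroFirst_mem_degreeLowering J) (isHomogeneous_of_degreeLowering
        (barDiff_mem_degreeLowering _) hP)
    have hwn : w ∈ normalized R V (m + 1) := by
      rw [← X_zero_mul_mem_normalized_iff (v := v), ← hw]
      exact zeroFirst_mem_normalized _ (barDiff_mem_normalized _ hn)
    have hwJ : zeroFirst J w = w := by
      refine (X_mul_cancel_left_iff (i := ((0 : Fin (m + 1)), v))).1 ?_
      rw [← zeroFirst_X_mul hv, ← hw, zeroFirst_zeroFirst, Set.union_self]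
    have hwc : zeroFirst J (barDiff m w) = 0 := by
      cases m with
      | zero => rw [barDiff_zero, map_zero]
      | succ m =>
        refine (isRegular_X (n := ((0 : Fin (m + 1)), v))).left.mul_left_eq_zero_iff.1 ?_
        rw [← zeroFirst_X_mul hv, ← barDiff_X_mul, ← hw, zeroFirst_barDiff_zeroFirst,
          barDiff_barDiff, map_zero]
    obtain ⟨u, huN, hun, hu⟩ := hJ (by lia) (isHomogeneous_of_X_mul hXw) hwn hwJ hwc
    refine ⟨zeroFirst J u, ?_, zeroFirst_mem_normalized _ hun, ?_, ?_⟩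
    · rw [add_comm N]
      exact (isHomogeneous_X R _).mul
        (isHomogeneous_of_degreeLowering (zeroFirst_mem_degreeLowering J) huN)
    · rw [zeroFirst_zeroFirst, Set.union_self]
    · rw [map_sub, map_sub, barDiff_X_mul, zeroFirst_X_mul hv, zeroFirst_barDiff_zeroFirst, hu, hw,
        sub_self]

theorem BarDiagonal.insert_of_notMem (hJ : BarDiagonal R J) (hv : v ∉ J) :
    BarDiagonal R (insert v J) := by
  intro m N hN P hP hn hr hc
  obtain hlt | hlt := hN.lt_or_gt
  · obtain rfl := eq_zero_of_mem_normalized_of_isHomogeneous hn hP hlt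
    exact ⟨0, isHomogeneous_zero _ _ _, zero_mem _, by simp⟩
  have hins : ∀ {k : ℕ} (Q : SlotPoly R V k),
      zeroFirst (insert v J) Q = zeroFirst {v} (zeroFirst J Q) := fun Q => by
    rw [zeroFirst_zeroFirst, Set.singleton_union]
  have hJP : zeroFirst J P = P := by
    rw [← hr, zeroFirst_zeroFirst, Set.union_insert, Set.union_self]
  have hvP : zeroFirst {v} P = P := by
    rw [← hr, zeroFirst_zeroFirst, Set.singleton_union, Set.insert_idem]
  rw [hins] at hc
  obtain ⟨u, huN, hun, huJ, huc⟩ := hJ.exists_correction hv hlt hP hn hc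
  obtain ⟨Q, hQN, hQn, hQ⟩ := hJ hN (hP.sub huN)
    (sub_mem hn (X_zero_mul_mem_normalized_iff.2 hun))
    (by rw [map_sub, hJP, zeroFirst_X_mul hv, huJ]) huc
  refine ⟨Q, hQN, hQn, ?_⟩
  rw [hins, hQ, map_sub, hvP, map_mul, zeroFirst, zeroVars_X_of_mem (by simp), zero_mul, sub_zero]

theorem barDiagonal_of_finite (hJ : J.Finite) : BarDiagonal R J := by
  induction J, hJ using Set.Finite.induction_on with
  | empty => exact barDiagonal_empty
  | insert hv _ ih => exact ih.insert_of_notMem hv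

end Koszul

section Faces

variable {R V : Type*} [CommRing R] {k : ℕ}

/-- The index map of the `j`-th face of the cyclic bar construction: for `j ≤ k` it merges the
slots `j` and `j + 1`, and for `j = k + 1` it merges the last slot with slot `0`. -/
def faceIdx (k : ℕ) (j s : Fin (k + 2)) : Fin (k + 1) :=
  ⟨if j.val = k + 1 ∧ s.val = k + 1 then 0 else if s.val ≤ j.val then s.val else s.val - 1, by
    split_ifs <;> lia⟩

theorem faceIdx_val (j s : Fin (k + 2)) : (faceIdx k j s).val =
    if j.val = k + 1 ∧ s.val = k + 1 then 0 else if s.val ≤ j.val then s.val else s.val - 1 := rfl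

theorem faceIdx_castSucc (k : ℕ) (j : Fin (k + 1)) : faceIdx k j.castSucc = mergeIdx k j := by
  funext s
  refine Fin.ext ?_
  rw [faceIdx_val, mergeIdx_val, if_neg (by simp; lia), Fin.val_castSucc]

theorem faceIdx_last (k : ℕ) : faceIdx k (Fin.last (k + 1)) = cycIdx k := by
  funext s
  refine Fin.ext ?_
  simp only [faceIdx_val, cycIdx, Fin.val_last, true_and]
  split_ifs
  · rfl
  · rfl
  · lia

theorem val_add_one_eq_ite (j : Fin (k + 1)) :
    (j + 1).val = if j.val = k then 0 else j.val + 1 := by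
  simp [Fin.val_add_one, Fin.ext_iff]

theorem faceIdx_comp_faceIdx (k : ℕ) (i : Fin (k + 2)) (j : Fin (k + 3)) (h : j.val ≤ i.val) :
    faceIdx k i ∘ faceIdx (k + 1) j = faceIdx k ⟨j.val, by lia⟩ ∘ faceIdx (k + 1) i.succ := by
  funext s
  simp only [Function.comp, Fin.ext_iff, faceIdx_val, Fin.val_succ]
  split_ifs <;> lia

theorem mapSlots_faceIdx_mem_degenerate {s j : Fin (k + 2)} (hs : s.val ≠ 0) (h₁ : j ≠ s)
    (h₂ : j.val + 1 ≠ s.val) {P : SlotPoly R V (k + 2)} (hP : P ∈ slotFree R V s) :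
    mapSlots (faceIdx k j) P ∈ degenerate R V (k + 1) := by
  have h₁' := Fin.val_ne_of_ne h₁
  refine slotFree_le_degenerate (s := faceIdx k j s) ?_ ?_
  · rw [faceIdx_val]
    split_ifs <;> lia
  · have hpre : faceIdx k j ⁻¹' {faceIdx k j s} = {s} := by
      ext u
      simp only [Set.mem_preimage, Set.mem_singleton_iff, Fin.ext_iff, faceIdx_val]
      refine ⟨?_, fun h => by rw [h]⟩
      split_ifs <;> lia
    rw [mem_slotFree, zeroSlots_mapSlots, hpre, mem_slotFree.1 hP]

theorem mapSlots_faceIdx_congr {r s : Fin (k + 2)} (hrs : r.val + 1 = s.val)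
    {P : SlotPoly R V (k + 2)} (hP : P ∈ slotFree R V s) :
    mapSlots (faceIdx k r) P = mapSlots (faceIdx k s) P := by
  rw [← mem_slotFree.1 hP]
  refine mapSlots_zeroSlots_congr (fun u hu => ?_) P
  have hu' : u.val ≠ s.val := fun h => hu (Fin.ext h)
  simp only [Fin.ext_iff, faceIdx_val]
  split_ifs <;> lia

theorem sum_mapSlots_faceIdx_mem_degenerate {s : Fin (k + 2)} (hs : s.val ≠ 0)
    {G : Fin (k + 2) → SlotPoly R V (k + 2)} (hG : ∀ j, G j ∈ slotFree R V s)
    (hGs : ∀ j : Fin (k + 2), j.val + 1 = s.val → G j = G s) :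
    ∑ j, (-1 : ℤ) ^ j.val • mapSlots (faceIdx k j) (G j) ∈ degenerate R V (k + 1) := by
  obtain ⟨r, hr⟩ : ∃ r : Fin (k + 2), r.val + 1 = s.val := ⟨⟨s.val - 1, by lia⟩, by simp; lia⟩
  have hrs : r ≠ s := by
    rintro rfl
    lia
  rw [← Finset.add_sum_erase _ _ (Finset.mem_univ s),
    ← Finset.add_sum_erase _ _ (Finset.mem_erase.2 ⟨hrs, Finset.mem_univ r⟩), ← add_assoc]
  refine add_mem ?_ (sum_mem fun j hj =>
    zsmul_mem (S := Submodule R (SlotPoly R V (k + 1))) ?_ _)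
  · rw [hGs r hr, mapSlots_faceIdx_congr hr (hG s), ← hr, pow_succ, mul_neg_one, neg_smul,
      neg_add_cancel]
    exact zero_mem _
  · simp only [Finset.mem_erase, Finset.mem_univ, and_true] at hj
    exact mapSlots_faceIdx_mem_degenerate hs hj.2 (fun h => hj.1 (Fin.ext (by lia))) (hG j)

end Faces

section SlotDerivatives

variable {R V : Type*} [CommRing R] {a b k : ℕ}

theorem pderiv_mapSlots (f : Fin a → Fin b) (i : Fin b) (v : V) (P : SlotPoly R V a) :
    pderiv (i, v) (mapSlots f P) = mapSlots f (∑ s with f s = i, pderiv (s, v) P) := by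
  classical
  induction P using MvPolynomial.induction_on with
  | C c => simp [mapSlots]
  | add P Q hP hQ => simp only [map_add, hP, hQ, Finset.sum_add_distrib]
  | mul_X P x hP =>
    have hX : pderiv (i, v) (X (f x.1, x.2) : SlotPoly R V b) =
        mapSlots f (∑ s with f s = i, pderiv (s, v) (X x)) := by
      obtain ⟨t, w⟩ := x
      simp only [pderiv_X, Pi.single_apply, Prod.mk.injEq, ite_and, Finset.sum_ite_eq,
        Finset.mem_filter, Finset.mem_univ, true_and]
      split_ifs <;> simp
    simp only [map_mul, Derivation.leibniz, mapSlots_X, hP, hX, Finset.sum_add_distrib,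
      smul_eq_mul, ← Finset.mul_sum, map_add]

theorem pderiv_eq_zero_of_mem_slotFree {s : Fin k} {P : SlotPoly R V k} (hP : P ∈ slotFree R V s)
    (v : V) : pderiv (s, v) P = 0 :=
  pderiv_eq_zero_of_zeroVars_eq_self (by simp) (mem_slotFree.1 hP)

theorem pderiv_mem_slotFree {s : Fin k} {P : SlotPoly R V k} (hP : P ∈ slotFree R V s)
    (x : Fin k × V) : pderiv x P ∈ slotFree R V s := by
  obtain h | h := eq_or_ne x.1 s
  · rw [show x = (s, x.2) from Prod.ext h rfl, pderiv_eq_zero_of_mem_slotFree hP]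
    exact zero_mem _
  · rw [mem_slotFree, ← pderiv_zeroVars (by simpa using h), mem_slotFree.1 hP]

end SlotDerivatives

section Bidiff

variable {R V : Type*} [CommRing R] [Fintype V] {a b k : ℕ} (π : V → V → R)

/-- The constant-coefficient bidifferential operator with coefficients `π`, one derivative acting
on slot `i` and the other one on slot `j`. -/
def bidiff (i j : Fin k) : Module.End R (SlotPoly R V k) :=
  ∑ v, ∑ w, π v w • ((pderiv (i, v)).toLinearMap * (pderiv (j, w)).toLinearMap)

theorem bidiff_apply (i j : Fin k) (P : SlotPoly R V k) :
    bidiff π i j P = ∑ v, ∑ w, π v w • pderiv (i, v) (pderiv (j, w) P) := by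
  simp only [bidiff, LinearMap.sum_apply, LinearMap.smul_apply]
  rfl

theorem commute_bidiff (i j s t : Fin k) : Commute (bidiff π i j) (bidiff π s t) := by
  have hD (x y : Fin k × V) : Commute (pderiv x : Derivation R _ _).toLinearMap
      (pderiv y : Derivation R (SlotPoly R V k) _).toLinearMap :=
    LinearMap.ext fun P => pderiv_pderiv_comm x y P
  exact Commute.sum_left _ _ _ fun _ _ => Commute.sum_left _ _ _ fun _ _ =>
    Commute.sum_right _ _ _ fun _ _ => Commute.sum_right _ _ _ fun _ _ =>
      ((((hD _ _).mul_left (hD _ _)).mul_right ((hD _ _).mul_left (hD _ _))).smul_left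
        _).smul_right _

theorem bidiff_mem_degreeLowering (i j : Fin k) :
    bidiff π i j ∈ degreeLowering R (Fin k × V) (Fin k × V) 2 := by
  have h (x y : Fin k × V) : (pderiv x).toLinearMap * (pderiv y).toLinearMap ∈
      degreeLowering R (Fin k × V) (Fin k × V) 2 :=
    comp_mem_degreeLowering (s := 1) (r := 1) (pderiv_mem_degreeLowering x)
      (pderiv_mem_degreeLowering y)
  exact Submodule.sum_mem _ fun _ _ => Submodule.sum_mem _ fun _ _ => Submodule.smul_mem _ _ (h _ _)

theorem bidiff_mem_slotFree {s : Fin k} (i j : Fin k) {P : SlotPoly R V k}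
    (hP : P ∈ slotFree R V s) : bidiff π i j P ∈ slotFree R V s := by
  rw [bidiff_apply]
  exact sum_mem fun _ _ => sum_mem fun _ _ => Submodule.smul_mem _ _ <|
    pderiv_mem_slotFree (pderiv_mem_slotFree hP _) _

theorem bidiff_pow_mem_slotFree {s : Fin k} (i j : Fin k) (m : ℕ) {P : SlotPoly R V k}
    (hP : P ∈ slotFree R V s) : (bidiff π i j ^ m) P ∈ slotFree R V s := by
  induction m with
  | zero => exact hP
  | succ m ih =>
    rw [pow_succ']
    exact bidiff_mem_slotFree π i j ih

theorem bidiff_eq_zero_of_mem_slotFree_left {i : Fin k} (j : Fin k) {P : SlotPoly R V k}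
    (hP : P ∈ slotFree R V i) : bidiff π i j P = 0 := by
  simp [bidiff_apply, pderiv_eq_zero_of_mem_slotFree (pderiv_mem_slotFree hP _)]

theorem bidiff_eq_zero_of_mem_slotFree_right (i : Fin k) {j : Fin k} {P : SlotPoly R V k}
    (hP : P ∈ slotFree R V j) : bidiff π i j P = 0 := by
  simp [bidiff_apply, pderiv_eq_zero_of_mem_slotFree hP]

theorem bidiff_mapSlots (f : Fin a → Fin b) (i j : Fin b) (P : SlotPoly R V a) :
    bidiff π i j (mapSlots f P) =
      mapSlots f (∑ s with f s = i, ∑ t with f t = j, bidiff π s t P) := by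
  simp only [bidiff_apply, pderiv_mapSlots, ← map_sum, ← map_smul]
  congr 1
  simp only [map_sum, Finset.smul_sum]
  rw [Finset.sum_congr rfl fun _ _ => Finset.sum_comm, Finset.sum_comm]
  refine Finset.sum_congr rfl fun s _ => ?_
  rw [Finset.sum_congr rfl fun _ _ => Finset.sum_comm, Finset.sum_comm]

/-- The linear combination of the operators `bidiff π s t` with coefficients `c s t`. -/
def weightedBidiff (c : Fin k → Fin k → ℤ) : Module.End R (SlotPoly R V k) :=
  ∑ s, ∑ t, c s t • bidiff π s t

theorem weightedBidiff_apply (c : Fin k → Fin k → ℤ) (P : SlotPoly R V k) :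
    weightedBidiff π c P = ∑ s, ∑ t, c s t • bidiff π s t P := by
  simp only [weightedBidiff, LinearMap.sum_apply, LinearMap.smul_apply]

theorem weightedBidiff_add (c c' : Fin k → Fin k → ℤ) :
    weightedBidiff π (c + c') = weightedBidiff π c + weightedBidiff π c' := by
  simp only [weightedBidiff, Pi.add_apply, add_smul, Finset.sum_add_distrib]

theorem commute_weightedBidiff (c c' : Fin k → Fin k → ℤ) :
    Commute (weightedBidiff π c) (weightedBidiff π c') :=
  Commute.sum_left _ _ _ fun _ _ => Commute.sum_left _ _ _ fun _ _ =>
    Commute.sum_right _ _ _ fun _ _ => Commute.sum_right _ _ _ fun _ _ =>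
      ((commute_bidiff π _ _ _ _).smul_left _).smul_right _

theorem weightedBidiff_mem_degreeLowering (c : Fin k → Fin k → ℤ) :
    weightedBidiff π c ∈ degreeLowering R (Fin k × V) (Fin k × V) 2 :=
  sum_mem fun i _ => sum_mem fun j _ =>
    zsmul_mem (S := Submodule R (SlotPoly R V k →ₗ[R] SlotPoly R V k))
      (bidiff_mem_degreeLowering π i j) _

theorem weightedBidiff_mapSlots (c : Fin b → Fin b → ℤ) (f : Fin a → Fin b)
    (P : SlotPoly R V a) : weightedBidiff π c (mapSlots f P) =
      mapSlots f (weightedBidiff π (fun s t => c (f s) (f t)) P) := by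
  simp only [weightedBidiff_apply, bidiff_mapSlots, map_sum, map_zsmul]
  rw [← Finset.sum_fiberwise _ f]
  refine Finset.sum_congr rfl fun i _ => ?_
  simp only [Finset.smul_sum]
  rw [Finset.sum_comm]
  refine Finset.sum_congr rfl fun s hs => ?_
  rw [← Finset.sum_fiberwise _ f]
  refine Finset.sum_congr rfl fun j _ => Finset.sum_congr rfl fun t ht => ?_
  rw [(Finset.mem_filter.1 hs).2, (Finset.mem_filter.1 ht).2]

/-- The weights for which `weightedBidiff` is `bidiff π i j`. -/
def edge (i j : Fin k) : Fin k → Fin k → ℤ := fun s t => if s = i ∧ t = j then 1 else 0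

theorem weightedBidiff_edge (i j : Fin k) : weightedBidiff π (edge i j) = bidiff π i j := by
  simp [weightedBidiff, edge, ite_and]

/-- The two ways of multiplying three (or two pairs of) cyclically adjacent slots twist by the
same operator; this is the associativity of the star product. -/
theorem edge_faceIdx_add_edge (k : ℕ) (i : Fin (k + 2)) (j : Fin (k + 3)) (h : j.val ≤ i.val) :
    (fun s t => edge i (i + 1) (faceIdx (k + 1) j s) (faceIdx (k + 1) j t)) + edge j (j + 1) =
      (fun s t => edge (⟨j.val, by lia⟩ : Fin (k + 2)) (⟨j.val, by lia⟩ + 1)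
        (faceIdx (k + 1) i.succ s) (faceIdx (k + 1) i.succ t)) + edge i.succ (i.succ + 1) := by
  funext s t
  obtain ⟨i, hi⟩ := i
  obtain ⟨j, hj⟩ := j
  obtain ⟨s, hs⟩ := s
  obtain ⟨t, ht⟩ := t
  simp only at h
  simp only [Pi.add_apply, edge, Fin.ext_iff, faceIdx_val, val_add_one_eq_ite, Fin.val_succ]
  obtain hi' | rfl : i < k + 1 ∨ i = k + 1 := by lia
  · have h₁ : i ≠ k + 1 := by lia
    have h₂ : j ≠ k + 2 := by lia
    have h₃ : i + 1 ≠ k + 2 := by lia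
    have h₄ : j ≠ k + 1 := by lia
    simp only [h₁, h₂, h₃, h₄, false_and, if_false]
    grind
  · obtain hj' | rfl : j < k + 1 ∨ j = k + 1 := by lia
    · have h₂ : j ≠ k + 2 := by lia
      have h₄ : j ≠ k + 1 := by lia
      simp only [h₂, h₄, false_and, if_false, true_and]
      grind
    · have h₄ : k + 1 ≠ k + 2 := by lia
      simp only [h₄, false_and, if_false, true_and]
      grind

end Bidiff

section Exponential

variable {R σ τ : Type*} [CommRing R] {r M : ℕ}

theorem pow_apply_eq_zero_of_degreeLowering {L : Module.End R (MvPolynomial σ R)}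
    (hL : L ∈ degreeLowering R σ σ (r + 1)) {P : MvPolynomial σ R} {m : ℕ}
    (hm : P.totalDegree < m) : (L ^ m) P = 0 :=
  eq_zero_of_degreeLowering (pow_mem_degreeLowering hL m) (by nlinarith)

variable [Algebra ℚ R]

theorem sum_range_exp_eq {L : Module.End R (MvPolynomial σ R)}
    (hL : L ∈ degreeLowering R σ σ (r + 1)) {P : MvPolynomial σ R} (hP : P.totalDegree < M) :
    ∑ m ∈ Finset.range (P.totalDegree + 1), (m.factorial : ℚ)⁻¹ • (L ^ m) P =
      ∑ m ∈ Finset.range M, (m.factorial : ℚ)⁻¹ • (L ^ m) P := by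
  refine Finset.sum_subset (Finset.range_subset_range.2 hP) fun m _ hm => ?_
  rw [Finset.mem_range, not_lt] at hm
  rw [pow_apply_eq_zero_of_degreeLowering hL hm, smul_zero]

/-- The exponential of a linear map which strictly lowers the degree. -/
def expLowering (L : degreeLowering R σ σ (r + 1)) : Module.End R (MvPolynomial σ R) where
  toFun P := ∑ m ∈ Finset.range (P.totalDegree + 1), (m.factorial : ℚ)⁻¹ • (L.1 ^ m) P
  map_add' P Q := by
    let M := max (P + Q).totalDegree (max P.totalDegree Q.totalDegree) + 1
    rw [sum_range_exp_eq (M := M) L.2 (by lia), sum_range_exp_eq (M := M) L.2 (by lia),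
      sum_range_exp_eq (M := M) L.2 (by lia)]
    simp only [map_add, smul_add, Finset.sum_add_distrib]
  map_smul' c P := by
    let M := max (c • P).totalDegree P.totalDegree + 1
    rw [sum_range_exp_eq (M := M) L.2 (by lia), sum_range_exp_eq (M := M) L.2 (by lia),
      RingHom.id_apply, Finset.smul_sum]
    simp only [map_smul, smul_comm c]

theorem expLowering_apply (L : degreeLowering R σ σ (r + 1)) {P : MvPolynomial σ R}
    (hP : P.totalDegree < M) :
    expLowering L P = ∑ m ∈ Finset.range M, (m.factorial : ℚ)⁻¹ • (L.1 ^ m) P :=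
  sum_range_exp_eq L.2 hP

theorem map_expLowering {L : degreeLowering R σ σ (r + 1)} {L' : degreeLowering R τ τ (r + 1)}
    {f : MvPolynomial σ R →ₗ[R] MvPolynomial τ R} (h : ∀ P, L'.1 (f P) = f (L.1 P))
    (P : MvPolynomial σ R) : expLowering L' (f P) = f (expLowering L P) := by
  have hpow (m : ℕ) : (L'.1 ^ m) (f P) = f ((L.1 ^ m) P) := by
    induction m with
    | zero => rfl
    | succ m ih => rw [pow_succ', pow_succ', Module.End.mul_apply, ih, h, Module.End.mul_apply]
  let M := max P.totalDegree (f P).totalDegree + 1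
  rw [expLowering_apply (M := M) L (by lia), expLowering_apply (M := M) L' (by lia), map_sum]
  simp only [hpow, LinearMap.map_smul_of_tower]

theorem sum_antidiagonal_eq_sum_product {M : Type*} [AddCommMonoid M] {N : ℕ} {g : ℕ × ℕ → M}
    (hg : ∀ x, N ≤ x.1 + x.2 → g x = 0) :
    ∑ m ∈ Finset.range N, ∑ x ∈ Finset.HasAntidiagonal.antidiagonal m, g x =
      ∑ x ∈ Finset.range N ×ˢ Finset.range N, g x := by
  rw [← Finset.sum_filter_of_ne (p := fun x => x.1 + x.2 < N)
    fun x _ hx => not_le.1 fun h => hx (hg x h), ← Finset.sum_fiberwise_of_maps_to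
    (g := fun x : ℕ × ℕ => x.1 + x.2) (t := Finset.range N) (by simp)]
  refine Finset.sum_congr rfl fun m hm => Finset.sum_congr (Finset.ext fun x => ?_) fun _ _ => rfl
  rw [Finset.mem_range] at hm
  simp only [Finset.HasAntidiagonal.mem_antidiagonal, Finset.mem_filter, Finset.mem_product,
    Finset.mem_range]
  lia

theorem expLowering_add {L L' : degreeLowering R σ σ (r + 1)} (h : Commute L.1 L'.1)
    (P : MvPolynomial σ R) : expLowering (L + L') P = expLowering L (expLowering L' P) := by
  let N := max P.totalDegree (expLowering L' P).totalDegree + 1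
  have hbinom (m : ℕ) : (m.factorial : ℚ)⁻¹ • ((L + L').1 ^ m) P =
      ∑ x ∈ Finset.HasAntidiagonal.antidiagonal m,
        ((x.1.factorial : ℚ)⁻¹ * (x.2.factorial : ℚ)⁻¹) • (L.1 ^ x.1) ((L'.1 ^ x.2) P) := by
    rw [Submodule.coe_add, h.add_pow', LinearMap.sum_apply, Finset.smul_sum]
    refine Finset.sum_congr rfl fun x hx => ?_
    obtain rfl := Finset.HasAntidiagonal.mem_antidiagonal.1 hx
    rw [LinearMap.smul_apply, ← Nat.cast_smul_eq_nsmul ℚ, smul_smul, Module.End.mul_apply,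
      Nat.cast_add_choose]
    congr 1
    field_simp
  have hvanish (x : ℕ × ℕ) (hx : N ≤ x.1 + x.2) : (L.1 ^ x.1) ((L'.1 ^ x.2) P) = 0 := by
    have hmem := comp_mem_degreeLowering (pow_mem_degreeLowering L.2 x.1)
      (pow_mem_degreeLowering L'.2 x.2)
    have hPN : P.totalDegree < N := Nat.lt_succ_of_le (le_max_left _ _)
    exact eq_zero_of_degreeLowering (P := P) hmem (by nlinarith)
  rw [expLowering_apply (M := N) L (by lia), expLowering_apply (M := N) L' (by lia),
    expLowering_apply (M := N) _ (by lia), Finset.sum_congr rfl fun m _ => hbinom m,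
    sum_antidiagonal_eq_sum_product fun x hx => by rw [hvanish x hx, smul_zero]]
  simp only [map_sum, LinearMap.map_smul_of_tower, Finset.smul_sum, smul_smul,
    Finset.sum_product]

end Exponential

section Differential

variable {R V : Type*} [CommRing R] [Fintype V] (π : V → V → R)

/-- The coefficient of `1 / m!` in the Hochschild differential of the star product: every face
carries the `m`-th power of its bidifferential operator. -/
def hochDiffPart (m : ℕ) : (k : ℕ) → SlotPoly R V (k + 1) →ₗ[R] SlotPoly R V k
  | 0 => 0
  | k + 1 => ∑ j : Fin (k + 2), (-1 : ℤ) ^ j.val •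
      ((mapSlots (faceIdx k j)).toLinearMap ∘ₗ bidiff π j (j + 1) ^ m)

theorem hochDiffPart_succ (m k : ℕ) (P : SlotPoly R V (k + 2)) :
    hochDiffPart π m (k + 1) P =
      ∑ j, (-1 : ℤ) ^ j.val • mapSlots (faceIdx k j) ((bidiff π j (j + 1) ^ m) P) := by
  simp only [hochDiffPart, LinearMap.sum_apply, LinearMap.smul_apply, LinearMap.comp_apply,
    AlgHom.toLinearMap_apply]

theorem hochDiffPart_mem_degreeLowering (m k : ℕ) :
    hochDiffPart π m k ∈ degreeLowering R (Fin (k + 1) × V) (Fin k × V) (2 * m) := by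
  cases k with
  | zero => exact zero_mem _
  | succ k =>
    refine Submodule.sum_mem _ fun j _ => zsmul_mem
      (S := Submodule R (SlotPoly R V (k + 2) →ₗ[R] SlotPoly R V (k + 1))) ?_ _
    rw [← zero_add (2 * m)]
    exact comp_mem_degreeLowering (mapSlots_mem_degreeLowering _)
      (pow_mem_degreeLowering (bidiff_mem_degreeLowering π j (j + 1)) m)

theorem hochDiffPart_mem_degenerate (m k : ℕ) {P : SlotPoly R V (k + 1)}
    (hP : P ∈ degenerate R V (k + 1)) : hochDiffPart π m k P ∈ degenerate R V k := by
  cases k with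
  | zero => exact zero_mem _
  | succ k =>
    refine map_mem_degenerate (hochDiffPart π m (k + 1)).toAddMonoidHom (fun s hs P hP => ?_) hP
    rw [LinearMap.toAddMonoidHom_coe, hochDiffPart_succ]
    refine sum_mapSlots_faceIdx_mem_degenerate hs (fun j => bidiff_pow_mem_slotFree π _ _ m hP)
      fun j hj => ?_
    cases m with
    | zero => rfl
    | succ m =>
      have hjs : j + 1 = s := Fin.ext (by rw [val_add_one_eq_ite, if_neg (by lia), hj])
      rw [pow_succ, pow_succ, Module.End.mul_apply, Module.End.mul_apply, hjs,
        bidiff_eq_zero_of_mem_slotFree_right π j hP,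
        bidiff_eq_zero_of_mem_slotFree_left π (s + 1) hP, map_zero, map_zero]

variable [Algebra ℚ R]

/-- The exponential of `weightedBidiff`; for a single edge it turns the commutative product of
two slots into their star product. -/
def moyalExp {k : ℕ} (c : Fin k → Fin k → ℤ) : Module.End R (SlotPoly R V k) :=
  expLowering (r := 1) ⟨weightedBidiff π c, weightedBidiff_mem_degreeLowering π c⟩

theorem moyalExp_edge_apply {k M : ℕ} (i j : Fin k) {P : SlotPoly R V k} (hP : P.totalDegree < M) :
    moyalExp π (edge i j) P =
      ∑ m ∈ Finset.range M, (m.factorial : ℚ)⁻¹ • (bidiff π i j ^ m) P := by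
  rw [moyalExp, expLowering_apply _ hP]
  simp only [weightedBidiff_edge]

theorem moyalExp_moyalExp {k : ℕ} (c c' : Fin k → Fin k → ℤ) (P : SlotPoly R V k) :
    moyalExp π c (moyalExp π c' P) = moyalExp π (c + c') P := by
  rw [moyalExp, moyalExp, moyalExp, ← expLowering_add (commute_weightedBidiff π c c')]
  congr 2
  exact Subtype.ext (weightedBidiff_add π c c').symm

theorem moyalExp_mapSlots {a b : ℕ} (c : Fin b → Fin b → ℤ) (f : Fin a → Fin b)
    (P : SlotPoly R V a) :
    moyalExp π c (mapSlots f P) = mapSlots f (moyalExp π (fun s t => c (f s) (f t)) P) :=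
  map_expLowering (f := (mapSlots f).toLinearMap) (weightedBidiff_mapSlots π c f) P

/-- The Hochschild differential of the algebra `R[V]` with the star product given by the constant
bivector `π`, on `k + 1` slots, with value `0` for `k = 0`. -/
def hochDiff : (k : ℕ) → SlotPoly R V (k + 1) →ₗ[R] SlotPoly R V k
  | 0 => 0
  | k + 1 => ∑ j : Fin (k + 2), (-1 : ℤ) ^ j.val •
      ((mapSlots (faceIdx k j)).toLinearMap ∘ₗ moyalExp π (edge j (j + 1)))

theorem hochDiff_succ (k : ℕ) (P : SlotPoly R V (k + 2)) :
    hochDiff π (k + 1) P =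
      ∑ j, (-1 : ℤ) ^ j.val • mapSlots (faceIdx k j) (moyalExp π (edge j (j + 1)) P) := by
  simp only [hochDiff, LinearMap.sum_apply, LinearMap.smul_apply, LinearMap.comp_apply,
    AlgHom.toLinearMap_apply]

theorem hochDiff_eq_sum {k M : ℕ} {P : SlotPoly R V (k + 1)} (hP : P.totalDegree < M) :
    hochDiff π k P = ∑ m ∈ Finset.range M, (m.factorial : ℚ)⁻¹ • hochDiffPart π m k P := by
  cases k with
  | zero => simp [hochDiff, hochDiffPart]
  | succ k =>
    simp only [hochDiff_succ, moyalExp_edge_apply π _ _ hP, hochDiffPart_succ, Finset.smul_sum]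
    rw [Finset.sum_comm]
    refine Finset.sum_congr rfl fun j _ => ?_
    rw [map_sum, Finset.smul_sum]
    refine Finset.sum_congr rfl fun m _ => ?_
    rw [← AlgHom.toLinearMap_apply, LinearMap.map_smul_of_tower, smul_comm,
      AlgHom.toLinearMap_apply]

theorem hochDiff_mem_degenerate (k : ℕ) {P : SlotPoly R V (k + 1)}
    (hP : P ∈ degenerate R V (k + 1)) : hochDiff π k P ∈ degenerate R V k := by
  rw [hochDiff_eq_sum π (Nat.lt_succ_self _)]
  exact Submodule.sum_mem _ fun m _ =>
    Submodule.smul_of_tower_mem _ _ (hochDiffPart_mem_degenerate π m k hP)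

theorem hochDiff_hochDiff (k : ℕ) (P : SlotPoly R V (k + 2)) :
    hochDiff π k (hochDiff π (k + 1) P) = 0 := by
  cases k with
  | zero => rfl
  | succ k =>
    simp only [hochDiff_succ, map_sum, map_zsmul, Finset.smul_sum, smul_smul, moyalExp_mapSlots,
      mapSlots_mapSlots, moyalExp_moyalExp]
    rw [Finset.sum_comm]
    simp only [mul_comm ((-1 : ℤ) ^ Fin.val (n := k + 3) _)]
    refine sum_sum_alternating_eq_zero (k + 1) (F := fun i j => mapSlots
      (faceIdx k i ∘ faceIdx (k + 1) j) (moyalExp π ((fun s t => edge i (i + 1)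
        (faceIdx (k + 1) j s) (faceIdx (k + 1) j t)) + edge j (j + 1)) P)) fun i j h => ?_
    simp only [faceIdx_comp_faceIdx k i j h, edge_faceIdx_add_edge k i j h]

end Differential

section Commutative

variable {R V : Type*} [CommRing R] {k : ℕ}

/-- The Hochschild differential of the commutative polynomial algebra. -/
def commDiff : (k : ℕ) → SlotPoly R V (k + 1) →ₗ[R] SlotPoly R V k
  | 0 => 0
  | k + 1 => ∑ j : Fin (k + 2), (-1 : ℤ) ^ j.val • (mapSlots (faceIdx k j)).toLinearMap

theorem commDiff_succ (k : ℕ) (P : SlotPoly R V (k + 2)) :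
    commDiff (k + 1) P = ∑ j, (-1 : ℤ) ^ j.val • mapSlots (faceIdx k j) P := by
  simp only [commDiff, LinearMap.sum_apply, LinearMap.smul_apply, AlgHom.toLinearMap_apply]

theorem hochDiffPart_zero [Fintype V] (π : V → V → R) (k : ℕ) :
    hochDiffPart π 0 k = commDiff k := by
  cases k with
  | zero => rfl
  | succ k => exact LinearMap.ext fun P => by simp [hochDiffPart_succ, commDiff_succ]

theorem commDiff_mem_degreeLowering (k : ℕ) :
    commDiff k ∈ degreeLowering R (Fin (k + 1) × V) (Fin k × V) 0 := by
  cases k with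
  | zero => exact zero_mem _
  | succ k =>
    exact Submodule.sum_mem _ fun j _ => zsmul_mem
      (S := Submodule R (SlotPoly R V (k + 2) →ₗ[R] SlotPoly R V (k + 1)))
      (mapSlots_mem_degreeLowering _) _

theorem commDiff_mem_degenerate (k : ℕ) {P : SlotPoly R V (k + 1)}
    (hP : P ∈ degenerate R V (k + 1)) : commDiff k P ∈ degenerate R V k := by
  cases k with
  | zero => exact zero_mem _
  | succ k =>
    refine map_mem_degenerate (commDiff (k + 1)).toAddMonoidHom (fun s hs P hP => ?_) hP
    rw [LinearMap.toAddMonoidHom_coe, commDiff_succ]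
    exact sum_mapSlots_faceIdx_mem_degenerate hs (fun _ => hP) fun _ _ => rfl

theorem commDiff_succ_eq_barDiff_add (k : ℕ) (P : SlotPoly R V (k + 2)) :
    commDiff (k + 1) P =
      barDiff (k + 1) P + (-1 : ℤ) ^ (k + 1) • mapSlots (faceIdx k (Fin.last (k + 1))) P := by
  simp only [commDiff_succ, barDiff_succ, Fin.sum_univ_castSucc, faceIdx_castSucc,
    Fin.val_castSucc, Fin.val_last]

theorem zeroFirst_univ_commDiff (k : ℕ) {P : SlotPoly R V (k + 1)}
    (hP : P ∈ normalized R V (k + 1)) :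
    zeroFirst Set.univ (commDiff k P) = zeroFirst Set.univ (barDiff k P) := by
  cases k with
  | zero => rfl
  | succ k =>
    have hlast : zeroFirst Set.univ (mapSlots (faceIdx k (Fin.last (k + 1))) P) = 0 := by
      rw [zeroFirst_univ, zeroSlots_mapSlots, zeroSlots_eq_zero_of_mem (s := Fin.last (k + 1)) _
        (mem_normalized.1 hP _ (by simp)), map_zero]
      simp [Fin.ext_iff, faceIdx_val]
    rw [commDiff_succ_eq_barDiff_add, map_add, map_zsmul, hlast, smul_zero, add_zero]

theorem faceIdx_zero_right (k : ℕ) (j : Fin (k + 2)) : faceIdx k j 0 = 0 :=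
  Fin.ext (by simp [faceIdx_val])

end Commutative

section Translation

variable {R V : Type*} [CommRing R] {a b k : ℕ}

/-- The change of coordinates which moves the variables of slot `0` to the coefficients and
shifts the variables of the other slots by them. -/
def translate : SlotPoly R V k →ₐ[R] SlotPoly (MvPolynomial V R) V k :=
  aeval fun x => if x.1.val = 0 then C (X x.2) else C (X x.2) + X x

/-- The inverse of `translate`, extended by `0` on the variables of slot `0`. -/
def untranslate : SlotPoly (MvPolynomial V R) V (k + 1) →ₐ[R] SlotPoly R V (k + 1) :=
  aevalTower (rename fun v => (0, v)) fun x => if x.1.val = 0 then 0 else X x - X (0, x.2)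

theorem translate_X (x : Fin k × V) : translate (X x : SlotPoly R V k) =
    if x.1.val = 0 then C (X x.2) else C (X x.2) + X x := by
  simp [translate]

theorem untranslate_X (x : Fin (k + 1) × V) :
    untranslate (X x : SlotPoly (MvPolynomial V R) V (k + 1)) =
      if x.1.val = 0 then 0 else X x - X (0, x.2) := by
  simp [untranslate]

theorem untranslate_C (f : MvPolynomial V R) :
    untranslate (C f : SlotPoly (MvPolynomial V R) V (k + 1)) = rename (fun v => (0, v)) f := by
  simp [untranslate]

theorem algHom_congr_of_C_X {σ τ A : Type*} [CommSemiring A] [Algebra R A]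
    {f g : MvPolynomial σ (MvPolynomial τ R) →ₐ[R] A} (hC : ∀ v, f (C (X v)) = g (C (X v)))
    (hX : ∀ x, f (X x) = g (X x)) (P : MvPolynomial σ (MvPolynomial τ R)) : f P = g P :=
  AlgHom.congr_fun (algHom_ext' (algHom_ext hC) hX) P

theorem untranslate_translate (P : SlotPoly R V (k + 1)) : untranslate (translate P) = P := by
  refine AlgHom.congr_fun (φ₁ := untranslate.comp translate) (φ₂ := AlgHom.id R _)
    (algHom_ext fun x => ?_) P
  obtain ⟨s, v⟩ := x
  by_cases h : s = 0
  · simp [translate_X, untranslate_C, h]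
  · simp [translate_X, untranslate_X, untranslate_C, h]

theorem zeroFirst_univ_X (x : Fin k × V) :
    zeroFirst Set.univ (X x : SlotPoly R V k) = if x.1.val = 0 then 0 else X x := by
  simp [zeroFirst, zeroVars_X]

theorem zeroFirst_C (J : Set V) (c : R) : zeroFirst J (C c : SlotPoly R V k) = C c :=
  algHom_C _ c

theorem translate_untranslate (P : SlotPoly (MvPolynomial V R) V (k + 1)) :
    translate (untranslate P) = zeroFirst Set.univ P := by
  refine algHom_congr_of_C_X (f := translate.comp untranslate)
    (g := (zeroFirst Set.univ).restrictScalars R) (fun v => ?_) (fun x => ?_) P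
  · simp [untranslate_C, translate_X]
  · simp only [AlgHom.comp_apply, untranslate_X, AlgHom.restrictScalars_apply, zeroFirst_univ_X]
    split_ifs with h <;> simp [translate_X, h]

theorem untranslate_zeroFirst_univ (P : SlotPoly (MvPolynomial V R) V (k + 1)) :
    untranslate (zeroFirst Set.univ P) = untranslate P := by
  rw [← translate_untranslate, untranslate_translate]

theorem zeroFirst_univ_translate (P : SlotPoly R V (k + 1)) :
    zeroFirst Set.univ (translate P) = translate P := by
  rw [← translate_untranslate, untranslate_translate]

theorem translate_zeroSlots_mem_slotFree (s : Fin k) (P : SlotPoly R V k) :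
    translate (zeroSlots {s} P) ∈ slotFree (MvPolynomial V R) V s := by
  refine AlgHom.congr_fun
    (φ₁ := ((zeroSlots {s}).restrictScalars R).comp (translate.comp (zeroSlots {s})))
    (φ₂ := translate.comp (zeroSlots {s})) (algHom_ext fun x => ?_) P
  by_cases h : x.1 = s
  · simp [zeroVars_X, h]
  · by_cases h0 : x.1.val = 0 <;> simp [zeroVars_X, translate_X, h, h0]

theorem untranslate_zeroSlots_mem_slotFree {s : Fin (k + 1)} (hs : s ≠ 0)
    (P : SlotPoly (MvPolynomial V R) V (k + 1)) :
    untranslate (zeroSlots {s} P) ∈ slotFree R V s := by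
  let f : SlotPoly (MvPolynomial V R) V (k + 1) →ₐ[R] SlotPoly R V (k + 1) :=
    untranslate.comp ((zeroSlots {s}).restrictScalars R)
  change ((zeroSlots {s}).comp f) P = f P
  refine algHom_congr_of_C_X (fun v => ?_) (fun x => ?_) P
  · simp [f, untranslate_C, zeroVars_X, hs.symm]
  · by_cases h : x.1 = s
    · simp [f, zeroVars_X, h]
    · by_cases h0 : x.1 = 0 <;> simp [f, zeroVars_X, untranslate_X, h, h0, hs.symm]

theorem translate_mem_degenerate {P : SlotPoly R V k} (hP : P ∈ degenerate R V k) :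
    translate P ∈ degenerate (MvPolynomial V R) V k := by
  refine map_mem_degenerate (translate : SlotPoly R V k →ₐ[R] _).toRingHom.toAddMonoidHom
    (fun s hs P hP => slotFree_le_degenerate hs ?_) hP
  simpa [mem_slotFree.1 hP] using translate_zeroSlots_mem_slotFree s P

theorem untranslate_mem_degenerate {P : SlotPoly (MvPolynomial V R) V (k + 1)}
    (hP : P ∈ degenerate (MvPolynomial V R) V (k + 1)) :
    untranslate P ∈ degenerate R V (k + 1) := by
  refine map_mem_degenerate
    (untranslate : SlotPoly (MvPolynomial V R) V (k + 1) →ₐ[R] _).toRingHom.toAddMonoidHom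
    (fun s hs P hP => slotFree_le_degenerate hs ?_) hP
  simpa [mem_slotFree.1 hP] using untranslate_zeroSlots_mem_slotFree (Fin.val_ne_zero_iff.1 hs) P

theorem untranslate_mapSlots {f : Fin (a + 1) → Fin (b + 1)} (hf : f 0 = 0)
    (P : SlotPoly (MvPolynomial V R) V (a + 1)) :
    untranslate (mapSlots f P) = mapSlots f (untranslate P) := by
  refine algHom_congr_of_C_X (f := untranslate.comp ((mapSlots f).restrictScalars R))
    (g := (mapSlots f).comp untranslate) (fun v => ?_) (fun x => ?_) P
  · simp [untranslate_C, hf]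
  · by_cases h : x.1 = 0
    · simp [untranslate_X, h, hf]
    · by_cases h' : f x.1 = 0 <;> simp [untranslate_X, h, h', hf]

theorem translate_mapSlots {f : Fin (a + 1) → Fin (b + 1)} (hf : f 0 = 0)
    (P : SlotPoly R V (a + 1)) :
    translate (mapSlots f P) = zeroFirst Set.univ (mapSlots f (translate P)) := by
  rw [← translate_untranslate, untranslate_mapSlots hf, untranslate_translate]

theorem untranslate_commDiff (k : ℕ) (P : SlotPoly (MvPolynomial V R) V (k + 2)) :
    untranslate (commDiff (k + 1) P) = commDiff (k + 1) (untranslate P) := by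
  simp only [commDiff_succ, map_sum, map_zsmul, untranslate_mapSlots (faceIdx_zero_right k _)]

theorem translate_commDiff (k : ℕ) (P : SlotPoly R V (k + 2)) :
    translate (commDiff (k + 1) P) = zeroFirst Set.univ (commDiff (k + 1) (translate P)) := by
  simp only [commDiff_succ, map_sum, map_zsmul, translate_mapSlots (faceIdx_zero_right k _)]

end Translation

section Words

variable {S T : Type*} {k : ℕ}

/-- The exponent of the monomial `∏ i, X (w i)`. -/
def wordExp (w : Fin k → S) : S →₀ ℕ := ∑ i, Finsupp.single (w i) 1

theorem degree_wordExp (w : Fin k → S) : (wordExp w).degree = k := by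
  simp [wordExp]

theorem mapDomain_wordExp (f : S → T) (w : Fin k → S) :
    (wordExp w).mapDomain f = wordExp (f ∘ w) := by
  simp [wordExp, Finsupp.mapDomain_finsetSum, Finsupp.mapDomain_single]

theorem wordExp_apply [DecidableEq S] (w : Fin k → S) (x : S) :
    wordExp w x = Fintype.card {i // w i = x} := by
  simp [wordExp, Finsupp.finsetSum_apply, Finsupp.single_apply, Fintype.card_subtype]

theorem wordExp_comp_perm (w : Fin k → S) (σ : Equiv.Perm (Fin k)) :
    wordExp (w ∘ σ) = wordExp w :=
  Equiv.sum_comp σ fun i => Finsupp.single (w i) 1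

theorem exists_perm_of_wordExp_eq {w w' : Fin k → S} (h : wordExp w = wordExp w') :
    ∃ σ : Equiv.Perm (Fin k), w' ∘ σ = w := by
  classical
  have e (x : S) : Nonempty ({i // w i = x} ≃ {i // w' i = x}) :=
    Fintype.card_eq.1 <| by simpa only [wordExp_apply] using DFunLike.congr_fun h x
  exact ⟨Equiv.ofFiberEquiv fun x => (e x).some, funext fun i => Equiv.ofFiberEquiv_map _ i⟩

theorem mergeIdx_succ_val (m : ℕ) (j a : Fin (m + 1)) :
    (mergeIdx m j a.succ).val = if a.val + 1 ≤ j.val then a.val + 1 else a.val := by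
  simp [mergeIdx_val]

theorem monotone_mergeIdx_succ (m : ℕ) (j : Fin (m + 1)) :
    Monotone fun a : Fin (m + 1) => mergeIdx m j a.succ := fun a b hab => by
  rw [Fin.le_iff_val_le_val] at *
  simp only [mergeIdx_succ_val]
  split_ifs <;> lia

theorem eq_of_mergeIdx_succ_eq {m : ℕ} {i j : Fin (m + 1)}
    (h : ∀ a : Fin (m + 1), mergeIdx m i a.succ = mergeIdx m j a.succ) : i = j := by
  have hi := congrArg Fin.val (h i)
  have hj := congrArg Fin.val (h j)
  simp only [mergeIdx_succ_val] at hi hj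
  grind

theorem eq_one_or_eq_swap_of_mergeIdx_succ {m : ℕ} {i : Fin m} {σ : Equiv.Perm (Fin (m + 1))}
    (h : ∀ a, mergeIdx m i.succ (σ a).succ = mergeIdx m i.succ a.succ) :
    σ = 1 ∨ σ = Equiv.swap i.castSucc i.succ := by
  have hval (a : Fin (m + 1)) := congrArg Fin.val (h a)
  simp only [mergeIdx_succ_val, Fin.val_succ] at hval
  have hfix (a : Fin (m + 1)) (h₁ : a ≠ i.castSucc) (h₂ : a ≠ i.succ) : σ a = a := by
    have := hval a
    rw [Fin.ne_iff_vne] at h₁ h₂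
    grind
  have hcases (a : Fin (m + 1)) (ha : a = i.castSucc ∨ a = i.succ) :
      σ a = i.castSucc ∨ σ a = i.succ := by
    have := hval a
    rw [Fin.ext_iff, Fin.ext_iff] at *
    grind
  have hinj : σ i.castSucc ≠ σ i.succ := σ.injective.ne (by simp [Fin.ext_iff])
  have h₁ := hcases _ (Or.inl rfl)
  have h₂ := hcases _ (Or.inr rfl)
  by_cases hi : σ i.castSucc = i.castSucc
  · refine Or.inl (Equiv.ext fun a => ?_)
    rw [Equiv.Perm.one_apply]
    grind
  · refine Or.inr (Equiv.ext fun a => ?_)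
    rw [Equiv.swap_apply_def]
    grind

variable {V : Type*}

/-- Merging slots `j` and `j + 1` of the word with letters `(i + 1, u i)`. -/
abbrev mergedWord {m : ℕ} (j : Fin (m + 1)) (u : Fin (m + 1) → V) (i : Fin (m + 1)) :
    Fin (m + 1) × V :=
  (mergeIdx m j i.succ, u i)

theorem wordExp_mergedWord_eq_iff {m : ℕ} {i : Fin m} {j : Fin (m + 1)} {u v : Fin (m + 1) → V} :
    wordExp (mergedWord j u) = wordExp (mergedWord i.succ v) ↔
      j = i.succ ∧ (u = v ∨ u = v ∘ Equiv.swap i.castSucc i.succ) := by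
  constructor
  · intro h
    obtain ⟨σ, hσ⟩ := exists_perm_of_wordExp_eq h
    have hslot (a : Fin (m + 1)) : mergeIdx m i.succ (σ a).succ = mergeIdx m j a.succ :=
      congrArg Prod.fst (congrFun hσ a)
    have hsort : (fun a => mergeIdx m i.succ a.succ) ∘ σ = (fun a => mergeIdx m i.succ a.succ) ∘
        (1 : Equiv.Perm (Fin (m + 1))) :=
      Tuple.unique_monotone (by simpa [Function.comp_def, hslot] using monotone_mergeIdx_succ m j)
        (monotone_mergeIdx_succ m i.succ)
    obtain rfl : j = i.succ :=
      eq_of_mergeIdx_succ_eq fun a => (hslot a).symm.trans (congrFun hsort a)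
    have hu : u = v ∘ σ := funext fun a => (congrArg Prod.snd (congrFun hσ a)).symm
    exact ⟨rfl, (eq_one_or_eq_swap_of_mergeIdx_succ hslot).imp (fun h => by simp [hu, h])
      fun h => by rw [hu, h]⟩
  · rintro ⟨rfl, rfl | rfl⟩
    · rfl
    · rw [← wordExp_comp_perm (mergedWord i.succ v) (Equiv.swap i.castSucc i.succ)]
      congr 1
      funext a
      refine Prod.ext (Fin.ext ?_) rfl
      simp only [Function.comp_apply, mergeIdx_succ_val, Equiv.swap_apply_def, Fin.ext_iff]
      grind

end Words

section Alternating

variable {V M : Type*} [AddCommGroup M] {k : ℕ}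

/-- Alternating functions of `k`-tuples: the coefficients of differential forms. -/
def IsAlternating (ω : (Fin k → V) → M) : Prop :=
  ∀ (σ : Equiv.Perm (Fin k)) (v : Fin k → V), ω (v ∘ σ) = (Equiv.Perm.sign σ : ℤ) • ω v

theorem isAlternating_of_subsingleton [Subsingleton (Equiv.Perm (Fin k))] (ω : (Fin k → V) → M) :
    IsAlternating ω := fun σ v => by
  rw [Subsingleton.elim σ 1]
  simp

theorem isAlternating_of_adjacent {m : ℕ} {ω : (Fin (m + 1) → V) → M}
    (h : ∀ (i : Fin m) (v : Fin (m + 1) → V),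
      ω (v ∘ Equiv.swap i.castSucc i.succ) = -ω v) : IsAlternating ω := by
  intro σ
  induction (by rw [Equiv.Perm.mclosure_swap_castSucc_succ]; trivial :
    σ ∈ Submonoid.closure (Set.range fun i : Fin m => Equiv.swap i.castSucc i.succ))
    using Submonoid.closure_induction with
  | mem σ hσ =>
    obtain ⟨i, rfl⟩ := hσ
    intro v
    rw [h, Equiv.Perm.sign_swap (by simp [Fin.ext_iff])]
    simp
  | one => simp
  | mul σ τ _ _ hσ hτ =>
    intro v
    rw [Equiv.Perm.coe_mul, ← Function.comp_assoc, hτ, hσ, smul_smul, map_mul, Units.val_mul,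
      mul_comm]

theorem IsAlternating.apply_comp_swap {ω : (Fin k → V) → M} (h : IsAlternating ω) {i j : Fin k}
    (hij : i ≠ j) (v : Fin k → V) : ω (v ∘ Equiv.swap i j) = -ω v := by
  simp [h (Equiv.swap i j) v, Equiv.Perm.sign_swap hij]

theorem IsAlternating.eq_zero_of_not_injective [IsAddTorsionFree M] {ω : (Fin k → V) → M}
    (h : IsAlternating ω) {v : Fin k → V} (hv : ¬ Function.Injective v) : ω v = 0 := by
  obtain ⟨i, j, hvij, hij⟩ := Function.not_injective_iff.1 hv
  have hfix : v ∘ Equiv.swap i j = v := by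
    rw [Equiv.comp_swap_eq_update, hvij, Function.update_eq_self, ← hvij, Function.update_eq_self]
  have hneg := h.apply_comp_swap hij v
  rw [hfix] at hneg
  exact self_eq_neg.1 hneg

end Alternating

section Multilinear

variable {R V : Type*} [CommRing R] {k : ℕ}

/-- Placing the letters of a word in the slots `1, …, k`. -/
abbrev slotWord (v : Fin k → V) (i : Fin k) : Fin (k + 1) × V := (i.succ, v i)

theorem slotWord_injective : Function.Injective fun v : Fin k → V => wordExp (slotWord v) := by
  intro u v h
  obtain ⟨σ, hσ⟩ := exists_perm_of_wordExp_eq h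
  have hσ1 (i : Fin k) : σ i = i := Fin.succ_injective _ (congrArg Prod.fst (congrFun hσ i))
  exact funext fun i => by simpa [hσ1] using (congrArg Prod.snd (congrFun hσ i)).symm

theorem exists_eq_wordExp_of_mem_normalized {P : SlotPoly R V (k + 1)}
    (hP : P ∈ normalized R V (k + 1)) (hk : P.IsHomogeneous k) {e : Fin (k + 1) × V →₀ ℕ}
    (he : coeff e P ≠ 0) : ∃ v : Fin k → V, e = wordExp (slotWord v) := by
  classical
  choose v hv using fun i : Fin k => exists_ne_zero_of_mem_normalized hP he (s := i.succ) (by simp)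
  refine ⟨v, ?_⟩
  have hle : wordExp (slotWord v) ≤ e := by
    intro x
    by_cases hx : ∃ i, slotWord v i = x
    · obtain ⟨i, rfl⟩ := hx
      have hsub : Subsingleton {j // slotWord v j = slotWord v i} :=
        ⟨fun a b => Subtype.ext <| Fin.succ_injective _ <|
          congrArg Prod.fst (a.2.trans b.2.symm)⟩
      rw [wordExp_apply]
      exact (Fintype.card_le_one_iff_subsingleton.2 hsub).trans (Nat.one_le_iff_ne_zero.2 (hv i))
    · have : IsEmpty {j // slotWord v j = x} := ⟨fun a => hx ⟨a.1, a.2⟩⟩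
      rw [wordExp_apply, Fintype.card_eq_zero]
      exact Nat.zero_le _
  obtain ⟨d, rfl⟩ := exists_add_of_le hle
  have hd := degree_eq_of_coeff_ne_zero hk he
  rw [map_add, degree_wordExp, Nat.add_eq_left, Finsupp.degree_eq_zero_iff] at hd
  rw [hd, add_zero]

variable [Fintype V]

/-- The chain which is linear in each of the slots `1, …, k` and constant in slot `0`, with
coefficients `ω`. -/
def multilinChain (ω : (Fin k → V) → R) : SlotPoly R V (k + 1) :=
  ∑ v, monomial (wordExp (slotWord v)) (ω v)

theorem multilinChain_eq_sum_C_mul_prod (ω : (Fin k → V) → R) :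
    multilinChain ω = ∑ v, C (ω v) * ∏ i, X (slotWord v i) :=
  Finset.sum_congr rfl fun _ _ => monomial_sum_index _ _ _

theorem coeff_multilinChain (ω : (Fin k → V) → R) (v : Fin k → V) :
    coeff (wordExp (slotWord v)) (multilinChain ω) = ω v := by
  classical
  simp only [multilinChain, coeff_sum, coeff_monomial, slotWord_injective.eq_iff]
  simp

theorem multilinChain_isHomogeneous (ω : (Fin k → V) → R) : (multilinChain ω).IsHomogeneous k :=
  IsHomogeneous.sum _ _ _ fun _ _ => isHomogeneous_monomial _ (degree_wordExp _)

theorem multilinChain_mem_normalized (ω : (Fin k → V) → R) :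
    multilinChain ω ∈ normalized R V (k + 1) := by
  rw [mem_normalized]
  intro s hs
  obtain ⟨i, rfl⟩ := Fin.exists_succ_eq.2 (Fin.val_ne_zero_iff.1 hs)
  rw [multilinChain_eq_sum_C_mul_prod, map_sum]
  refine Finset.sum_eq_zero fun v _ => ?_
  rw [map_mul, map_prod, Finset.prod_eq_zero (Finset.mem_univ i), mul_zero]
  simp [zeroVars_X]

theorem eq_multilinChain {P : SlotPoly R V (k + 1)} (hP : P ∈ normalized R V (k + 1))
    (hk : P.IsHomogeneous k) : P = multilinChain fun v => coeff (wordExp (slotWord v)) P := by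
  ext e
  by_cases he : ∃ v : Fin k → V, e = wordExp (slotWord v)
  · obtain ⟨v, rfl⟩ := he
    rw [coeff_multilinChain]
  · have hzero {P : SlotPoly R V (k + 1)} (hP : P ∈ normalized R V (k + 1))
        (hk : P.IsHomogeneous k) : coeff e P = 0 := by
      by_contra h
      exact he (exists_eq_wordExp_of_mem_normalized hP hk h)
    rw [hzero hP hk, hzero (multilinChain_mem_normalized _) (multilinChain_isHomogeneous _)]

theorem coeff_mapSlots_mergeIdx_multilinChain {m : ℕ} [DecidableEq V] (i : Fin m)
    (j : Fin (m + 1)) (ω : (Fin (m + 1) → V) → R) (v : Fin (m + 1) → V) :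
    coeff (wordExp (mergedWord i.succ v)) (mapSlots (mergeIdx m j) (multilinChain ω)) =
      if j = i.succ then ∑ u ∈ {v, v ∘ Equiv.swap i.castSucc i.succ}, ω u else 0 := by
  have hmap (u : Fin (m + 1) → V) : (wordExp (slotWord u)).mapDomain (Prod.map (mergeIdx m j) id) =
      wordExp (mergedWord j u) := mapDomain_wordExp _ _
  simp only [multilinChain, mapSlots, map_sum, rename_monomial, hmap, coeff_sum, coeff_monomial,
    wordExp_mergedWord_eq_iff]
  split_ifs with h
  · rw [← Finset.sum_filter]
    exact Finset.sum_congr (by ext; simp [h]) fun _ _ => rfl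
  · simp [h]

theorem isAlternating_of_zeroFirst_barDiff_eq_zero {ω : (Fin k → V) → R}
    (h : zeroFirst Set.univ (barDiff k (multilinChain ω)) = 0) : IsAlternating ω := by
  classical
  cases k with
  | zero => exact isAlternating_of_subsingleton ω
  | succ m =>
    refine isAlternating_of_adjacent fun i v => ?_
    have hcoeff :
        coeff (wordExp (mergedWord i.succ v)) (barDiff (m + 1) (multilinChain ω)) = 0 := by
      have hzero := congrArg (coeff (wordExp (mergedWord i.succ v))) h
      rw [zeroFirst_univ, coeff_zeroVars, coeff_zero, if_pos] at hzero
      · exact hzero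
      · rintro ⟨s, x⟩ rfl
        have : IsEmpty {a // mergedWord i.succ v a = (0, x)} := ⟨fun ⟨a, ha⟩ => by
          have hs := congrArg (Fin.val ∘ Prod.fst) ha
          simp only [Function.comp_apply, mergeIdx_succ_val, Fin.val_succ] at hs
          split_ifs at hs <;> (simp at hs; try lia)⟩
        rw [wordExp_apply, Fintype.card_eq_zero]
    simp only [barDiff_succ, coeff_sum, coeff_smul, coeff_mapSlots_mergeIdx_multilinChain] at hcoeff
    rw [Finset.sum_eq_single_of_mem i.succ (Finset.mem_univ _) (by simp +contextual), if_pos rfl]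
      at hcoeff
    replace hcoeff := (smul_eq_zero_iff_eq ((-1 : ℤˣ) ^ i.succ.val)).1 (by simpa using hcoeff)
    by_cases hv : v = v ∘ Equiv.swap i.castSucc i.succ
    · rw [← hv, Finset.pair_eq_singleton, Finset.sum_singleton] at hcoeff
      rw [← hv, hcoeff, neg_zero]
    · rw [Finset.sum_pair hv, add_comm] at hcoeff
      exact eq_neg_of_add_eq_zero_left hcoeff

end Multilinear

section Forms

variable {R V : Type*} [CommRing R] {k : ℕ}

theorem prod_C_add_X_sub_prod_X_mem_degenerate (c : Fin k → R) (v : Fin k → V) :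
    ∏ i, (C (c i) + X (slotWord v i)) - ∏ i, X (slotWord v i) ∈ degenerate R V (k + 1) := by
  classical
  rw [Finset.prod_add, ← Finset.add_sum_erase _ _ (Finset.empty_mem_powerset _)]
  simp only [Finset.prod_empty, one_mul, Finset.sdiff_empty, add_sub_cancel_left]
  refine sum_mem fun T hT => ?_
  obtain ⟨i, hi⟩ := Finset.nonempty_iff_ne_empty.2 (Finset.ne_of_mem_erase hT)
  refine slotFree_le_degenerate (s := i.succ) (by simp) ?_
  rw [mem_slotFree, map_mul, map_prod, map_prod]
  congr 1
  · simp
  · refine Finset.prod_congr rfl fun j hj => zeroVars_X_of_notMem ?_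
    rintro hji
    obtain rfl := Fin.succ_injective _ hji
    exact (Finset.mem_sdiff.1 hj).2 hi

theorem C_mul_mem_degenerate (c : R) {P : SlotPoly R V k}
    (hP : P ∈ degenerate R V k) : C c * P ∈ degenerate R V k := by
  rw [C_mul']
  exact Submodule.smul_mem _ _ hP

variable [Fintype V]

/-- The chain `∑ v, ω v ⊗ X (v 1) ⊗ ⋯ ⊗ X (v k)` of the differential form with coefficients `ω`. -/
def formChain (R V : Type*) [CommRing R] [Fintype V] (k : ℕ) :
    ((Fin k → V) → MvPolynomial V R) →ₗ[R] SlotPoly R V (k + 1) :=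
  ∑ v, LinearMap.mulRight R (∏ i, X (slotWord v i)) ∘ₗ
    (rename fun x => (0, x)).toLinearMap ∘ₗ LinearMap.proj v

theorem formChain_apply (ω : (Fin k → V) → MvPolynomial V R) :
    formChain R V k ω = ∑ v, rename (fun x => (0, x)) (ω v) * ∏ i, X (slotWord v i) := by
  simp [formChain]

theorem translate_formChain_sub_mem_degenerate (ω : (Fin k → V) → MvPolynomial V R) :
    translate (formChain R V k ω) - multilinChain ω ∈ degenerate (MvPolynomial V R) V (k + 1) := by
  have hcoeff (f : MvPolynomial V R) :
      translate (rename (fun x => (0, x)) f : SlotPoly R V (k + 1)) = C f := by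
    rw [← untranslate_C, translate_untranslate, zeroFirst_C]
  rw [formChain_apply, multilinChain_eq_sum_C_mul_prod, map_sum, ← Finset.sum_sub_distrib]
  refine sum_mem fun v _ => ?_
  rw [map_mul, map_prod, hcoeff, ← mul_sub]
  simpa [translate_X] using
    C_mul_mem_degenerate _ (prod_C_add_X_sub_prod_X_mem_degenerate (fun i => X (v i)) v)

theorem formChain_sub_untranslate_mem_degenerate (ω : (Fin k → V) → MvPolynomial V R) :
    formChain R V k ω - untranslate (multilinChain ω) ∈ degenerate R V (k + 1) := by
  simpa [untranslate_translate] using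
    untranslate_mem_degenerate (translate_formChain_sub_mem_degenerate ω)

end Forms

section HochschildKostantRosenberg

variable {R V : Type*} [CommRing R] {k : ℕ}

theorem zeroFirst_univ_normalizedProj (P : SlotPoly R V (k + 1)) :
    zeroFirst Set.univ (normalizedProj R V (k + 1) P) =
      normalizedProj R V (k + 1) (zeroFirst Set.univ P) := by
  simp only [zeroFirst_univ, normalizedProj_apply, map_sum, map_zsmul, zeroSlots_zeroSlots,
    Set.union_comm]

variable [Fintype V]

theorem exists_multilinChain_of_normalized {P : SlotPoly R V (k + 1)}
    (hn : P ∈ normalized R V (k + 1)) (hr : zeroFirst Set.univ P = P)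
    (hc : zeroFirst Set.univ (barDiff k P) = 0) :
    ∃ ω : (Fin k → V) → R, IsAlternating ω ∧ ∃ Q : SlotPoly R V (k + 2),
      P = multilinChain ω + zeroFirst Set.univ (commDiff (k + 1) Q) := by
  have hNn (N : ℕ) := homogeneousComponent_mem_normalized hn N
  have hNr (N : ℕ) : zeroFirst Set.univ (homogeneousComponent N P) = homogeneousComponent N P := by
    simpa [hr] using (zeroFirst_mem_degreeLowering Set.univ N P).symm
  have hNc (N : ℕ) : zeroFirst Set.univ (barDiff k (homogeneousComponent N P)) = 0 := by
    have h₁ := barDiff_mem_degreeLowering k N P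
    have h₂ := zeroFirst_mem_degreeLowering Set.univ N (barDiff k P)
    simp only [AlgHom.toLinearMap_apply, add_zero, hc, map_zero] at h₁ h₂
    rw [← h₁, ← h₂]
  have hoff (N : ℕ) (hN : N ≠ k) : ∃ Q : SlotPoly R V (k + 2),
      zeroFirst Set.univ (commDiff (k + 1) Q) = homogeneousComponent N P := by
    obtain ⟨Q, -, hQn, hQ⟩ := barDiagonal_of_finite Set.finite_univ hN
      (homogeneousComponent_isHomogeneous N P) (hNn N) (hNr N) (hNc N)
    exact ⟨Q, (zeroFirst_univ_commDiff _ hQn).trans hQ⟩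
  choose! Q hQ using hoff
  have hk := eq_multilinChain (hNn k) (homogeneousComponent_isHomogeneous k P)
  refine ⟨_, isAlternating_of_zeroFirst_barDiff_eq_zero (hk ▸ hNc k),
    ∑ N ∈ (Finset.range (P.totalDegree + 1)).erase k, Q N, ?_⟩
  rw [← hk, map_sum, map_sum, Finset.sum_congr rfl fun N hN => hQ N (Finset.ne_of_mem_erase hN)]
  by_cases hkP : k ∈ Finset.range (P.totalDegree + 1)
  · rw [Finset.add_sum_erase _ (fun N => homogeneousComponent N P) hkP, sum_homogeneousComponent]
  · rw [Finset.erase_eq_of_notMem hkP, sum_homogeneousComponent, homogeneousComponent_eq_zero,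
      zero_add]
    simpa using hkP

/-- Surjectivity in the Hochschild–Kostant–Rosenberg theorem. -/
theorem exists_formChain_of_commDiff_mem_degenerate {P : SlotPoly R V (k + 1)}
    (hP : commDiff k P ∈ degenerate R V k) :
    ∃ ω : (Fin k → V) → MvPolynomial V R, IsAlternating ω ∧ ∃ Q : SlotPoly R V (k + 2),
      P - formChain R V k ω - commDiff (k + 1) Q ∈ degenerate R V (k + 1) := by
  set P' := normalizedProj (MvPolynomial V R) V (k + 1) (translate P) with hP'
  have hP'n : P' ∈ normalized (MvPolynomial V R) V (k + 1) := normalizedProj_mem _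
  have hsub : translate P - P' ∈ degenerate (MvPolynomial V R) V (k + 1) :=
    sub_normalizedProj_mem_degenerate _
  have hr : zeroFirst Set.univ P' = P' := by
    rw [hP', zeroFirst_univ_normalizedProj, zeroFirst_univ_translate]
  have hc : zeroFirst Set.univ (barDiff k P') = 0 := by
    refine eq_zero_of_mem_normalized_of_mem_degenerate
      (zeroFirst_mem_normalized _ (barDiff_mem_normalized k hP'n)) ?_
    rw [← zeroFirst_univ_commDiff k hP'n]
    cases k with
    | zero => simp [commDiff]
    | succ k =>
      have h := zeroFirst_mem_degenerate Set.univ (commDiff_mem_degenerate _ hsub)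
      rw [map_sub, map_sub, ← translate_commDiff] at h
      exact (Submodule.sub_mem_iff_right _ (translate_mem_degenerate hP)).1 h
  obtain ⟨ω, hω, Q, hQ⟩ := exists_multilinChain_of_normalized hP'n hr hc
  refine ⟨ω, hω, untranslate Q, ?_⟩
  have h := sub_mem (untranslate_mem_degenerate hsub) (formChain_sub_untranslate_mem_degenerate ω)
  rw [map_sub, untranslate_translate, hQ, map_add, untranslate_zeroFirst_univ,
    untranslate_commDiff] at h
  convert h using 1
  abel

/-- Injectivity in the Hochschild–Kostant–Rosenberg theorem. -/
theorem eq_zero_of_formChain_sub_commDiff_mem_degenerate {ω : (Fin k → V) → MvPolynomial V R}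
    {Q : SlotPoly R V (k + 2)}
    (h : formChain R V k ω - commDiff (k + 1) Q ∈ degenerate R V (k + 1)) : ω = 0 := by
  set Q' := normalizedProj (MvPolynomial V R) V (k + 2) (translate Q)
  have hQ'n : Q' ∈ normalized (MvPolynomial V R) V (k + 2) := normalizedProj_mem _
  have hsub : translate Q - Q' ∈ degenerate (MvPolynomial V R) V (k + 2) :=
    sub_normalizedProj_mem_degenerate _
  have heq : multilinChain ω = zeroFirst Set.univ (barDiff (k + 1) Q') := by
    refine sub_eq_zero.1 (eq_zero_of_mem_normalized_of_mem_degenerate (sub_mem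
      (multilinChain_mem_normalized ω)
      (zeroFirst_mem_normalized _ (barDiff_mem_normalized _ hQ'n))) ?_)
    have h₁ := translate_formChain_sub_mem_degenerate ω
    have h₂ := translate_mem_degenerate h
    have h₃ := zeroFirst_mem_degenerate Set.univ (commDiff_mem_degenerate _ hsub)
    rw [map_sub, translate_commDiff] at h₂
    rw [map_sub, map_sub] at h₃
    rw [← zeroFirst_univ_commDiff _ hQ'n]
    convert add_mem (sub_mem h₂ h₁) h₃ using 1
    abel
  have hk : homogeneousComponent k Q' = 0 := eq_zero_of_mem_normalized_of_isHomogeneous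
    (homogeneousComponent_mem_normalized hQ'n k) (homogeneousComponent_isHomogeneous k Q')
    (Nat.lt_succ_self k)
  have hzero : multilinChain ω = 0 := by
    have h₁ := barDiff_mem_degreeLowering (k + 1) k Q'
    have h₂ := zeroFirst_mem_degreeLowering Set.univ k (barDiff (k + 1) Q')
    simp only [AlgHom.toLinearMap_apply, add_zero, hk, map_zero] at h₁ h₂
    rwa [h₁, map_zero, ← heq, homogeneousComponent_of_mem (multilinChain_isHomogeneous ω),
      if_pos rfl] at h₂
  exact funext fun v => by rw [← coeff_multilinChain ω v, hzero, coeff_zero, Pi.zero_apply]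

end HochschildKostantRosenberg

section HomogeneousProduct

variable {R σ : Type*} [CommSemiring R]

theorem homogeneousComponent_mul_of_isHomogeneous {N : ℕ} {Q : MvPolynomial σ R}
    (hQ : Q.IsHomogeneous N) (d : ℕ) (P : MvPolynomial σ R) :
    homogeneousComponent (d + N) (P * Q) = homogeneousComponent d P * Q := by
  have hterm (e : ℕ) : homogeneousComponent (d + N) (homogeneousComponent e P * Q) =
      if e = d then homogeneousComponent d P * Q else 0 := by
    rw [homogeneousComponent_of_mem ((homogeneousComponent_isHomogeneous e P).mul hQ)]
    grind
  conv_lhs => rw [← sum_homogeneousComponent P, Finset.sum_mul, map_sum]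
  simp only [hterm, Finset.sum_ite_eq', Finset.mem_range]
  split_ifs with hd
  · rfl
  · rw [homogeneousComponent_eq_zero _ _ (by lia), zero_mul]

end HomogeneousProduct

section FormDegree

theorem IsAlternating.homogeneousComponent {R V : Type*} [CommRing R] {k : ℕ}
    {ω : (Fin k → V) → MvPolynomial V R} (hω : IsAlternating ω) (d : ℕ) :
    IsAlternating fun v => homogeneousComponent d (ω v) :=
  fun σ v => by simp only [hω σ v, map_zsmul]

variable {R V : Type*} [CommRing R] {k : ℕ}

theorem isHomogeneous_prod_slotWord (v : Fin k → V) :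
    (∏ i, X (slotWord v i) : SlotPoly R V (k + 1)).IsHomogeneous k := by
  simpa using IsHomogeneous.prod Finset.univ (fun i => (X (slotWord v i) : SlotPoly R V (k + 1)))
    (fun _ => 1) fun i _ => isHomogeneous_X R _

variable [Fintype V]

theorem formChain_isHomogeneous {d : ℕ} {ω : (Fin k → V) → MvPolynomial V R}
    (hω : ∀ v, (ω v).IsHomogeneous d) : (formChain R V k ω).IsHomogeneous (d + k) := by
  rw [formChain_apply]
  exact IsHomogeneous.sum _ _ _ fun v _ =>
    (hω v).rename_isHomogeneous.mul (isHomogeneous_prod_slotWord v)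

theorem homogeneousComponent_formChain (d : ℕ) (ω : (Fin k → V) → MvPolynomial V R) :
    homogeneousComponent (d + k) (formChain R V k ω) =
      formChain R V k fun v => homogeneousComponent d (ω v) := by
  simp only [formChain_apply, map_sum]
  refine Finset.sum_congr rfl fun v _ => ?_
  rw [homogeneousComponent_mul_of_isHomogeneous (isHomogeneous_prod_slotWord v),
    rename_homogeneousComponent]

theorem mapSlots_formChain {b : ℕ} (f : Fin (k + 1) → Fin b)
    (ω : (Fin k → V) → MvPolynomial V R) :
    mapSlots f (formChain R V k ω) =
      ∑ v, rename (fun x => (f 0, x)) (ω v) * ∏ i : Fin k, X (f i.succ, v i) := by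
  simp only [formChain_apply, map_sum, map_mul, map_prod, mapSlots_X]
  simp only [mapSlots, rename_rename]
  rfl

theorem mapSlots_formChain_eq_sign_smul {b : ℕ} {f g : Fin (k + 1) → Fin b} (h₀ : g 0 = f 0)
    {σ : Equiv.Perm (Fin k)} (h : ∀ i, g i.succ = f (σ i).succ)
    {ω : (Fin k → V) → MvPolynomial V R} (hω : IsAlternating ω) :
    mapSlots g (formChain R V k ω) =
      (Equiv.Perm.sign σ : ℤ) • mapSlots f (formChain R V k ω) := by
  rw [mapSlots_formChain, mapSlots_formChain, Finset.smul_sum,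
    ← (Equiv.arrowCongr σ.symm (Equiv.refl V)).sum_comp]
  refine Finset.sum_congr rfl fun v _ => ?_
  have hv : Equiv.arrowCongr σ.symm (Equiv.refl V) v = v ∘ σ := rfl
  rw [hv, hω σ v, map_zsmul, smul_mul_assoc, h₀,
    ← Equiv.prod_comp σ fun i => (X (f i.succ, v i) : SlotPoly R V b)]
  simp only [h, Function.comp_apply]

theorem commDiff_formChain [Algebra ℚ R] {ω : (Fin k → V) → MvPolynomial V R}
    (hω : IsAlternating ω) : commDiff k (formChain R V k ω) = 0 := by
  have := IsAddTorsionFree.of_module_rat (SlotPoly R V k)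
  cases k with
  | zero => simp [commDiff]
  | succ k =>
    have hmid (j : Fin k) :
        mapSlots (faceIdx k j.castSucc.succ) (formChain R V (k + 1) ω) = 0 := by
      refine self_eq_neg.1 ((mapSlots_formChain_eq_sign_smul rfl
        (σ := Equiv.swap j.castSucc j.succ) (fun i => ?_) hω).trans ?_)
      · grind [faceIdx_val]
      · simp [Equiv.Perm.sign_swap (show j.castSucc ≠ j.succ by simp [Fin.ext_iff])]
    have hends : mapSlots (faceIdx k (Fin.last (k + 1))) (formChain R V (k + 1) ω) =
        (-1 : ℤ) ^ k • mapSlots (faceIdx k 0) (formChain R V (k + 1) ω) := by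
      rw [mapSlots_formChain_eq_sign_smul (f := faceIdx k 0) (σ := finRotate (k + 1))
        (by simp only [faceIdx_zero_right]) (fun i => ?_) hω, sign_finRotate]
      · simp
      · refine Fin.ext ?_
        simp only [faceIdx_val, coe_finRotate, Fin.val_succ, Fin.ext_iff, Fin.val_last,
          Fin.val_zero]
        grind
    rw [commDiff_succ, Fin.sum_univ_succ, Fin.sum_univ_castSucc]
    simp only [hmid, Fin.succ_last, hends, smul_zero, Finset.sum_const_zero, smul_smul]
    simp [pow_succ, ← mul_pow]

end FormDegree

section FormDerivatives

variable {R V : Type*} [CommRing R] [Fintype V] {k : ℕ}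

theorem formChain_succ_eq_sum_X_mul (s : Fin (k + 1)) (ω : (Fin (k + 1) → V) → MvPolynomial V R) :
    formChain R V (k + 1) ω = ∑ x, X (s.succ, x) *
      mapSlots s.succ.succAbove (formChain R V k fun u => ω (s.insertNth x u)) := by
  simp only [mapSlots_formChain]
  rw [formChain_apply, ← (Fin.insertNthEquiv (fun _ => V) s).sum_comp, Fintype.sum_prod_type]
  refine Finset.sum_congr rfl fun x _ => ?_
  rw [Finset.mul_sum]
  refine Finset.sum_congr rfl fun u _ => ?_
  have hv : Fin.insertNthEquiv (fun _ => V) s (x, u) = s.insertNth x u := rfl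
  rw [hv, Fin.prod_univ_succAbove _ s]
  simp only [slotWord, Fin.insertNth_apply_same, Fin.insertNth_apply_succAbove,
    Fin.succ_succAbove_zero, Fin.succ_succAbove_succ]
  ring

theorem pderiv_zero_formChain (x : V) (ω : (Fin k → V) → MvPolynomial V R) :
    pderiv (0, x) (formChain R V k ω) = formChain R V k fun v => pderiv x (ω v) := by
  have hinj : Function.Injective fun x : V => ((0, x) : Fin (k + 1) × V) :=
    Prod.mk_right_injective 0
  simp only [formChain_apply, map_sum]
  refine Finset.sum_congr rfl fun v _ => ?_
  have hprod : pderiv (0, x) (∏ i, X (slotWord v i) : SlotPoly R V (k + 1)) = 0 := by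
    refine Finset.prod_induction _ (fun P => pderiv (0, x) P = 0) (fun P Q hP hQ => ?_)
      (pderiv _).map_one_eq_zero fun i _ => pderiv_X_of_ne (by simp [Fin.succ_ne_zero])
    rw [pderiv_mul, hP, hQ, zero_mul, mul_zero, add_zero]
  rw [pderiv_mul, hprod, mul_zero, add_zero, pderiv_rename hinj]

theorem pderiv_succ_formChain (s : Fin (k + 1)) (x : V)
    (ω : (Fin (k + 1) → V) → MvPolynomial V R) :
    pderiv (s.succ, x) (formChain R V (k + 1) ω) =
      mapSlots s.succ.succAbove (formChain R V k fun u => ω (s.insertNth x u)) := by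
  classical
  have hempty : (Finset.univ.filter fun t => s.succ.succAbove t = s.succ) = ∅ :=
    Finset.filter_eq_empty_iff.2 fun t _ => Fin.succAbove_ne _ t
  rw [formChain_succ_eq_sum_X_mul s, map_sum]
  simp only [pderiv_mul, pderiv_mapSlots, hempty, Finset.sum_empty, map_zero, mul_zero, add_zero,
    pderiv_X, Pi.single_apply, Prod.mk.injEq, true_and, ite_mul, one_mul, zero_mul]
  simp

end FormDerivatives

section Codifferential

theorem IsAlternating.apply_snoc {V M : Type*} [AddCommGroup M] {k : ℕ} {ω : (Fin (k + 1) → V) → M}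
    (hω : IsAlternating ω) (u : Fin k → V) (w : V) :
    ω (Fin.snoc u w) = (-1 : ℤ) ^ k • ω (Fin.cons w u) := by
  have h := hω (finRotate (k + 1)) (Fin.cons w u)
  rw [sign_finRotate] at h
  rw [Fin.snoc_eq_cons_rotate]
  exact_mod_cast h

variable {R V : Type*} [CommRing R] [Fintype V] (π : V → V → R) {k : ℕ}

/-- The Hamiltonian vector field of `X w`, that is, the derivation `f ↦ [f, X w]` of the Moyal
product. -/
def hamiltonianDeriv (w : V) : Derivation R (MvPolynomial V R) (MvPolynomial V R) :=
  ∑ v, (2 * π v w) • pderiv v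

theorem hamiltonianDeriv_apply (w : V) (f : MvPolynomial V R) :
    hamiltonianDeriv π w f = ∑ v, (2 * π v w) • pderiv v f := by
  have h := congrFun (map_sum Derivation.coeFnAddMonoidHom
    (fun v => (2 * π v w) • (pderiv v : Derivation R (MvPolynomial V R) _)) Finset.univ) f
  rw [Finset.sum_apply] at h
  exact h

/-- The codifferential of Brylinski's complex of the constant Poisson structure `π`: the
differential on forms induced by the Hochschild differential. -/
def codiff (k : ℕ) :
    ((Fin (k + 1) → V) → MvPolynomial V R) →ₗ[R] ((Fin k → V) → MvPolynomial V R) :=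
  LinearMap.pi fun u => ∑ w, (hamiltonianDeriv π w).toLinearMap ∘ₗ LinearMap.proj (Fin.cons w u)

theorem codiff_apply (ω : (Fin (k + 1) → V) → MvPolynomial V R) (u : Fin k → V) :
    codiff π k ω u = ∑ w, hamiltonianDeriv π w (ω (Fin.cons w u)) := by
  simp [codiff]

theorem mapSlots_faceIdx_pderiv_pderiv_formChain {j : Fin (k + 2)} {s : Fin (k + 1)}
    (hj : faceIdx k j ∘ s.succ.succAbove = id) (v w : V)
    (ω : (Fin (k + 1) → V) → MvPolynomial V R) :
    mapSlots (faceIdx k j) (pderiv (0, v) (pderiv (s.succ, w) (formChain R V (k + 1) ω))) =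
      formChain R V k fun u => pderiv v (ω (s.insertNth w u)) := by
  rw [pderiv_pderiv_comm, pderiv_zero_formChain, pderiv_succ_formChain, mapSlots_mapSlots, hj,
    mapSlots_id]

theorem faceIdx_zero_comp_succAbove (k : ℕ) :
    faceIdx k 0 ∘ (0 : Fin (k + 1)).succ.succAbove = id := by
  funext t
  simp only [Function.comp_apply, id, Fin.ext_iff, faceIdx_val, Fin.succAbove, Fin.lt_def]
  grind

theorem faceIdx_last_comp_succAbove (k : ℕ) :
    faceIdx k (Fin.last (k + 1)) ∘ (Fin.last k).succ.succAbove = id := by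
  funext t
  simp only [Function.comp_apply, id, Fin.ext_iff, faceIdx_val, Fin.succ_last,
    Fin.succAbove_last_apply]
  simp
  grind

theorem mapSlots_faceIdx_zero_bidiff_formChain (ω : (Fin (k + 1) → V) → MvPolynomial V R) :
    mapSlots (faceIdx k 0) (bidiff π 0 (0 + 1) (formChain R V (k + 1) ω)) =
      formChain R V k (∑ v, ∑ w, π v w • fun u => pderiv v (ω (Fin.cons w u))) := by
  have hone : (0 + 1 : Fin (k + 2)) = (0 : Fin (k + 1)).succ := rfl
  simp only [bidiff_apply, hone, map_sum, map_smul,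
    mapSlots_faceIdx_pderiv_pderiv_formChain (faceIdx_zero_comp_succAbove k), Fin.insertNth_zero']

theorem mapSlots_faceIdx_last_bidiff_formChain (ω : (Fin (k + 1) → V) → MvPolynomial V R) :
    mapSlots (faceIdx k (Fin.last (k + 1)))
        (bidiff π (Fin.last (k + 1)) (Fin.last (k + 1) + 1) (formChain R V (k + 1) ω)) =
      formChain R V k (∑ v, ∑ w, π v w • fun u => pderiv w (ω (Fin.snoc u v))) := by
  have hlast (v : V) : pderiv (Fin.last (k + 1), v) (formChain R V (k + 1) ω) =
      pderiv ((Fin.last k).succ, v) (formChain R V (k + 1) ω) := rfl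
  simp only [Fin.last_add_one, bidiff_apply, map_sum, map_smul]
  refine Finset.sum_congr rfl fun v _ => Finset.sum_congr rfl fun w _ => ?_
  rw [pderiv_pderiv_comm, hlast,
    mapSlots_faceIdx_pderiv_pderiv_formChain (faceIdx_last_comp_succAbove k)]
  simp only [Fin.insertNth_last']

theorem pderiv_formChain_mem_slotFree {s : Fin (k + 2)} (hs : s ≠ 0) (x : V)
    (ω : (Fin (k + 1) → V) → MvPolynomial V R) :
    pderiv (s, x) (formChain R V (k + 1) ω) ∈ slotFree R V s := by
  obtain ⟨s, rfl⟩ := Fin.exists_succ_eq.2 hs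
  have hpre : s.succ.succAbove ⁻¹' {s.succ} = ∅ :=
    Set.eq_empty_of_forall_notMem fun t => Fin.succAbove_ne _ t
  rw [mem_slotFree, pderiv_succ_formChain, zeroSlots_mapSlots, hpre, zeroSlots_empty]

theorem bidiff_formChain_mem_slotFree_left {i : Fin (k + 2)} (hi : i ≠ 0) (j : Fin (k + 2))
    (ω : (Fin (k + 1) → V) → MvPolynomial V R) :
    bidiff π i j (formChain R V (k + 1) ω) ∈ slotFree R V i := by
  rw [bidiff_apply]
  refine sum_mem fun v _ => sum_mem fun w _ => Submodule.smul_mem _ _ ?_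
  rw [pderiv_pderiv_comm]
  exact pderiv_mem_slotFree (pderiv_formChain_mem_slotFree hi v ω) _

theorem bidiff_formChain_mem_slotFree_right (i : Fin (k + 2)) {j : Fin (k + 2)} (hj : j ≠ 0)
    (ω : (Fin (k + 1) → V) → MvPolynomial V R) :
    bidiff π i j (formChain R V (k + 1) ω) ∈ slotFree R V j := by
  rw [bidiff_apply]
  exact sum_mem fun v _ => sum_mem fun w _ => Submodule.smul_mem _ _
    (pderiv_mem_slotFree (pderiv_formChain_mem_slotFree hj w ω) _)

theorem hochDiffPart_formChain_of_two_le {m : ℕ} (hm : 2 ≤ m) (k : ℕ)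
    (ω : (Fin k → V) → MvPolynomial V R) :
    hochDiffPart π m k (formChain R V k ω) = 0 := by
  cases k with
  | zero => rfl
  | succ k =>
    rw [hochDiffPart_succ]
    refine Finset.sum_eq_zero fun j _ => ?_
    have hsq : bidiff π j (j + 1) (bidiff π j (j + 1) (formChain R V (k + 1) ω)) = 0 := by
      by_cases hj : j = 0
      · exact bidiff_eq_zero_of_mem_slotFree_right π _
          (bidiff_formChain_mem_slotFree_right π _ (by simp [hj]) ω)
      · exact bidiff_eq_zero_of_mem_slotFree_left π _
          (bidiff_formChain_mem_slotFree_left π hj _ ω)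
    obtain ⟨m, rfl⟩ := Nat.exists_eq_add_of_le' hm
    rw [pow_add, pow_two, Module.End.mul_apply, Module.End.mul_apply, hsq, map_zero, map_zero,
      smul_zero]

theorem mapSlots_faceIdx_mid_bidiff_formChain_mem_degenerate (j : Fin k)
    (ω : (Fin (k + 1) → V) → MvPolynomial V R) :
    mapSlots (faceIdx k j.castSucc.succ) (bidiff π j.castSucc.succ (j.castSucc.succ + 1)
      (formChain R V (k + 1) ω)) ∈ degenerate R V (k + 1) := by
  have hj : (j.castSucc.succ + 1 : Fin (k + 2)).val = j.val + 2 := by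
    rw [val_add_one_eq_ite]
    simp
    lia
  have hpre : faceIdx k j.castSucc.succ ⁻¹' {j.succ} =
      {j.castSucc.succ} ∪ {j.castSucc.succ + 1} := by
    ext t
    simp only [Set.mem_preimage, Set.mem_singleton_iff, Set.mem_union, Fin.ext_iff, faceIdx_val, hj,
      Fin.val_succ, Fin.val_castSucc]
    grind
  refine slotFree_le_degenerate (s := j.succ) (by simp) ?_
  rw [mem_slotFree, zeroSlots_mapSlots, hpre, ← zeroSlots_zeroSlots,
    mem_slotFree.1 (bidiff_formChain_mem_slotFree_right π _ (Fin.ne_of_val_ne (by simp [hj])) ω),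
    mem_slotFree.1 (bidiff_formChain_mem_slotFree_left π (Fin.succ_ne_zero _) _ ω)]

theorem hochDiffPart_one_formChain_sub_mem_degenerate (hπ : ∀ v w, π v w = -π w v)
    {ω : (Fin (k + 1) → V) → MvPolynomial V R} (hω : IsAlternating ω) :
    hochDiffPart π 1 (k + 1) (formChain R V (k + 1) ω) - formChain R V k (codiff π k ω) ∈
      degenerate R V (k + 1) := by
  set F := formChain R V (k + 1) ω
  set G : (Fin k → V) → MvPolynomial V R :=
    ∑ v, ∑ w, π v w • fun u => pderiv v (ω (Fin.cons w u))
  have hlast : mapSlots (faceIdx k (Fin.last (k + 1)))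
      (bidiff π (Fin.last (k + 1)) (Fin.last (k + 1) + 1) F) =
        (-1 : ℤ) ^ (k + 1) • formChain R V k G := by
    rw [mapSlots_faceIdx_last_bidiff_formChain, ← map_zsmul]
    congr 1
    simp only [G, Finset.smul_sum]
    rw [Finset.sum_comm]
    refine Finset.sum_congr rfl fun v _ => Finset.sum_congr rfl fun w _ => funext fun u => ?_
    simp only [Pi.smul_apply, hω.apply_snoc, map_zsmul, hπ w v]
    module
  have hcodiff : codiff π k ω = G + G := by
    funext u
    simp only [codiff_apply, hamiltonianDeriv_apply, G, Pi.add_apply, Finset.sum_apply,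
      Pi.smul_apply, ← Finset.sum_add_distrib, ← add_smul, two_mul]
    exact Finset.sum_comm
  rw [hochDiffPart_succ, Fin.sum_univ_succ, Fin.sum_univ_castSucc]
  simp only [pow_one, Fin.succ_last, hlast, hcodiff]
  rw [mapSlots_faceIdx_zero_bidiff_formChain, map_add, Fin.val_last, smul_smul, ← mul_pow]
  convert sum_mem (t := Finset.univ) fun j _ => zsmul_mem (S := Submodule R (SlotPoly R V (k + 1)))
    (mapSlots_faceIdx_mid_bidiff_formChain_mem_degenerate π j ω)
    ((-1 : ℤ) ^ j.castSucc.succ.val) using 1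
  simp only [Fin.val_zero, pow_zero, one_smul, mul_neg, mul_one, neg_neg, one_pow, F, G]
  abel

theorem hochDiff_formChain_sub_mem_degenerate [Algebra ℚ R] (hπ : ∀ v w, π v w = -π w v)
    {ω : (Fin (k + 1) → V) → MvPolynomial V R} (hω : IsAlternating ω) :
    hochDiff π (k + 1) (formChain R V (k + 1) ω) - formChain R V k (codiff π k ω) ∈
      degenerate R V (k + 1) := by
  rw [hochDiff_eq_sum π (M := (formChain R V (k + 1) ω).totalDegree + 2) (by lia),
    Finset.sum_eq_single 1]
  · simpa using hochDiffPart_one_formChain_sub_mem_degenerate π hπ hω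
  · rintro (_ | _ | m) - hm
    · rw [hochDiffPart_zero, commDiff_formChain hω, smul_zero]
    · exact absurd rfl hm
    · rw [hochDiffPart_formChain_of_two_le π (by lia), smul_zero]
  · simp

end Codifferential

section ExteriorProduct

theorem exists_perm_forall_apply_succAbove {k : ℕ} (σ : Equiv.Perm (Fin (k + 1)))
    (j : Fin (k + 1)) :
    ∃ ρ : Equiv.Perm (Fin k), Equiv.Perm.sign ρ = (-1) ^ j.val * Equiv.Perm.sign σ *
      (-1) ^ (σ j).val ∧ ∀ i, σ (j.succAbove i) = (σ j).succAbove (ρ i) := by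
  obtain ⟨⟨p, ρ⟩, hτ⟩ := Equiv.Perm.decomposeFin.symm.surjective
    ((σ j).cycleRange * σ * j.cycleRange⁻¹)
  obtain rfl : p = 0 := by
    rw [← Equiv.Perm.decomposeFin_symm_apply_zero p ρ, hτ]
    simp [Equiv.Perm.mul_apply]
  refine ⟨ρ, ?_, fun i => ?_⟩
  · have hsign := congrArg Equiv.Perm.sign hτ
    rw [Equiv.Perm.decomposeFin.symm_sign] at hsign
    simpa [mul_comm, mul_assoc, mul_left_comm] using hsign
  · have hi := congrArg (fun τ : Equiv.Perm (Fin (k + 1)) => (σ j).cycleRange.symm (τ i.succ)) hτ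
    simpa [Equiv.Perm.mul_apply] using hi.symm

variable {V A : Type*} [CommRing A] {k : ℕ}

/-- The exterior product of the one-form with components `φ` and the `k`-form with components `ω`,
normalised as a sum over the position of the factor `φ`. -/
def wedgeLeft (φ : V → A) (ω : (Fin k → V) → A) (v : Fin (k + 1) → V) : A :=
  ∑ j, (-1 : ℤ) ^ j.val • (φ (v j) * ω (j.removeNth v))

theorem IsAlternating.wedgeLeft {ω : (Fin k → V) → A} (hω : IsAlternating ω) (φ : V → A) :
    IsAlternating (wedgeLeft φ ω) := by
  intro σ v
  unfold WeylHochschild.wedgeLeft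
  rw [← Equiv.sum_comp σ fun j => (-1 : ℤ) ^ j.val • (φ (v j) * ω (j.removeNth v)), Finset.smul_sum]
  refine Finset.sum_congr rfl fun j _ => ?_
  obtain ⟨ρ, hsign, hρ⟩ := exists_perm_forall_apply_succAbove σ j
  have hremove : j.removeNth (v ∘ σ) = (σ j).removeNth v ∘ ρ :=
    funext fun i => congrArg v (hρ i)
  have hscalar : (-1 : ℤ) ^ j.val * (Equiv.Perm.sign ρ : ℤ) =
      Equiv.Perm.sign σ * (-1) ^ (σ j).val := by
    rw [hsign]
    push_cast
    rw [mul_assoc, ← mul_assoc, ← mul_pow]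
    simp
  rw [hremove, hω ρ, mul_smul_comm, smul_smul, smul_smul, hscalar, Function.comp_apply]

theorem wedgeLeft_cons (φ : V → A) (ω : (Fin (k + 1) → V) → A) (w : V) (u : Fin (k + 1) → V) :
    wedgeLeft φ ω (Fin.cons w u) =
      φ w * ω u - wedgeLeft φ (fun u' => ω (Fin.cons w u')) u := by
  unfold wedgeLeft
  rw [Fin.sum_univ_succ, sub_eq_add_neg, ← Finset.sum_neg_distrib]
  simp only [Fin.val_zero, pow_zero, one_smul, Fin.cons_zero, Fin.removeNth_zero, Fin.tail_cons,
    Fin.val_succ, pow_succ, mul_neg_one, neg_smul, Fin.cons_succ]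
  refine congrArg _ (Finset.sum_congr rfl fun j _ => ?_)
  have hremove : j.succ.removeNth (Fin.cons w u : Fin (k + 2) → V) =
      Fin.cons w (j.removeNth u) := by
    funext x
    cases x using Fin.cases <;> simp [Fin.removeNth_apply]
  rw [hremove]

theorem IsAlternating.apply_cons_removeNth {M : Type*} [AddCommGroup M]
    {ω : (Fin (k + 1) → V) → M} (hω : IsAlternating ω) (u : Fin (k + 1) → V) (j : Fin (k + 1)) :
    ω (Fin.cons (u j) (j.removeNth u)) = (-1 : ℤ) ^ j.val • ω u := by
  rw [Fin.cons_removeNth_eq_comp_cycleRange_symm, hω, Equiv.Perm.sign_symm, Fin.sign_cycleRange]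
  simp

theorem IsAlternating.smul {M : Type*} [AddCommGroup M] [Module ℚ M] {ω : (Fin k → V) → M}
    (hω : IsAlternating ω) (c : ℚ) : IsAlternating (c • ω) := fun σ v => by
  rw [Pi.smul_apply, hω σ v, smul_comm, Pi.smul_apply]

theorem IsAlternating.eq_zero_of_card_lt [Fintype V] {M : Type*} [AddCommGroup M] [Module ℚ M]
    {ω : (Fin k → V) → M} (hω : IsAlternating ω) (hk : Fintype.card V < k) : ω = 0 := by
  have := IsAddTorsionFree.of_module_rat M
  refine funext fun v => hω.eq_zero_of_not_injective fun hv => ?_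
  have := Fintype.card_le_of_injective v hv
  rw [Fintype.card_fin] at this
  lia

end ExteriorProduct

section PoincareHomotopy

variable {R V : Type*} [CommRing R] [Algebra ℚ R] [Fintype V] [DecidableEq V]

/-- The linear coordinates dual to the Hamiltonian vector fields of the constant bivector `π`. -/
def dualCoord (π : V → V → R) (a : V) : MvPolynomial V R :=
  (2 : ℚ)⁻¹ • ∑ v, (Matrix.of π)⁻¹ a v • X v

/-- A `k`-form is coclosed when `codiff` annihilates it; for functions (`k = 0`), whose
codifferential vanishes by convention, the condition is empty. -/
def IsCoclosed (π : V → V → R) : (k : ℕ) → ((Fin k → V) → MvPolynomial V R) → Prop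
  | 0, _ => True
  | k + 1, ω => codiff π k ω = 0

variable {π : V → V → R} (hπ : IsUnit (Matrix.of π))
include hπ

theorem hamiltonianDeriv_dualCoord (w a : V) :
    hamiltonianDeriv π w (dualCoord π a) = if a = w then 1 else 0 := by
  have hinv : ∑ v, (Matrix.of π)⁻¹ a v * π v w = if a = w then 1 else 0 := by
    rw [← Matrix.one_apply, ← Matrix.nonsing_inv_mul _ ((Matrix.isUnit_iff_isUnit_det _).1 hπ),
      Matrix.mul_apply]
    rfl
  have hcoord (v : V) : hamiltonianDeriv π w (X v) = (2 * π v w) • 1 := by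
    simp [hamiltonianDeriv_apply, pderiv_X, Pi.single_apply]
  have hterm (v : V) : (Matrix.of π)⁻¹ a v • (2 * π v w) • (1 : MvPolynomial V R) =
      (2 : ℚ) • ((Matrix.of π)⁻¹ a v * π v w) • 1 := by
    rw [smul_smul, mul_left_comm, two_mul, add_smul, two_smul]
  simp only [dualCoord, (hamiltonianDeriv π w).map_smul_of_tower, map_sum, hcoord,
    hterm]
  rw [← Finset.smul_sum, ← Finset.sum_smul, hinv, smul_smul]
  simp

theorem sum_smul_dualCoord (u : V) : ∑ a, (2 * π u a) • dualCoord π a = X u := by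
  have hinv (v : V) : ∑ a, π u a * (Matrix.of π)⁻¹ a v = if u = v then 1 else 0 := by
    rw [← Matrix.one_apply, ← Matrix.mul_nonsing_inv _ ((Matrix.isUnit_iff_isUnit_det _).1 hπ),
      Matrix.mul_apply]
    rfl
  have hterm (a : V) : (2 * π u a) • dualCoord π a =
      ∑ v, (π u a * (Matrix.of π)⁻¹ a v) • X v := by
    rw [dualCoord, two_mul, add_smul, ← two_smul ℚ, smul_comm (π u a), smul_smul,
      mul_inv_cancel₀ two_ne_zero, one_smul, Finset.smul_sum]
    simp only [smul_smul]
  simp only [hterm]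
  rw [Finset.sum_comm]
  simp only [← Finset.sum_smul, hinv, ite_smul, one_smul, zero_smul, Finset.sum_ite_eq,
    Finset.mem_univ, if_true]

theorem sum_dualCoord_mul_hamiltonianDeriv {d : ℕ} {f : MvPolynomial V R} (hf : f.IsHomogeneous d) :
    ∑ a, dualCoord π a * hamiltonianDeriv π a f = d • f := by
  simp only [← hf.sum_X_mul_pderiv, hamiltonianDeriv_apply, Finset.mul_sum, mul_smul_comm]
  rw [Finset.sum_comm]
  simp only [← smul_mul_assoc, ← Finset.sum_mul, sum_smul_dualCoord hπ]

theorem hamiltonianDeriv_dualCoord_mul (w a : V) (f : MvPolynomial V R) :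
    hamiltonianDeriv π w (dualCoord π a * f) =
      (if a = w then f else 0) + dualCoord π a * hamiltonianDeriv π w f := by
  rw [Derivation.leibniz, hamiltonianDeriv_dualCoord hπ, smul_eq_mul, smul_eq_mul, mul_ite, mul_one,
    mul_zero, add_comm]

theorem sum_hamiltonianDeriv_dualCoord_mul {d : ℕ} {f : MvPolynomial V R}
    (hf : f.IsHomogeneous d) :
    ∑ w, hamiltonianDeriv π w (dualCoord π w * f) = (Fintype.card V + d) • f := by
  simp only [hamiltonianDeriv_dualCoord_mul hπ, if_true, Finset.sum_add_distrib,
    sum_dualCoord_mul_hamiltonianDeriv hπ hf, Finset.sum_const, Finset.card_univ, add_smul]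

theorem codiff_wedgeLeft_dualCoord_zero {d : ℕ} {ω : (Fin 0 → V) → MvPolynomial V R}
    (hω : ∀ v, (ω v).IsHomogeneous d) :
    codiff π 0 (wedgeLeft (dualCoord π) ω) = (Fintype.card V + d) • ω := by
  funext u
  have hwedge (w : V) : wedgeLeft (dualCoord π) ω (Fin.cons w u) = dualCoord π w * ω u := by
    simp [wedgeLeft]
  simp only [codiff_apply, hwedge, sum_hamiltonianDeriv_dualCoord_mul hπ (hω u), Pi.smul_apply]

theorem sum_hamiltonianDeriv_wedgeLeft_cons {k : ℕ} {ω : (Fin (k + 1) → V) → MvPolynomial V R}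
    (hω : IsAlternating ω) (u : Fin (k + 1) → V) :
    ∑ w, hamiltonianDeriv π w (wedgeLeft (dualCoord π) (fun u' => ω (Fin.cons w u')) u) =
      (k + 1) • ω u + wedgeLeft (dualCoord π) (codiff π k ω) u := by
  simp only [wedgeLeft, map_sum, map_zsmul, hamiltonianDeriv_dualCoord_mul hπ]
  rw [Finset.sum_comm]
  have hterm (j : Fin (k + 1)) :
      ∑ w, (-1 : ℤ) ^ j.val • ((if u j = w then ω (Fin.cons w (j.removeNth u)) else 0) +
        dualCoord π (u j) * hamiltonianDeriv π w (ω (Fin.cons w (j.removeNth u)))) =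
      ω u + (-1 : ℤ) ^ j.val • (dualCoord π (u j) * codiff π k ω (j.removeNth u)) := by
    rw [← Finset.smul_sum, Finset.sum_add_distrib, Finset.sum_ite_eq, if_pos (Finset.mem_univ _),
      hω.apply_cons_removeNth, smul_add, smul_smul, ← mul_pow, ← Finset.mul_sum, codiff_apply]
    simp
  simp only [hterm, Finset.sum_add_distrib, Finset.sum_const, Finset.card_univ, Fintype.card_fin]

theorem codiff_wedgeLeft_dualCoord {k d : ℕ} {ω : (Fin (k + 1) → V) → MvPolynomial V R}
    (hω : IsAlternating ω) (hd : ∀ v, (ω v).IsHomogeneous d) (hclosed : codiff π k ω = 0) :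
    codiff π (k + 1) (wedgeLeft (dualCoord π) ω) =
      ((Fintype.card V + d : ℤ) - (k + 1 : ℤ)) • ω := by
  funext u
  have hwedge : wedgeLeft (dualCoord π) (0 : (Fin k → V) → MvPolynomial V R) u = 0 := by
    simp [wedgeLeft]
  simp only [codiff_apply, wedgeLeft_cons, map_sub]
  rw [Finset.sum_sub_distrib, sum_hamiltonianDeriv_dualCoord_mul hπ (hd u),
    sum_hamiltonianDeriv_wedgeLeft_cons hπ hω, hclosed, hwedge, add_zero, sub_smul]
  simp only [Pi.sub_apply, Pi.smul_apply]
  norm_cast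

theorem exists_codiff_eq_of_ne {k d : ℕ} (hk : k ≠ Fintype.card V + d)
    {ω : (Fin k → V) → MvPolynomial V R} (hω : IsAlternating ω)
    (hd : ∀ v, (ω v).IsHomogeneous d) (hclosed : IsCoclosed π k ω) :
    ∃ η, IsAlternating η ∧ codiff π k η = ω := by
  set c : ℤ := Fintype.card V + d - k with hc_def
  have hc : (c : ℚ) ≠ 0 := by
    norm_cast
    lia
  have hexact : codiff π k (wedgeLeft (dualCoord π) ω) = c • ω := by
    cases k with
    | zero =>
      rw [codiff_wedgeLeft_dualCoord_zero hπ hd, ← natCast_zsmul, hc_def]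
      simp
    | succ k =>
      rw [codiff_wedgeLeft_dualCoord hπ hω hd hclosed, hc_def]
      simp
  refine ⟨(c : ℚ)⁻¹ • wedgeLeft (dualCoord π) ω, (hω.wedgeLeft _).smul _, ?_⟩
  rw [LinearMap.map_smul_of_tower, hexact, ← Int.cast_smul_eq_zsmul ℚ, smul_smul,
    inv_mul_cancel₀ hc, one_smul]

theorem exists_codiff_eq {k d : ℕ} (hkd : ¬(k = Fintype.card V ∧ d = 0))
    {ω : (Fin k → V) → MvPolynomial V R} (hω : IsAlternating ω)
    (hd : ∀ v, (ω v).IsHomogeneous d) (hclosed : IsCoclosed π k ω) :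
    ∃ η, IsAlternating η ∧ codiff π k η = ω := by
  by_cases hk : k = Fintype.card V + d
  · refine ⟨0, fun σ v => by simp, ?_⟩
    rw [hω.eq_zero_of_card_lt (by lia), map_zero]
  · exact exists_codiff_eq_of_ne hπ hk hω hd hclosed

end PoincareHomotopy

section DegreeFiltration

/-- The polynomials all of whose homogeneous components of degree at least `N` vanish. -/
def degreeLT (R σ : Type*) [CommSemiring R] (N : ℕ) : Submodule R (MvPolynomial σ R) :=
  ⨅ e ∈ Set.Ici N, LinearMap.ker (homogeneousComponent e)

theorem mem_degreeLT {R σ : Type*} [CommSemiring R] {N : ℕ} {P : MvPolynomial σ R} :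
    P ∈ degreeLT R σ N ↔ ∀ e, N ≤ e → homogeneousComponent e P = 0 := by
  simp [degreeLT]

theorem mem_degreeLT_of_totalDegree_lt {R σ : Type*} [CommSemiring R] {N : ℕ}
    {P : MvPolynomial σ R} (hP : P.totalDegree < N) : P ∈ degreeLT R σ N :=
  mem_degreeLT.2 fun e he => homogeneousComponent_eq_zero e P (hP.trans_le he)

theorem mem_degreeLT_of_isHomogeneous {R σ : Type*} [CommSemiring R] {n N : ℕ}
    {P : MvPolynomial σ R} (hP : P.IsHomogeneous n) (h : n < N) : P ∈ degreeLT R σ N :=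
  mem_degreeLT.2 fun e he => isHomogeneous_iff_homogeneousComponent.1 hP e (by lia)

theorem mem_degreeLT_of_mem_degreeLT_succ {R σ : Type*} [CommSemiring R] {N : ℕ}
    {P : MvPolynomial σ R} (hP : P ∈ degreeLT R σ (N + 1)) (h : homogeneousComponent N P = 0) :
    P ∈ degreeLT R σ N := by
  refine mem_degreeLT.2 fun e he => ?_
  rcases he.eq_or_lt with rfl | he
  exacts [h, mem_degreeLT.1 hP e he]

theorem degreeLT_mono {R σ : Type*} [CommSemiring R] {N N' : ℕ} (h : N ≤ N') :
    degreeLT R σ N ≤ degreeLT R σ N' := fun _ hP =>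
  mem_degreeLT.2 fun e he => mem_degreeLT.1 hP e (h.trans he)

variable {R V : Type*} [CommRing R] {k N : ℕ}

theorem normalizedProj_mem_degreeLowering (k : ℕ) :
    normalizedProj R V k ∈ degreeLowering R (Fin k × V) (Fin k × V) 0 :=
  sum_mem fun _ _ => zsmul_mem (zeroSlots_mem_degreeLowering _) _

theorem mem_degenerate_of_mem_degreeLT {P : SlotPoly R V (k + 1)} (hP : P ∈ degreeLT R _ k) :
    P ∈ degenerate R V (k + 1) := by
  rw [← normalizedProj_eq_zero_iff]
  refine ext_homogeneousComponent fun e => ?_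
  rw [map_zero]
  rcases lt_or_ge e k with he | he
  · exact eq_zero_of_mem_normalized_of_isHomogeneous
      (homogeneousComponent_mem_normalized (normalizedProj_mem P) e)
      (homogeneousComponent_isHomogeneous e _) he
  · have h := normalizedProj_mem_degreeLowering (R := R) (V := V) (k + 1) e P
    rw [h, add_zero, mem_degreeLT.1 hP e he, map_zero]

variable [Algebra ℚ R] [Fintype V] (π : V → V → R)

theorem homogeneousComponent_hochDiff_eq_sum (e : ℕ) (P : SlotPoly R V (k + 1)) :
    homogeneousComponent e (hochDiff π k P) = ∑ m ∈ Finset.range (P.totalDegree + 1),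
      (m.factorial : ℚ)⁻¹ • hochDiffPart π m k (homogeneousComponent (e + 2 * m) P) := by
  rw [hochDiff_eq_sum π (Nat.lt_succ_self P.totalDegree), map_sum]
  refine Finset.sum_congr rfl fun m _ => ?_
  rw [LinearMap.map_smul_of_tower, hochDiffPart_mem_degreeLowering π m k]

theorem hochDiff_mem_degreeLT {P : SlotPoly R V (k + 1)} (hP : P ∈ degreeLT R _ N) :
    hochDiff π k P ∈ degreeLT R _ N := by
  refine mem_degreeLT.2 fun e he => ?_
  rw [homogeneousComponent_hochDiff_eq_sum]
  refine Finset.sum_eq_zero fun m _ => ?_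
  rw [mem_degreeLT.1 hP _ (by lia), map_zero, smul_zero]

/-- The bivector lowers the degree by two, so that the leading part of the Hochschild
differential is the commutative one. -/
theorem homogeneousComponent_hochDiff {e : ℕ} {P : SlotPoly R V (k + 1)}
    (hP : P ∈ degreeLT R _ (e + 2)) :
    homogeneousComponent e (hochDiff π k P) = commDiff k (homogeneousComponent e P) := by
  rw [homogeneousComponent_hochDiff_eq_sum, Finset.sum_eq_single 0]
  · simp [hochDiffPart_zero]
  · intro m _ hm
    rw [mem_degreeLT.1 hP _ (by lia), map_zero, smul_zero]
  · simp

end DegreeFiltration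

section Reduction

theorem exists_homogeneous_formChain_of_commDiff_mem_degenerate {R V : Type*} [CommRing R]
    [Fintype V] {k a : ℕ} {P : SlotPoly R V (k + 1)}
    (hP : P.IsHomogeneous (a + k)) (hcycle : commDiff k P ∈ degenerate R V k) :
    ∃ ω : (Fin k → V) → MvPolynomial V R, IsAlternating ω ∧ (∀ v, (ω v).IsHomogeneous a) ∧
      ∃ Q : SlotPoly R V (k + 2), Q.IsHomogeneous (a + k) ∧
        P - formChain R V k ω - commDiff (k + 1) Q ∈ degenerate R V (k + 1) := by
  obtain ⟨ω, hω, Q, hQ⟩ := exists_formChain_of_commDiff_mem_degenerate hcycle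
  refine ⟨_, hω.homogeneousComponent a, fun v => homogeneousComponent_isHomogeneous a (ω v),
    homogeneousComponent (a + k) Q, homogeneousComponent_isHomogeneous _ _, ?_⟩
  have h := homogeneousComponent_mem_degenerate hQ (a + k)
  have hcomm := commDiff_mem_degreeLowering (R := R) (V := V) (k + 1) (a + k) Q
  rw [add_zero] at hcomm
  rwa [map_sub, map_sub, homogeneousComponent_formChain, hcomm,
    homogeneousComponent_eq_self hP] at h

theorem hamiltonianDeriv_mem_degreeLowering {R V : Type*} [CommRing R] [Fintype V]
    (π : V → V → R) (w : V) :
    (hamiltonianDeriv π w).toLinearMap ∈ degreeLowering R V V 1 := by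
  have h : (hamiltonianDeriv π w).toLinearMap = ∑ v, (2 * π v w) • (pderiv v).toLinearMap :=
    LinearMap.ext fun f => by simp [hamiltonianDeriv_apply]
  rw [h]
  exact Submodule.sum_mem _ fun v _ => Submodule.smul_mem _ _ (pderiv_mem_degreeLowering v)

theorem homogeneousComponent_codiff {R V : Type*} [CommRing R] [Fintype V] (π : V → V → R)
    {k : ℕ} (e : ℕ) (ω : (Fin (k + 1) → V) → MvPolynomial V R) (u : Fin k → V) :
    homogeneousComponent e (codiff π k ω u) =
      codiff π k (fun v => homogeneousComponent (e + 1) (ω v)) u := by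
  rw [codiff_apply, codiff_apply, map_sum]
  exact Finset.sum_congr rfl fun w _ => hamiltonianDeriv_mem_degreeLowering π w e _

theorem isCoclosed_of_isHomogeneous_zero {R V : Type*} [CommRing R] [Fintype V]
    (π : V → V → R) {k : ℕ} {ω : (Fin k → V) → MvPolynomial V R}
    (hω : ∀ v, (ω v).IsHomogeneous 0) : IsCoclosed π k ω := by
  cases k with
  | zero => trivial
  | succ k =>
    refine funext fun u => ext_homogeneousComponent fun e => ?_
    have hpos (v : Fin (k + 1) → V) : homogeneousComponent (e + 1) (ω v) = 0 :=
      isHomogeneous_iff_homogeneousComponent.1 (hω v) _ e.succ_ne_zero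
    simp only [homogeneousComponent_codiff, hpos, Pi.zero_apply, map_zero]
    exact congrFun (map_zero (codiff π k)) u

variable {R V : Type*} [CommRing R] [Algebra ℚ R] [Fintype V] (π : V → V → R) {k : ℕ}

theorem exists_sub_mem_degenerate_of_commDiff_mem_degenerate {a : ℕ} {P : SlotPoly R V (k + 1)}
    (hP : P ∈ degreeLT R _ (a + k + 1))
    (hcycle : commDiff k (homogeneousComponent (a + k) P) ∈ degenerate R V k) :
    ∃ ω : (Fin k → V) → MvPolynomial V R, IsAlternating ω ∧ (∀ v, (ω v).IsHomogeneous a) ∧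
      ∃ Q, ∃ P' ∈ degreeLT R _ (a + k),
        P - (formChain R V k ω + hochDiff π (k + 1) Q + P') ∈ degenerate R V (k + 1) := by
  obtain ⟨ω, hω, hωa, Q, hQ, hdeg⟩ := exists_homogeneous_formChain_of_commDiff_mem_degenerate
    (homogeneousComponent_isHomogeneous (a + k) P) hcycle
  set D := homogeneousComponent (a + k) P - formChain R V k ω - commDiff (k + 1) Q
  refine ⟨ω, hω, hωa, Q, P - formChain R V k ω - hochDiff π (k + 1) Q - D, ?_, ?_⟩
  · have hωk := formChain_isHomogeneous hωa
    have hD : D.IsHomogeneous (a + k) := ((homogeneousComponent_isHomogeneous _ P).sub hωk).sub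
      (isHomogeneous_of_degreeLowering (commDiff_mem_degreeLowering (k + 1)) hQ)
    have hQlead := homogeneousComponent_hochDiff π
      (mem_degreeLT_of_isHomogeneous hQ (by lia : a + k < a + k + 2))
    refine mem_degreeLT_of_mem_degreeLT_succ (sub_mem (sub_mem (sub_mem hP ?_) ?_) ?_) ?_
    · exact mem_degreeLT_of_isHomogeneous hωk (by lia)
    · exact hochDiff_mem_degreeLT π (mem_degreeLT_of_isHomogeneous hQ (by lia))
    · exact mem_degreeLT_of_isHomogeneous hD (by lia)
    · rw [map_sub, map_sub, map_sub, hQlead, homogeneousComponent_eq_self hωk,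
        homogeneousComponent_eq_self hD, homogeneousComponent_eq_self hQ]
      exact sub_self D
  · convert hdeg using 1
    abel

theorem hochDiff_formChain_mem_degenerate (hπ : ∀ v w, π v w = -π w v)
    {ω : (Fin k → V) → MvPolynomial V R} (hω : IsAlternating ω) (hclosed : IsCoclosed π k ω) :
    hochDiff π k (formChain R V k ω) ∈ degenerate R V k := by
  cases k with
  | zero => exact zero_mem _
  | succ k =>
    have h := hochDiff_formChain_sub_mem_degenerate π hπ hω
    rwa [show codiff π k ω = 0 from hclosed, map_zero, sub_zero] at h

theorem isCoclosed_of_hochDiff_add_mem_degenerate (hπ : ∀ v w, π v w = -π w v) {a : ℕ}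
    {ω : (Fin k → V) → MvPolynomial V R} (hω : IsAlternating ω)
    (hωa : ∀ v, (ω v).IsHomogeneous a) {P : SlotPoly R V (k + 1)} (hP : P ∈ degreeLT R _ (a + k))
    (hcycle : hochDiff π k (formChain R V k ω + P) ∈ degenerate R V k) : IsCoclosed π k ω := by
  cases k with
  | zero => trivial
  | succ k =>
    cases a with
    | zero => exact isCoclosed_of_isHomogeneous_zero π hωa
    | succ a =>
      have hcodiff : homogeneousComponent (a + k) (formChain R V k (codiff π k ω)) =
          formChain R V k (codiff π k ω) := by
        simp only [homogeneousComponent_formChain, homogeneousComponent_codiff,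
          homogeneousComponent_eq_self (hωa _)]
      have hlead := homogeneousComponent_hochDiff π (e := a + k) (degreeLT_mono (by lia) hP)
      refine eq_zero_of_formChain_sub_commDiff_mem_degenerate
        (Q := -homogeneousComponent (a + k) P) ?_
      have h := homogeneousComponent_mem_degenerate (sub_mem hcycle
        (hochDiff_formChain_sub_mem_degenerate π hπ hω)) (a + k)
      rw [map_add, add_sub_sub_cancel, map_add, hcodiff, hlead, add_comm (commDiff _ _)] at h
      rwa [map_neg, sub_neg_eq_add]

end Reduction

section Homology

variable {R V : Type*} [CommRing R] [Algebra ℚ R] [Fintype V] {π : V → V → R} {k : ℕ}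

theorem exists_sub_mem_degenerate_of_cycle_of_mem_degreeLT [DecidableEq V]
    (hanti : ∀ v w, π v w = -π w v) (hπ : IsUnit (Matrix.of π)) {a : ℕ} {P : SlotPoly R V (k + 1)}
    (hP : P ∈ degreeLT R _ (a + k)) (hcycle : hochDiff π k P ∈ degenerate R V k) :
    ∃ ω : (Fin k → V) → MvPolynomial V R, IsAlternating ω ∧ (∀ v, (ω v).IsHomogeneous 0) ∧
      (k ≠ Fintype.card V → ω = 0) ∧
      ∃ Q, P - (formChain R V k ω + hochDiff π (k + 1) Q) ∈ degenerate R V (k + 1) := by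
  induction a generalizing P with
  | zero =>
    exact ⟨0, fun σ v => by simp, fun _ => isHomogeneous_zero _ _ _, fun _ => rfl, 0,
      by simpa using mem_degenerate_of_mem_degreeLT (by simpa using hP)⟩
  | succ a ih =>
    have hlead := homogeneousComponent_mem_degenerate hcycle (a + k)
    rw [homogeneousComponent_hochDiff π (degreeLT_mono (by lia) hP)] at hlead
    obtain ⟨ω, hω, hωa, Q, P', hP', hdeg⟩ :=
      exists_sub_mem_degenerate_of_commDiff_mem_degenerate π (degreeLT_mono (by lia) hP) hlead
    have hcycle' : hochDiff π k (formChain R V k ω + P') ∈ degenerate R V k := by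
      have h := sub_mem hcycle (hochDiff_mem_degenerate π k hdeg)
      rwa [← map_sub, sub_sub_cancel, add_right_comm, map_add, hochDiff_hochDiff π,
        add_zero] at h
    have hclosed := isCoclosed_of_hochDiff_add_mem_degenerate π hanti hω hωa hP' hcycle'
    by_cases hka : k = Fintype.card V ∧ a = 0
    · obtain ⟨hk, rfl⟩ := hka
      refine ⟨ω, hω, hωa, fun h => absurd hk h, Q, ?_⟩
      have hP'' := mem_degenerate_of_mem_degreeLT (by simpa using hP')
      convert add_mem hdeg hP'' using 1
      abel
    · obtain ⟨η, hη, rfl⟩ := exists_codiff_eq hπ hka hω hωa hclosed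
      have hexact := hochDiff_formChain_sub_mem_degenerate π hanti hη
      obtain ⟨ω', hω', hω'₀, hne, Q', hdeg'⟩ := ih hP' (by
        have h := sub_mem hcycle' (hochDiff_mem_degenerate π k
          (neg_mem (S := Submodule R (SlotPoly R V (k + 1))) hexact))
        rwa [← map_sub, neg_sub, add_sub_right_comm, sub_sub_cancel, map_add, hochDiff_hochDiff π,
          zero_add] at h)
      refine ⟨ω', hω', hω'₀, hne, formChain R V (k + 1) η + Q + Q', ?_⟩
      convert sub_mem (add_mem hdeg hdeg') hexact using 1
      simp only [map_add]
      abel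

theorem eq_zero_of_formChain_sub_hochDiff_mem_degenerate_of_mem_degreeLT
    (hk : Fintype.card V ≤ k) {ω : (Fin k → V) → MvPolynomial V R}
    (hω : ∀ v, (ω v).IsHomogeneous 0) {b : ℕ} {Q : SlotPoly R V (k + 2)}
    (hQ : Q ∈ degreeLT R _ (b + k + 2))
    (h : formChain R V k ω - hochDiff π (k + 1) Q ∈ degenerate R V (k + 1)) : ω = 0 := by
  induction b generalizing Q with
  | zero =>
    have hlead := homogeneousComponent_mem_degenerate h (0 + k)
    rw [map_sub, homogeneousComponent_formChain, homogeneousComponent_hochDiff π hQ] at hlead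
    simp only [homogeneousComponent_eq_self (hω _)] at hlead
    exact eq_zero_of_formChain_sub_commDiff_mem_degenerate hlead
  | succ b ih =>
    have hlead := homogeneousComponent_mem_degenerate h (b + 2 + k)
    have hconst (v : Fin k → V) : homogeneousComponent (b + 2) (ω v) = 0 :=
      isHomogeneous_iff_homogeneousComponent.1 (hω v) _ (by lia)
    rw [map_sub, homogeneousComponent_formChain,
      homogeneousComponent_hochDiff π (degreeLT_mono (by lia) hQ)] at hlead
    have hzero : formChain R V k (fun _ => 0) = 0 := map_zero _
    rw [funext hconst, hzero, zero_sub, show b + 2 + k = b + 1 + (k + 1) by lia] at hlead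
    obtain ⟨η, hη, -, Q', P', hP', hdeg⟩ :=
      exists_sub_mem_degenerate_of_commDiff_mem_degenerate π (a := b + 1) (k := k + 1)
        (degreeLT_mono (by lia) hQ)
        ((neg_mem_iff (S := Submodule R (SlotPoly R V (k + 1)))).1 hlead)
    rw [hη.eq_zero_of_card_lt (by lia), map_zero, zero_add] at hdeg
    refine ih (degreeLT_mono (by lia) hP') ?_
    have hdiff := hochDiff_mem_degenerate π (k + 1) hdeg
    rw [map_sub, map_add, hochDiff_hochDiff π, zero_add] at hdiff
    convert add_mem h hdiff using 1
    abel

theorem exists_sub_mem_degenerate_of_cycle [DecidableEq V] (hanti : ∀ v w, π v w = -π w v)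
    (hπ : IsUnit (Matrix.of π)) {P : SlotPoly R V (k + 1)}
    (hcycle : hochDiff π k P ∈ degenerate R V k) :
    ∃ ω : (Fin k → V) → MvPolynomial V R, IsAlternating ω ∧ (∀ v, (ω v).IsHomogeneous 0) ∧
      (k ≠ Fintype.card V → ω = 0) ∧
      ∃ Q, P - (formChain R V k ω + hochDiff π (k + 1) Q) ∈ degenerate R V (k + 1) :=
  exists_sub_mem_degenerate_of_cycle_of_mem_degreeLT hanti hπ (a := P.totalDegree + 1)
    (mem_degreeLT_of_totalDegree_lt (by lia)) hcycle

theorem eq_zero_of_formChain_sub_hochDiff_mem_degenerate (hk : Fintype.card V ≤ k)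
    {ω : (Fin k → V) → MvPolynomial V R} (hω : ∀ v, (ω v).IsHomogeneous 0)
    {Q : SlotPoly R V (k + 2)}
    (h : formChain R V k ω - hochDiff π (k + 1) Q ∈ degenerate R V (k + 1)) : ω = 0 :=
  eq_zero_of_formChain_sub_hochDiff_mem_degenerate_of_mem_degreeLT hk hω (b := Q.totalDegree)
    (mem_degreeLT_of_totalDegree_lt (by lia)) h

end Homology

section Volume

variable {R : Type*} [CommRing R] {N : ℕ}

/-- The chain `∑ σ, sign σ • 1 ⊗ X (σ 1) ⊗ ⋯ ⊗ X (σ N)` of the constant volume form. -/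
def volumeChain (R : Type*) [CommRing R] (N : ℕ) : SlotPoly R (Fin N) (N + 1) :=
  ∑ σ : Equiv.Perm (Fin N), (Equiv.Perm.sign σ : ℤ) • ∏ i, X (i.succ, σ i)

/-- The volume form `dX 1 ∧ ⋯ ∧ dX N`: a word of length `N` is sent to the determinant of the
columns of the identity matrix which it selects. -/
def volumeForm (R : Type*) [CommRing R] (N : ℕ) (v : Fin N → Fin N) : MvPolynomial (Fin N) R :=
  C ((1 : Matrix (Fin N) (Fin N) R).submatrix v id).det

theorem isAlternating_volumeForm : IsAlternating (volumeForm R N) := fun σ v => by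
  rw [volumeForm, volumeForm, ← map_zsmul, zsmul_eq_mul, ← Matrix.det_permute]
  rfl

theorem volumeForm_isHomogeneous (v : Fin N → Fin N) : (volumeForm R N v).IsHomogeneous 0 :=
  isHomogeneous_C _ _

theorem volumeForm_id : volumeForm R N id = 1 := by
  simp [volumeForm]

theorem formChain_eq_smul_volumeChain [Algebra ℚ R]
    {ω : (Fin N → Fin N) → MvPolynomial (Fin N) R} (hω : IsAlternating ω)
    (hω₀ : ∀ v, (ω v).IsHomogeneous 0) :
    formChain R (Fin N) N ω = coeff 0 (ω id) • volumeChain R N := by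
  have hperm (σ : Equiv.Perm (Fin N)) : ω σ = C ((Equiv.Perm.sign σ : ℤ) • coeff 0 (ω id)) := by
    have h := hω σ id
    rw [Function.id_comp] at h
    rw [map_zsmul, h, ← totalDegree_eq_zero_iff_eq_C.1
      ((totalDegree_zero_iff_isHomogeneous _).2 (hω₀ id))]
  have : IsAddTorsionFree (MvPolynomial (Fin N) R) := .of_module_rat _
  rw [formChain_apply, volumeChain, Finset.smul_sum]
  refine (Finset.sum_of_injOn (fun σ : Equiv.Perm (Fin N) => ⇑σ)
    (fun _ _ _ _ h => DFunLike.coe_injective h) (by simp) (fun v _ hv => ?_) fun σ _ => ?_).symm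
  · rw [hω.eq_zero_of_not_injective fun hinj => hv ?_, map_zero, zero_mul]
    exact ⟨Equiv.ofBijective v (Finite.injective_iff_bijective.1 hinj), by simp, rfl⟩
  · rw [hperm, rename_C, ← smul_eq_C_mul, smul_comm, smul_assoc]

theorem formChain_volumeForm [Algebra ℚ R] :
    formChain R (Fin N) N (volumeForm R N) = volumeChain R N := by
  rw [formChain_eq_smul_volumeChain isAlternating_volumeForm volumeForm_isHomogeneous,
    volumeForm_id, coeff_zero_one, one_smul]

theorem formChain_mem_normalized {V : Type*} [Fintype V] {k : ℕ}
    (ω : (Fin k → V) → MvPolynomial V R) : formChain R V k ω ∈ normalized R V (k + 1) := by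
  refine mem_normalized.2 fun s hs => ?_
  obtain ⟨i, rfl⟩ := Fin.exists_succ_eq.2 fun h : s = 0 => hs (congrArg Fin.val h)
  rw [formChain_apply, map_sum]
  refine Finset.sum_eq_zero fun v _ => ?_
  have hX : zeroSlots {i.succ} (X (slotWord v i) : SlotPoly R V (k + 1)) = 0 :=
    zeroVars_X_of_mem rfl
  rw [map_mul, map_prod, Finset.prod_eq_zero (Finset.mem_univ i) hX, mul_zero]

end Volume

section NormalizedHomology

variable {R V : Type*} [CommRing R] [Algebra ℚ R] [Fintype V] {π : V → V → R} {k : ℕ}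

theorem normalizedProj_hochDiff_normalizedProj (π : V → V → R) (k : ℕ)
    (Q : SlotPoly R V (k + 1)) :
    normalizedProj R V k (hochDiff π k (normalizedProj R V (k + 1) Q)) =
      normalizedProj R V k (hochDiff π k Q) := by
  have h := hochDiff_mem_degenerate π k (sub_normalizedProj_mem_degenerate Q)
  rw [map_sub, ← normalizedProj_eq_zero_iff, map_sub] at h
  exact (sub_eq_zero.1 h).symm

theorem exists_eq_formChain_add_of_cycle (hanti : ∀ v w, π v w = -π w v)
    [DecidableEq V] (hπ : IsUnit (Matrix.of π)) {P : SlotPoly R V (k + 1)}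
    (hP : P ∈ normalized R V (k + 1)) (hcycle : normalizedProj R V k (hochDiff π k P) = 0) :
    ∃ ω : (Fin k → V) → MvPolynomial V R, IsAlternating ω ∧ (∀ v, (ω v).IsHomogeneous 0) ∧
      (k ≠ Fintype.card V → ω = 0) ∧ ∃ Q ∈ normalized R V (k + 2),
        P = formChain R V k ω + normalizedProj R V (k + 1) (hochDiff π (k + 1) Q) := by
  obtain ⟨ω, hω, hω₀, hne, Q, hQ⟩ :=
    exists_sub_mem_degenerate_of_cycle hanti hπ (normalizedProj_eq_zero_iff.1 hcycle)
  refine ⟨ω, hω, hω₀, hne, normalizedProj R V (k + 2) Q, normalizedProj_mem Q, ?_⟩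
  have h := normalizedProj_eq_zero hQ
  rwa [map_sub, map_add, normalizedProj_eq_self hP,
    normalizedProj_eq_self (formChain_mem_normalized ω), sub_eq_zero,
    ← normalizedProj_hochDiff_normalizedProj] at h

theorem normalizedProj_hochDiff_volumeChain {N : ℕ} {π : Fin N → Fin N → R}
    (hanti : ∀ v w, π v w = -π w v) :
    normalizedProj R (Fin N) N (hochDiff π N (volumeChain R N)) = 0 := by
  rw [← formChain_volumeForm, normalizedProj_eq_zero_iff]
  exact hochDiff_formChain_mem_degenerate π hanti isAlternating_volumeForm
    (isCoclosed_of_isHomogeneous_zero π volumeForm_isHomogeneous)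

theorem eq_zero_of_smul_volumeChain_eq {N : ℕ} {π : Fin N → Fin N → R} {c : R}
    {Q : SlotPoly R (Fin N) (N + 2)} (h : c • volumeChain R N =
      normalizedProj R (Fin N) (N + 1) (hochDiff π (N + 1) Q)) : c = 0 := by
  have hdeg : formChain R (Fin N) N (c • volumeForm R N) - hochDiff π (N + 1) Q ∈
      degenerate R (Fin N) (N + 1) := by
    rw [map_smul, formChain_volumeForm, h, ← neg_sub]
    exact neg_mem (sub_normalizedProj_mem_degenerate _)
  have hzero := eq_zero_of_formChain_sub_hochDiff_mem_degenerate (by simp)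
    (fun v => (homogeneousSubmodule (Fin N) R 0).smul_mem c (volumeForm_isHomogeneous v)) hdeg
  simpa [volumeForm_id] using congrArg (coeff 0) (congrFun hzero id)

end NormalizedHomology

section Weyl

variable {n : ℕ}

/-- The variables of the Weyl algebra, listed as the momenta followed by the positions. -/
def weylIndexEquiv (n : ℕ) : Fin n ⊕ Fin n ≃ Fin (2 * n) :=
  .ofBijective (Sum.elim (pVar n) (qVar n)) <|
    (Fintype.bijective_iff_injective_and_card _).2
      ⟨.sumElim (fun r s h => by simpa [pVar, Fin.ext_iff] using h)
        (fun r s h => by simpa [qVar, Fin.ext_iff] using h)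
        (fun r s h => by simp [pVar, qVar, Fin.ext_iff] at h; lia), by simp [two_mul]⟩

/-- The bivector `(ε / 2) ∑ r, ∂_{p r} ∧ ∂_{q r}` of the Moyal product, so that `bidiff` is `ε α`.
The sign is due to Mathlib's `Matrix.J`, whose upper right block is `-1`. -/
def weylBivector (n : ℕ) (v w : Fin (2 * n)) : Kc :=
  -(algebraMap ℂ Kc (1 / 2) * eps) *
    Matrix.J (Fin n) Kc ((weylIndexEquiv n).symm v) ((weylIndexEquiv n).symm w)

theorem weylBivector_antisymm (v w : Fin (2 * n)) : weylBivector n v w = -weylBivector n w v := by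
  have h := congrFun (congrFun (Matrix.J_transpose (Fin n) Kc) ((weylIndexEquiv n).symm w))
    ((weylIndexEquiv n).symm v)
  rw [weylBivector, ← Matrix.transpose_apply (Matrix.J _ _), h, Matrix.neg_apply, mul_neg]
  rfl

theorem isUnit_eps : IsUnit eps := LaurentPolynomial.isUnit_T 1

theorem isUnit_weylBivector : IsUnit (Matrix.of (weylBivector n)) := by
  have hc : IsUnit (-(algebraMap ℂ Kc (1 / 2) * eps)) :=
    (((IsUnit.mk0 (1 / 2 : ℂ) (by norm_num)).map (algebraMap ℂ Kc)).mul isUnit_eps).neg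
  have hJ : IsUnit (Matrix.J (Fin n) Kc) :=
    (Matrix.isUnit_iff_isUnit_det _).2 (Matrix.isUnit_det_J (Fin n) Kc)
  exact (Matrix.isUnit_submatrix_equiv (weylIndexEquiv n).symm (weylIndexEquiv n).symm).2
    (hJ.smul hc.unit)

theorem bidiff_weylBivector {k : ℕ} (i j : Fin k) :
    bidiff (weylBivector n) i j = eps • alphaOp n k i j := by
  have hp (r : Fin n) : weylIndexEquiv n (Sum.inl r) = pVar n r := rfl
  have hq (r : Fin n) : weylIndexEquiv n (Sum.inr r) = qVar n r := rfl
  rw [bidiff, alphaOp, smul_smul, mul_comm eps, ← (weylIndexEquiv n).sum_comp]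
  simp only [← (weylIndexEquiv n).sum_comp, weylBivector, Equiv.symm_apply_apply]
  generalize algebraMap ℂ Kc (1 / 2) * eps = c
  simp only [Fintype.sum_sum_type, Matrix.J, Matrix.fromBlocks_apply₁₁, Matrix.fromBlocks_apply₁₂,
    Matrix.fromBlocks_apply₂₁, Matrix.fromBlocks_apply₂₂, hp, hq, Matrix.zero_apply,
    Matrix.neg_apply, Matrix.one_apply, mul_zero, zero_smul, Finset.sum_const_zero, zero_add,
    add_zero, neg_mul_neg, mul_ite, mul_one, ite_smul, Finset.sum_ite_eq,
    Finset.mem_univ, if_true, Finset.smul_sum, Dop]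
  rw [add_comm, ← Finset.sum_add_distrib]
  refine Finset.sum_congr rfl fun r _ => ?_
  module

theorem expEps_alphaOp {k : ℕ} (i j : Fin k) (P : Tens n k) :
    expEps (alphaOp n k i j) P = moyalExp (weylBivector n) (edge i j) P := by
  rw [moyalExp_edge_apply _ _ _ (Nat.lt_succ_self _), expEps]
  refine Finset.sum_congr rfl fun m _ => ?_
  have hfact : (m.factorial : ℚ)⁻¹ • (1 : Kc) = algebraMap ℂ Kc (m.factorial : ℂ)⁻¹ := by
    rw [← map_natCast (algebraMap ℚ ℂ), ← map_inv₀, ← IsScalarTower.algebraMap_apply,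
      Algebra.algebraMap_eq_smul_one]
  rw [bidiff_weylBivector, smul_pow, LinearMap.smul_apply, mul_smul, ← hfact, smul_assoc, one_smul]

theorem aeval_X_eq_mapSlots {R V : Type*} [CommRing R] {a b : ℕ} (f : Fin a → Fin b) :
    (aeval fun v : Fin a × V => (X (f v.1, v.2) : SlotPoly R V b)) = mapSlots f :=
  algHom_ext fun v => by rw [aeval_X, mapSlots_X]

open Classical in
theorem setZeroS_eq_zeroSlots {k : ℕ} (S : Finset (Fin k)) : setZeroS n k S = zeroSlots ↑S := by
  refine algHom_ext fun v => ?_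
  rw [setZeroS, aeval_X, zeroVars_X]
  exact if_congr Iff.rfl rfl rfl

theorem dH_eq_hochDiff (k : ℕ) (P : Tens n (k + 2)) :
    dH n k P = hochDiff (weylBivector n) (k + 1) P := by
  rw [hochDiff_succ, Fin.sum_univ_castSucc, dH]
  simp only [mulAt, mulCyc, expEps_alphaOp, aeval_X_eq_mapSlots, faceIdx_castSucc, faceIdx_last,
    Fin.val_castSucc, Fin.coeSucc_eq_succ, Fin.val_last, Fin.last_add_one]

theorem projI_eq_normalizedProj (k : ℕ) (P : Tens n (k + 1)) :
    projI n k P = normalizedProj Kc (Fin (2 * n)) (k + 1) P := by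
  simp only [normalizedProj_apply, projI, setZeroS_eq_zeroSlots]
  refine Finset.sum_congr (Finset.ext fun S => ?_) fun S _ => rfl
  rw [Finset.mem_filter_univ, Finset.mem_powerset, Finset.subset_iff]
  refine ⟨fun h s hs => (Finset.mem_filter_univ s).2 fun hs₀ => ?_,
    fun h h₀ => (Finset.mem_filter_univ _).1 (h h₀) rfl⟩
  exact h (Fin.ext (a := s) (b := 0) hs₀ ▸ hs)

theorem isNormT_iff_mem_normalized {k : ℕ} {P : Tens n (k + 1)} :
    IsNormT n k P ↔ P ∈ normalized Kc (Fin (2 * n)) (k + 1) := by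
  rw [mem_normalized]
  refine forall_congr' fun s => imp_congr Fin.val_ne_zero_iff.symm ?_
  rw [setZeroS_eq_zeroSlots, Finset.coe_singleton]

theorem isCycleT_iff {k : ℕ} {P : Tens n (k + 1)} :
    IsCycleT n k P ↔ normalizedProj Kc (Fin (2 * n)) k (hochDiff (weylBivector n) k P) = 0 := by
  cases k with
  | zero => exact iff_of_true trivial (map_zero _)
  | succ k => rw [IsCycleT, projI_eq_normalizedProj, dH_eq_hochDiff]

theorem c2n_eq_volumeChain (n : ℕ) : c2n n = volumeChain Kc (2 * n) := by
  simp [c2n, volumeChain, elemT, embA, Fin.prod_univ_succ]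

end Weyl

end WeylHochschild

open WeylHochschild

theorem hochschild_homology_weyl_general {R : Type*} [CommRing R] [Algebra ℚ R] {N : ℕ}
    {π : Fin N → Fin N → R} (hanti : ∀ v w, π v w = -π w v) (hπ : IsUnit (Matrix.of π)) :
    volumeChain R N ∈ normalized R (Fin N) (N + 1) ∧
    normalizedProj R (Fin N) N (hochDiff π N (volumeChain R N)) = 0 ∧
    (∀ k ≠ N, ∀ P ∈ normalized R (Fin N) (k + 1),
      normalizedProj R (Fin N) k (hochDiff π k P) = 0 →
      ∃ Q ∈ normalized R (Fin N) (k + 2),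
        normalizedProj R (Fin N) (k + 1) (hochDiff π (k + 1) Q) = P) ∧
    (∀ P ∈ normalized R (Fin N) (N + 1), normalizedProj R (Fin N) N (hochDiff π N P) = 0 →
      ∃! c : R, ∃ Q ∈ normalized R (Fin N) (N + 2),
        P = c • volumeChain R N + normalizedProj R (Fin N) (N + 1) (hochDiff π (N + 1) Q)) := by
  refine ⟨?_, normalizedProj_hochDiff_volumeChain hanti, fun k hk P hP hcycle => ?_,
    fun P hP hcycle => ?_⟩
  · rw [← formChain_volumeForm]
    exact formChain_mem_normalized _
  · obtain ⟨ω, -, -, hne, Q, hQ, rfl⟩ := exists_eq_formChain_add_of_cycle hanti hπ hP hcycle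
    exact ⟨Q, hQ, by rw [hne (by simpa using hk), map_zero, zero_add]⟩
  · obtain ⟨ω, hω, hω₀, -, Q, hQ, hPQ⟩ := exists_eq_formChain_add_of_cycle hanti hπ hP hcycle
    rw [formChain_eq_smul_volumeChain hω hω₀] at hPQ
    refine ⟨_, ⟨Q, hQ, hPQ⟩, fun c ⟨Q', _, hPQ'⟩ => sub_eq_zero.1 ?_⟩
    refine eq_zero_of_smul_volumeChain_eq (π := π) (Q := Q - Q') ?_
    rw [sub_smul, map_sub, map_sub, sub_eq_sub_iff_add_eq_add, ← hPQ', hPQ]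
    exact add_comm _ _

/-- the Hochschild homology of the polynomial Weyl algebra (computed by the
normalized Hochschild chain complex) vanishes in every degree `k ≠ 2n`, and in degree `2n`
it is a free `K`-module of rank one generated by the class of `c_{2n}`. -/
theorem hochschild_homology_weyl (n : ℕ) :
    IsNormT n (2*n) (c2n n) ∧
    IsCycleT n (2*n) (c2n n) ∧
    (∀ k : ℕ, k ≠ 2*n → ∀ P : Tens n (k+1), IsNormT n k P → IsCycleT n k P →
      ∃ Q : Tens n (k+2), IsNormT n (k+1) Q ∧ projI n k (dH n k Q) = P) ∧
    (∀ P : Tens n (2*n+1), IsNormT n (2*n) P → IsCycleT n (2*n) P →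
      ∃! c : Kc, ∃ Q : Tens n (2*n+2), IsNormT n (2*n+1) Q ∧
        P = c • c2n n + projI n (2*n) (dH n (2*n) Q)) := by
  simpa only [c2n_eq_volumeChain, isNormT_iff_mem_normalized, isCycleT_iff,
    projI_eq_normalizedProj, dH_eq_hochDiff] using
    hochschild_homology_weyl_general weylBivector_antisymm (isUnit_weylBivector (n := n))

end
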